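/- arXiv:1506.04033 — 2 statements merged into one kernel-verified Lean document; each statement's English description precedes it below -/
import Mathlib

section
/- Let d ≥ 2, ℓ ≥ 0 and p ≥ 1 be integers. Then there is no r > 0 with J_{ℓ+d/2-1}(r) = 0 and J_{ℓ+p+d/2-1}(r) = 0, i.e. the Bessel functions J_{ℓ+d/2-1} and J_{ℓ+p+d/2-1} have no common positive zeros. -/
/-- The Bessel function of the first kind `J_ν`, defined for real order `ν`
by its power series (interpreted with real powers `(x/2)^(2k+ν)`). -/
noncomputable def besselJ (ν x : ℝ) : ℝ :=
  ∑' k : ℕ, (-1 : ℝ) ^ k / (k.factorial * Real.Gamma ((k : ℝ) + ν + 1)) *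
    (x / 2) ^ (2 * (k : ℝ) + ν)

/-- `Ξ_ℓ^{(d)}(r) = r^{(2-d)/2} J_{ℓ + d/2 - 1}(r)`. -/
noncomputable def Xi (d ℓ : ℕ) (r : ℝ) : ℝ :=
  r ^ (((2 : ℝ) - d) / 2) * besselJ ((ℓ : ℝ) + (d : ℝ) / 2 - 1) r

open Polynomial

section DifferentialForms

/-- Derivations of a commutative ring over `ℤ`, with the canonical `ℤ`-algebra structure. -/
abbrev IntDerivation (A : Type*) [CommRing A] := Derivation ℤ A A

/-- An additive map satisfying the Leibniz rule is a derivation over `ℤ`. -/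
def IntDerivation.ofLeibniz {A : Type*} [CommRing A] (D : A →+ A)
    (h : ∀ x y, D (x * y) = x * D y + y * D x) : IntDerivation A :=
  Derivation.mk' D.toIntLinearMap h

/-- The derivative of the linear form `∑ i, P i * φ i` along a linear system
`D (φ j) = ∑ i, a j i * φ i`, expressed on coefficient vectors. -/
noncomputable def formDeriv {A ι : Type*} [CommRing A] [Fintype ι] (D : IntDerivation A)
    (a : Matrix ι ι A) (P : ι → A) : ι → A :=
  fun i => D (P i) + ∑ j, P j * a j i

variable {A B ι : Type*} [CommRing A] [CommRing B] [Fintype ι]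
  {D : IntDerivation A} {E : IntDerivation B} {a : Matrix ι ι A}

theorem sum_formDeriv_mul (ψ : A →+* B) (hψ : ∀ x, E (ψ x) = ψ (D x)) (φ : ι → B)
    (hφ : ∀ j, E (φ j) = ∑ i, ψ (a j i) * φ i) (P : ι → A) :
    ∑ i, ψ (formDeriv D a P i) * φ i = E (∑ i, ψ (P i) * φ i) := by
  simp only [formDeriv, map_add, map_sum, map_mul, Derivation.leibniz, smul_eq_mul, hψ, hφ,
    add_mul, Finset.sum_add_distrib, Finset.sum_mul, Finset.mul_sum]
  rw [Finset.sum_comm, add_comm]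
  congr 1
  · exact Finset.sum_congr rfl fun _ _ => Finset.sum_congr rfl fun _ _ => by ring
  · exact Finset.sum_congr rfl fun _ _ => by ring

theorem sum_iterate_formDeriv_mul (ψ : A →+* B) (hψ : ∀ x, E (ψ x) = ψ (D x)) (φ : ι → B)
    (hφ : ∀ j, E (φ j) = ∑ i, ψ (a j i) * φ i) (P : ι → A) (k : ℕ) :
    ∑ i, ψ ((formDeriv D a)^[k] P i) * φ i = E^[k] (∑ i, ψ (P i) * φ i) := by
  induction k with
  | zero => rfl
  | succ k ih =>
    rw [Function.iterate_succ_apply', Function.iterate_succ_apply', ← ih,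
      sum_formDeriv_mul ψ hψ φ hφ]

theorem map_iterate_formDeriv (ψ : A →+* B) (hψ : ∀ x, E (ψ x) = ψ (D x)) (P : ι → A) (k : ℕ) :
    (fun i => ψ ((formDeriv D a)^[k] P i)) = (formDeriv E (a.map ψ))^[k] (fun i => ψ (P i)) := by
  induction k with
  | zero => rfl
  | succ k ih =>
    rw [Function.iterate_succ_apply', Function.iterate_succ_apply', ← ih]
    funext i
    simp [formDeriv, hψ]

theorem formDeriv_add (P Q : ι → A) :
    formDeriv D a (P + Q) = formDeriv D a P + formDeriv D a Q := by
  funext i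
  simp only [formDeriv, Pi.add_apply, map_add, add_mul, Finset.sum_add_distrib]
  ring

theorem formDeriv_smul (c : A) (P : ι → A) :
    formDeriv D a (c • P) = c • formDeriv D a P + D c • P := by
  funext i
  simp only [formDeriv, Pi.add_apply, Pi.smul_apply, smul_eq_mul, Derivation.leibniz, mul_add,
    Finset.mul_sum, mul_assoc]
  ring

theorem formDeriv_zero : formDeriv D a 0 = 0 := by
  funext i
  simp [formDeriv]

/-- The system satisfied by the monomials `f ^ (d - j) * g ^ j` when `D f = g`, `D g = -t * f`. -/
noncomputable def symSystem (d : ℕ) (t : A) : Matrix (Fin (d + 1)) (Fin (d + 1)) A :=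
  Matrix.of fun j i => if (i : ℕ) = j + 1 then ((d - j : ℕ) : A)
    else if (i : ℕ) + 1 = j then -t * (j : ℕ) else 0

theorem symSystem_map (d : ℕ) (t : A) (ψ : A →+* B) :
    (symSystem d t).map ψ = symSystem d (ψ t) := by
  ext j i
  simp only [symSystem, Matrix.map_apply, Matrix.of_apply]
  split_ifs <;> simp

theorem derivation_monomial_eq {d : ℕ} {t f g : A} (hf : D f = g) (hg : D g = -t * f)
    (j : Fin (d + 1)) :
    D (f ^ (d - j : ℕ) * g ^ (j : ℕ)) =
      ∑ i : Fin (d + 1), symSystem d t j i * (f ^ (d - i : ℕ) * g ^ (i : ℕ)) := by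
  obtain ⟨j, hj⟩ := j
  have key : ∀ i : Fin (d + 1), symSystem d t ⟨j, hj⟩ i * (f ^ (d - i : ℕ) * g ^ (i : ℕ)) =
      (if (i : ℕ) = j + 1 then ((d - j : ℕ) : A) * (f ^ (d - i : ℕ) * g ^ (i : ℕ)) else 0) +
      (if (i : ℕ) + 1 = j then -t * (j : ℕ) * (f ^ (d - i : ℕ) * g ^ (i : ℕ)) else 0) := by
    intro i
    simp only [symSystem, Matrix.of_apply]
    split_ifs with h1 h2 <;> first | omega | simp
  simp only [key, Finset.sum_add_distrib, Derivation.leibniz, Derivation.leibniz_pow, hf, hg,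
    smul_eq_mul, nsmul_eq_mul]
  rw [add_comm]
  congr 1
  · rcases eq_or_ne j d with h | h
    · subst h
      rw [Finset.sum_eq_zero]
      · simp
      · intro i _
        rw [if_neg (by omega)]
    · rw [Finset.sum_eq_single ⟨j + 1, by omega⟩]
      · simp only [if_true, ← Nat.sub_sub]
        ring
      · intro i _ hi
        rw [if_neg fun h' => hi (Fin.ext h')]
      · simp
  · rcases Nat.eq_zero_or_pos j with h | h
    · subst h
      simp
    · obtain ⟨j, rfl⟩ := Nat.exists_eq_add_of_lt h
      simp only [zero_add] at hj ⊢
      rw [Finset.sum_eq_single ⟨j, by omega⟩]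
      · have : d - j = d - (j + 1) + 1 := by omega
        simp only [if_true, this, Nat.add_sub_cancel]
        ring
      · intro i _ hi
        rw [if_neg fun h' => hi (Fin.ext (by simpa using h'))]
      · simp

end DifferentialForms

section LogExtension

variable {F : Type*} [Field F] (D : IntDerivation F)

/-- The extension of a derivation `D` of `F` to `F[X]` with `X ↦ 1`, so that `X` plays the role
of a logarithm. -/
noncomputable def logDerivation : Derivation ℤ F[X] F[X] :=
  letI : Differential F := ⟨D⟩
  Differential.implicitDeriv 1

theorem logDerivation_C (x : F) : logDerivation D (C x) = C (D x) :=
  letI : Differential F := ⟨D⟩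
  Differential.implicitDeriv_C 1 x

theorem logDerivation_X : logDerivation D X = 1 :=
  letI : Differential F := ⟨D⟩
  Differential.implicitDeriv_X 1

theorem coeff_logDerivation (p : F[X]) (n : ℕ) :
    (logDerivation D p).coeff n = D (p.coeff n) + p.coeff (n + 1) * (n + 1) := by
  let : Differential F := ⟨D⟩
  simp [logDerivation, Differential.implicitDeriv, coeff_derivative]

theorem one_mem_of_logDerivation_stable [CharZero F] (hD : ∀ u, D u ≠ 1) (W : Submodule F F[X])
    (hW : W ≠ ⊥) (hst : ∀ w ∈ W, logDerivation D w ∈ W) : (1 : F[X]) ∈ W := by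
  classical
  obtain ⟨w₀, hw₀, hw₀'⟩ := W.ne_bot_iff.mp hW
  have hex : ∃ n : ℕ, ∃ w ∈ W, w.Monic ∧ w.natDegree = n :=
    ⟨_, C w₀.leadingCoeff⁻¹ * w₀, by
      rw [← smul_eq_C_mul]
      exact W.smul_mem _ hw₀, by
      rw [mul_comm]
      exact monic_mul_leadingCoeff_inv hw₀', rfl⟩
  obtain ⟨w, hw, hmon, hdeg⟩ := Nat.find_spec hex
  have hmin : ∀ v ∈ W, v ≠ 0 → w.natDegree ≤ v.natDegree := by
    intro v hv hv0
    rw [hdeg]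
    refine Nat.find_min' hex ⟨C v.leadingCoeff⁻¹ * v, ?_, ?_, ?_⟩
    · rw [← smul_eq_C_mul]
      exact W.smul_mem _ hv
    · rw [mul_comm]
      exact monic_mul_leadingCoeff_inv hv0
    · rw [natDegree_C_mul (inv_ne_zero (leadingCoeff_ne_zero.mpr hv0))]
  have hzero : logDerivation D w = 0 := by
    by_contra h
    have h1 := hmin _ (hst w hw) h
    have h2 : (logDerivation D w).coeff (logDerivation D w).natDegree ≠ 0 := by
      simpa using h
    apply h2
    rw [coeff_logDerivation, coeff_eq_zero_of_natDegree_lt (Nat.lt_succ_of_le h1), zero_mul,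
      add_zero]
    rcases h1.eq_or_lt with h3 | h3
    · rw [← h3, hmon.coeff_natDegree, Derivation.map_one_eq_zero]
    · rw [coeff_eq_zero_of_natDegree_lt h3, map_zero]
  rcases Nat.eq_zero_or_pos w.natDegree with h | h
  · rwa [hmon.natDegree_eq_zero.mp h] at hw
  · exfalso
    obtain ⟨i, hi⟩ := Nat.exists_eq_add_of_lt h
    rw [zero_add] at hi
    have h1 := coeff_logDerivation D w i
    rw [hzero, coeff_zero, ← hi, hmon.coeff_natDegree, one_mul] at h1
    have h3 : (i + 1 : F) ≠ 0 := by exact_mod_cast Nat.succ_ne_zero i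
    apply hD (-(w.coeff i) * ((i + 1 : ℕ) : F)⁻¹)
    have h2 : D (((i + 1 : ℕ) : F)⁻¹) = 0 := by
      rw [Derivation.leibniz_inv, D.map_natCast, smul_zero]
    rw [Derivation.leibniz, h2, smul_zero, zero_add, map_neg, smul_eq_mul]
    push_cast
    rw [inv_mul_eq_iff_eq_mul₀ h3]
    linear_combination h1

end LogExtension

section SymmetricPower

variable {F : Type*} [Field F] {D : IntDerivation F}

theorem eq_zero_of_sum_monomial_eq_zero {d : ℕ} {f g A B : F} (hf : f ≠ 0)
    (hc : f * B - g * A ≠ 0) (p : Fin (d + 1) → F)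
    (hp : ∑ i, C (p i) * ((C f * X + C A) ^ (d - i : ℕ) * (C g * X + C B) ^ (i : ℕ)) = 0) :
    p = 0 := by
  classical
  by_contra hne
  obtain ⟨i₁, hi₁⟩ := Function.ne_iff.mp hne
  let S := Finset.univ.filter fun i => p i ≠ 0
  have hS : S.Nonempty := ⟨i₁, by simpa [S] using hi₁⟩
  obtain ⟨m, hmS, hmax⟩ := S.exists_max_image (fun i => (i : ℕ)) hS
  have hm : p m ≠ 0 := by simpa [S] using hmS
  set U : F[X] := C f * X + C A
  set V : F[X] := C g * X + C B
  have hU : U ≠ 0 := by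
    intro h
    apply hf
    simpa [U] using congrArg (fun q => q.coeff 1) h
  have hfac : U ^ (d - m : ℕ) *
      (∑ i, C (p i) * (U ^ ((m : ℕ) - i : ℕ) * V ^ (i : ℕ))) = 0 := by
    rw [← hp, Finset.mul_sum]
    refine Finset.sum_congr rfl fun i _ => ?_
    by_cases hi : p i = 0
    · simp [hi]
    · have h1 : (i : ℕ) ≤ m := hmax i (by simpa [S] using hi)
      have h2 : d - (i : ℕ) = (d - m) + (m - i) := by omega
      rw [h2, pow_add]
      ring
  have h0 := (mul_eq_zero.mp hfac).resolve_left (pow_ne_zero _ hU)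
  have h1 := congrArg (eval (-A / f)) h0
  have hUe : eval (-A / f) U = 0 := by
    simp only [U, eval_add, eval_mul, eval_C, eval_X]
    field_simp
    ring
  have hVe : eval (-A / f) V ≠ 0 := by
    simp only [V, eval_add, eval_mul, eval_C, eval_X]
    intro h
    apply hc
    field_simp at h
    linear_combination h
  rw [eval_finsetSum, Finset.sum_eq_single m] at h1
  · simp only [eval_mul, eval_C, eval_pow, Nat.sub_self, pow_zero, one_mul, eval_zero] at h1
    exact mul_ne_zero hm (pow_ne_zero _ hVe) h1
  · intro i _ hi
    by_cases hpi : p i = 0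
    · simp [hpi]
    · have h2 : (i : ℕ) ≤ m := hmax i (by simpa [S] using hpi)
      have h3 : (m : ℕ) - i ≠ 0 := fun h => hi (Fin.ext (by omega))
      simp [hUe, h3]
  · simp

/-- Every nonzero submodule stable under the symmetric power of the system contains the
`d`-th power of the linear form vanishing on the distinguished solution `(f, g)`. -/
theorem mem_of_formDeriv_stable [CharZero F] (hD : ∀ u, D u ≠ 1) {d : ℕ} {t f g h : F}
    (hf0 : f ≠ 0) (hf : D f = g) (hg : D g = -t * f)
    (hh : D (D h + f) = -t * h - g) (hc : f * (D h + f) - g * h ≠ 0)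
    (W : Submodule F (Fin (d + 1) → F)) (hW : W ≠ ⊥)
    (hst : ∀ w ∈ W, formDeriv D (symSystem d t) w ∈ W) :
    (fun i : Fin (d + 1) => (d.choose i : F) * ((-g) ^ (d - i : ℕ) * f ^ (i : ℕ))) ∈ W := by
  set U : F[X] := C f * X + C h with hU
  set V : F[X] := C g * X + C (D h + f) with hV
  set c := f * (D h + f) - g * h with hcdef
  have hDU : logDerivation D U = V := by
    simp only [hU, hV, map_add, Derivation.leibniz, logDerivation_C, logDerivation_X, hf,
      smul_eq_mul]
    ring
  have hDV : logDerivation D V = -C t * U := by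
    rw [hV, map_add, Derivation.leibniz, logDerivation_C, logDerivation_C, logDerivation_X, hg, hh]
    simp only [hU, smul_eq_mul, map_sub, map_mul, map_neg]
    ring
  let ev : (Fin (d + 1) → F) →ₗ[F] F[X] :=
    { toFun := fun p => ∑ i, C (p i) * (U ^ (d - i : ℕ) * V ^ (i : ℕ))
      map_add' := fun p q => by simp [add_mul, Finset.sum_add_distrib]
      map_smul' := fun r p => by
        simp [smul_eq_C_mul, Finset.mul_sum, mul_assoc] }
  have hev : ∀ p, ev (formDeriv D (symSystem d t) p) = logDerivation D (ev p) := by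
    intro p
    refine sum_formDeriv_mul (C : F →+* F[X]) (logDerivation_C D) _ (fun j => ?_) p
    rw [derivation_monomial_eq (t := C t) hDU hDV, ← symSystem_map]
    rfl
  have hinj : ∀ p, ev p = 0 → p = 0 := fun p hp => eq_zero_of_sum_monomial_eq_zero hf0 hc p hp
  have h1 : (1 : F[X]) ∈ W.map ev := by
    apply one_mem_of_logDerivation_stable D hD
    · obtain ⟨w, hw, hw0⟩ := W.ne_bot_iff.mp hW
      exact (Submodule.ne_bot_iff _).mpr ⟨ev w, Submodule.mem_map_of_mem hw,
        fun h0 => hw0 (hinj w h0)⟩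
    · rintro _ ⟨w, hw, rfl⟩
      rw [← hev]
      exact Submodule.mem_map_of_mem (hst w hw)
  obtain ⟨w, hw, hw1⟩ := h1
  have h2 : ev (fun i : Fin (d + 1) => (d.choose i : F) * ((-g) ^ (d - i : ℕ) * f ^ (i : ℕ))) =
      C (c ^ d) := by
    have h3 : C f * V + -C g * U = C c := by
      simp only [hU, hV, hcdef, map_sub, map_mul, map_add]
      ring
    rw [map_pow, ← h3, add_pow, ← Fin.sum_univ_eq_sum_range
      (fun m => (C f * V) ^ m * (-C g * U) ^ (d - m) * (d.choose m : F[X]))]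
    change ∑ i : Fin (d + 1), _ = _
    refine Finset.sum_congr rfl fun i _ => ?_
    simp only [map_mul, map_pow, map_neg, map_natCast, mul_pow]
    ring
  have h3 : (fun i : Fin (d + 1) => (d.choose i : F) * ((-g) ^ (d - i : ℕ) * f ^ (i : ℕ))) =
      c ^ d • w := by
    rw [← sub_eq_zero]
    apply hinj
    rw [map_sub, map_smul, hw1, h2, smul_eq_C_mul, mul_one, sub_self]
  rw [h3]
  exact W.smul_mem _ hw

end SymmetricPower

section Cyclic

theorem formDeriv_mem_span {F ι : Type*} [CommRing F] [Fintype ι] {D : IntDerivation F}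
    {a : Matrix ι ι F} {S : Set (ι → F)} {T : Submodule F (ι → F)}
    (hST : S ⊆ T) (hS : ∀ w ∈ S, formDeriv D a w ∈ T) :
    ∀ w ∈ Submodule.span F S, formDeriv D a w ∈ T := by
  intro w hw
  have hle : Submodule.span F S ≤ T := Submodule.span_le.mpr hST
  induction hw using Submodule.span_induction with
  | mem x hx => exact hS x hx
  | zero => simp [formDeriv_zero]
  | add x y hx hy ihx ihy =>
    rw [formDeriv_add]
    exact T.add_mem ihx ihy
  | smul c x hx ih =>
    rw [formDeriv_smul]
    exact T.add_mem (T.smul_mem _ ih) (T.smul_mem _ (hle hx))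

variable {F ι : Type*} [Field F] [Fintype ι] {D : IntDerivation F} {a : Matrix ι ι F}

theorem iterate_formDeriv_mem_span (P : ι → F) (k : ℕ) :
    (formDeriv D a)^[k] P ∈
      Submodule.span F ((fun j => (formDeriv D a)^[j] P) '' Set.Iio (Fintype.card ι)) := by
  classical
  let W : ℕ → Submodule F (ι → F) := fun n =>
    Submodule.span F ((fun j => (formDeriv D a)^[j] P) '' Set.Iio n)
  have hmono : ∀ {m n}, m ≤ n → W m ≤ W n := fun h =>
    Submodule.span_mono (Set.image_mono (Set.Iio_subset_Iio h))
  change _ ∈ W (Fintype.card ι)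
  by_cases hex : ∃ s < Fintype.card ι, (formDeriv D a)^[s] P ∈ W s
  · obtain ⟨s, hs, hsW⟩ := hex
    refine hmono hs.le ?_
    have hst : ∀ w ∈ W s, formDeriv D a w ∈ W s := by
      apply formDeriv_mem_span Submodule.subset_span
      rintro _ ⟨j, hj, rfl⟩
      change formDeriv D a ((formDeriv D a)^[j] P) ∈ _
      rw [← Function.iterate_succ_apply' (formDeriv D a) j P]
      rcases (Nat.succ_le_of_lt hj).eq_or_lt with h | h
      · rw [h]
        exact hsW
      · exact Submodule.subset_span ⟨_, h, rfl⟩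
    rcases lt_or_ge k s with hk | hk
    · exact Submodule.subset_span ⟨k, hk, rfl⟩
    · induction k, hk using Nat.le_induction with
      | base => exact hsW
      | succ n _ ih =>
        rw [Function.iterate_succ_apply']
        exact hst _ ih
  · push Not at hex
    have hrank : ∀ n ≤ Fintype.card ι, n ≤ Module.finrank F (W n) := by
      intro n
      induction n with
      | zero => simp
      | succ n ih =>
        intro hn
        have hlt : W n < W (n + 1) := by
          refine lt_of_le_of_ne (hmono n.le_succ) fun h => hex n hn ?_
          rw [h]
          exact Submodule.subset_span ⟨n, Nat.lt_succ_self n, rfl⟩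
        exact Nat.succ_le_of_lt
          ((ih (Nat.le_of_succ_le hn)).trans_lt (Submodule.finrank_lt_finrank_of_lt hlt))
    have htop : W (Fintype.card ι) = ⊤ := by
      apply Submodule.eq_top_of_finrank_eq
      rw [Module.finrank_fintype_fun_eq_card]
      refine le_antisymm ?_ (hrank _ le_rfl)
      simpa using Submodule.finrank_le (W (Fintype.card ι))
    rw [htop]
    trivial

end Cyclic

section Euler

/-- The Euler derivation `X d/dX` on integer polynomials. -/
noncomputable def polyEuler : IntDerivation ℤ[X] :=
  IntDerivation.ofLeibniz ((AddMonoidHom.mulLeft X).comp derivative.toAddMonoidHom) fun p q => by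
    simp [derivative_mul]
    ring

theorem polyEuler_apply (p : ℤ[X]) : polyEuler p = X * derivative p := rfl

theorem coeff_polyEuler (p : ℤ[X]) (n : ℕ) : (polyEuler p).coeff n = n * p.coeff n := by
  rw [polyEuler_apply]
  cases n with
  | zero => simp
  | succ n =>
    rw [coeff_X_mul, coeff_derivative]
    push_cast
    ring

/-- The Euler derivation `X d/dX` on power series. -/
noncomputable def seriesEuler : IntDerivation (PowerSeries ℚ) :=
  IntDerivation.ofLeibniz ((AddMonoidHom.mulLeft PowerSeries.X).comp
    (PowerSeries.derivative ℚ).toLinearMap.toAddMonoidHom) fun p q => by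
    simp [Derivation.leibniz]
    ring

theorem coeff_seriesEuler (p : PowerSeries ℚ) (n : ℕ) :
    PowerSeries.coeff n (seriesEuler p) = n * PowerSeries.coeff n p := by
  change PowerSeries.coeff n (PowerSeries.X * PowerSeries.derivative ℚ p) = _
  cases n with
  | zero => simp
  | succ n =>
    rw [PowerSeries.coeff_succ_X_mul, PowerSeries.coeff_derivative]
    push_cast
    ring

/-- The Euler derivation `X d/dX` on Laurent series. -/
noncomputable def laurentEuler : IntDerivation (LaurentSeries ℚ) :=
  IntDerivation.ofLeibniz
    { toFun := fun x =>
        { coeff := fun n => (n : ℚ) * x.coeff n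
          isPWO_support' := x.isPWO_support.mono fun n hn h => hn (by simp [h]) }
      map_zero' := by
        ext n
        simp
      map_add' := fun x y => by
        ext n
        simp [mul_add] } fun x y => by
    ext n
    simp only [HahnSeries.coeff_add, AddMonoidHom.coe_mk, ZeroHom.coe_mk]
    rw [HahnSeries.coeff_mul, mul_comm y,
      HahnSeries.coeff_mul_right' y.isPWO_support (fun n hn h => hn (by simp [h])),
      HahnSeries.coeff_mul_left' x.isPWO_support (fun n hn h => hn (by simp [h])),
      ← Finset.sum_add_distrib, Finset.mul_sum]
    refine Finset.sum_congr rfl fun ij hij => ?_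
    rw [← (Finset.mem_antidiagonal.mp hij).2.2]
    push_cast
    ring

theorem coeff_laurentEuler (x : LaurentSeries ℚ) (n : ℤ) :
    (laurentEuler x).coeff n = n * x.coeff n := rfl

theorem laurentEuler_ne_one (x : LaurentSeries ℚ) : laurentEuler x ≠ 1 := by
  intro h
  simpa [coeff_laurentEuler] using congrArg (fun y => y.coeff 0) h

/-- Integer polynomials as rational power series. -/
noncomputable def polyToSeries : ℤ[X] →+* PowerSeries ℚ :=
  (coeToPowerSeries.ringHom).comp (mapRingHom (Int.castRingHom ℚ))

theorem coeff_polyToSeries (p : ℤ[X]) (n : ℕ) :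
    PowerSeries.coeff n (polyToSeries p) = p.coeff n := by
  simp [polyToSeries]

theorem polyToSeries_injective : Function.Injective polyToSeries := by
  intro p q h
  ext n
  have := congrArg (PowerSeries.coeff n) h
  rw [coeff_polyToSeries, coeff_polyToSeries] at this
  exact_mod_cast this

theorem polyToSeries_X : polyToSeries X = PowerSeries.X := by simp [polyToSeries]

theorem seriesEuler_polyToSeries (p : ℤ[X]) :
    seriesEuler (polyToSeries p) = polyToSeries (polyEuler p) := by
  ext n
  rw [coeff_seriesEuler, coeff_polyToSeries, coeff_polyToSeries, coeff_polyEuler]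
  push_cast
  ring

theorem laurentEuler_ofPowerSeries (p : PowerSeries ℚ) :
    laurentEuler (HahnSeries.ofPowerSeries ℤ ℚ p) =
      HahnSeries.ofPowerSeries ℤ ℚ (seriesEuler p) := by
  ext n
  rw [coeff_laurentEuler]
  rcases lt_or_ge n 0 with h | h
  · have : ∀ q : PowerSeries ℚ, (HahnSeries.ofPowerSeries ℤ ℚ q).coeff n = 0 := by
      intro q
      rw [HahnSeries.ofPowerSeries_apply]
      apply HahnSeries.embDomain_of_notMem_range
      rintro ⟨m, hm⟩
      have : (m : ℤ) = n := hm
      omega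
    rw [this, this, mul_zero]
  · obtain ⟨m, rfl⟩ := Int.eq_ofNat_of_zero_le h
    have : ∀ q : PowerSeries ℚ,
        (HahnSeries.ofPowerSeries ℤ ℚ q).coeff (m : ℤ) = PowerSeries.coeff m q :=
      fun q => HahnSeries.ofPowerSeries_apply_coeff q m
    rw [this, this, coeff_seriesEuler]
    push_cast
    rfl

end Euler

section Transcendence

theorem riccati_no_rational_solution {A B : ℤ[X]} (hB : B ≠ 0)
    (h : polyEuler A * B - A * polyEuler B = A ^ 2 + 4 * X ^ 2 * B ^ 2) : False := by
  set M := max A.natDegree (B.natDegree + 1) with hM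
  have hA : A.natDegree ≤ M := le_max_left _ _
  have hB' : (X * B).natDegree ≤ M :=
    (natDegree_mul_le.trans (by rw [natDegree_X, add_comm])).trans (le_max_right _ _)
  have hBlt : B.natDegree < M := (Nat.lt_succ_self _).trans_le (le_max_right _ _)
  have hdeg : ∀ p : ℤ[X], (polyEuler p).natDegree ≤ p.natDegree := by
    intro p
    rw [natDegree_le_iff_coeff_eq_zero]
    intro n hn
    rw [coeff_polyEuler, coeff_eq_zero_of_natDegree_lt hn, mul_zero]
  have hl : (polyEuler A * B - A * polyEuler B).coeff (M + M) = 0 := by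
    rw [coeff_sub, coeff_eq_zero_of_natDegree_lt, coeff_eq_zero_of_natDegree_lt, sub_zero]
    · exact natDegree_mul_le.trans_lt (by linarith [hdeg B])
    · exact natDegree_mul_le.trans_lt (by linarith [hdeg A])
  have hr : (A ^ 2 + 4 * X ^ 2 * B ^ 2).coeff (M + M) =
      A.coeff M ^ 2 + 4 * (X * B).coeff M ^ 2 := by
    have : A ^ 2 + 4 * X ^ 2 * B ^ 2 = A * A + C 4 * ((X * B) * (X * B)) := by
      rw [show (C 4 : ℤ[X]) = 4 from rfl]
      ring
    rw [this, coeff_add, coeff_C_mul, coeff_mul_add_eq_of_natDegree_le hA hA,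
      coeff_mul_add_eq_of_natDegree_le hB' hB']
    ring
  rw [h, hr] at hl
  have h1 : A.coeff M = 0 := by nlinarith [sq_nonneg (A.coeff M), sq_nonneg ((X * B).coeff M)]
  have h2 : (X * B).coeff M = 0 := by
    nlinarith [sq_nonneg (A.coeff M), sq_nonneg ((X * B).coeff M)]
  rcases max_choice A.natDegree (B.natDegree + 1) with h3 | h3
  · rw [← hM] at h3
    rw [h3] at h1
    have h4 : A = 0 := leadingCoeff_eq_zero.mp h1
    rw [h3, h4] at hBlt
    simp at hBlt
  · rw [← hM] at h3
    rw [h3, coeff_X_mul] at h2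
    exact hB (leadingCoeff_eq_zero.mp h2)

variable {F : Type*} [Field F] [CharZero F] {D : IntDerivation F}

theorem eq_zero_of_sum_monomial_mul_eq_zero (hD : ∀ u, D u ≠ 1) {f g h : F} (ψ : ℤ[X] →+* F)
    (hψ : Function.Injective ψ) (hψD : ∀ p, D (ψ p) = ψ (polyEuler p))
    (hf0 : f ≠ 0) (hf : D f = g) (hg : D g = -ψ (4 * X ^ 2) * f)
    (hh : D (D h + f) = -ψ (4 * X ^ 2) * h - g) (hc : f * (D h + f) - g * h ≠ 0)
    {d : ℕ} (Q : Fin (d + 1) → ℤ[X]) (hQ : ∑ i, ψ (Q i) * (f ^ (d - i : ℕ) * g ^ (i : ℕ)) = 0) :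
    Q = 0 := by
  induction d with
  | zero =>
    funext i
    rw [Fin.fin_one_eq_zero i]
    apply hψ
    simpa using hQ
  | succ d ih =>
    have hlast : ∀ R : Fin (d + 1 + 1) → ℤ[X],
        ∑ i, ψ (R i) * (f ^ (d + 1 - i : ℕ) * g ^ (i : ℕ)) = 0 → R (Fin.last _) = 0 → R = 0 := by
      intro R hR hR0
      rw [Fin.sum_univ_castSucc, hR0, map_zero, zero_mul, add_zero] at hR
      have h1 : f * ∑ i : Fin (d + 1), ψ (R i.castSucc) * (f ^ (d - i : ℕ) * g ^ (i : ℕ)) = 0 := by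
        rw [← hR, Finset.mul_sum]
        refine Finset.sum_congr rfl fun i _ => ?_
        rw [Fin.val_castSucc, show d + 1 - (i : ℕ) = d - i + 1 by omega]
        ring
      have h2 := ih (fun i => R i.castSucc) ((mul_eq_zero.mp h1).resolve_left hf0)
      funext i
      refine Fin.lastCases hR0 (fun i => ?_) i
      exact congrFun h2 i
    by_contra hne
    have hQl : Q (Fin.last _) ≠ 0 := fun h0 => hne (hlast Q hQ h0)
    set Q' := formDeriv polyEuler (symSystem (d + 1) (4 * X ^ 2)) Q with hQ'
    have hQ'0 : ∑ i, ψ (Q' i) * (f ^ (d + 1 - i : ℕ) * g ^ (i : ℕ)) = 0 := by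
      rw [hQ', sum_formDeriv_mul ψ hψD, hQ, map_zero]
      intro j
      rw [derivation_monomial_eq hf hg, ← symSystem_map]
      rfl
    have hprop : ∀ i, Q (Fin.last _) * Q' i = Q' (Fin.last _) * Q i := by
      have := hlast (fun i => Q (Fin.last _) * Q' i - Q' (Fin.last _) * Q i) ?_ (by ring)
      · intro i
        exact sub_eq_zero.mp (congrFun this i)
      · simp only [map_sub, map_mul, sub_mul, Finset.sum_sub_distrib, mul_assoc, ← Finset.mul_sum]
        rw [hQ'0, hQ]
        simp
    have hmem := mem_of_formDeriv_stable hD hf0 hf hg hh hc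
      (Submodule.span F {fun i => ψ (Q i)}) ?_ ?_
    · obtain ⟨κ, hκ⟩ := Submodule.mem_span_singleton.mp hmem
      have e1 := congrFun hκ (Fin.last _)
      have e2 := congrFun hκ (Fin.last d).castSucc
      simp only [Pi.smul_apply, smul_eq_mul, Fin.val_last, Fin.val_castSucc, Nat.choose_self,
        Nat.sub_self, pow_zero, one_mul, Nat.cast_one, Nat.choose_succ_self_right,
        Nat.add_sub_cancel_left, pow_one] at e1 e2
      have hκ0 : κ ≠ 0 := by
        rintro rfl
        exact pow_ne_zero (d + 1) hf0 (by simpa using e1.symm)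
      set A := Q (Fin.last d).castSucc
      set B := ((d + 1 : ℕ) : ℤ[X]) * Q (Fin.last (d + 1)) with hB
      have hB0 : B ≠ 0 := mul_ne_zero (by exact_mod_cast d.succ_ne_zero) hQl
      have hAB : f * ψ A + g * ψ B = 0 := by
        apply mul_left_cancel₀ hκ0
        rw [hB, map_mul, map_natCast]
        linear_combination f * e2 + g * ((d + 1 : ℕ) : F) * e1
      have hDAB := congrArg D hAB
      simp only [map_add, Derivation.leibniz, hψD, hf, hg, smul_eq_mul, map_zero] at hDAB
      apply riccati_no_rational_solution hB0 (A := A)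
      apply hψ
      apply mul_left_cancel₀ hf0
      simp only [map_sub, map_add, map_mul, map_pow, map_ofNat] at hDAB ⊢
      linear_combination ψ B * hDAB - (ψ A + ψ (polyEuler B)) * hAB
    · rw [Ne, Submodule.span_singleton_eq_bot]
      intro h0
      exact hQl (hψ (by simpa using congrFun h0 (Fin.last _)))
    · apply formDeriv_mem_span Submodule.subset_span
      rintro _ rfl
      have h1 := map_iterate_formDeriv (a := symSystem (d + 1) (4 * X ^ 2)) ψ hψD Q 1
      simp only [Function.iterate_one, symSystem_map] at h1
      rw [← h1, Submodule.mem_span_singleton]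
      refine ⟨ψ (Q' (Fin.last _)) / ψ (Q (Fin.last _)), ?_⟩
      funext i
      have h2 : ψ (Q (Fin.last _)) ≠ 0 := fun h0 => hQl (hψ (by simpa using h0))
      have h3 := congrArg ψ (hprop i)
      rw [map_mul, map_mul] at h3
      rw [Pi.smul_apply, smul_eq_mul, div_mul_eq_mul_div, div_eq_iff h2, ← h3, mul_comm]

theorem det_iterate_formDeriv_symSystem_ne_zero (hD : ∀ u, D u ≠ 1) {f g h : F} (ψ : ℤ[X] →+* F)
    (hψ : Function.Injective ψ) (hψD : ∀ p, D (ψ p) = ψ (polyEuler p))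
    (hf0 : f ≠ 0) (hf : D f = g) (hg : D g = -ψ (4 * X ^ 2) * f)
    (hh : D (D h + f) = -ψ (4 * X ^ 2) * h - g) (hc : f * (D h + f) - g * h ≠ 0)
    {d : ℕ} {P : Fin (d + 1) → ℤ[X]} (hP : P ≠ 0) :
    (Matrix.of fun k i : Fin (d + 1) =>
      (formDeriv polyEuler (symSystem d (4 * X ^ 2)))^[k] P i).det ≠ 0 := by
  intro hdet
  obtain ⟨q, hq0, hq⟩ := Matrix.exists_mulVec_eq_zero_iff.mpr hdet
  set L := formDeriv D (symSystem d (ψ (4 * X ^ 2))) with hL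
  set P' : Fin (d + 1) → F := fun i => ψ (P i) with hP'
  have hiter : ∀ k, (fun i => ψ ((formDeriv polyEuler (symSystem d (4 * X ^ 2)))^[k] P i)) =
      L^[k] P' := by
    intro k
    rw [map_iterate_formDeriv ψ hψD, symSystem_map]
  let W := Submodule.span F ((fun j => L^[j] P') '' Set.Iio (Fintype.card (Fin (d + 1))))
  have hW : ∀ k, L^[k] P' ∈ W := iterate_formDeriv_mem_span P'
  have hann : ∀ w ∈ W, ∑ i, w i * ψ (q i) = 0 := by
    intro w hw
    induction hw using Submodule.span_induction with
    | mem x hx =>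
      obtain ⟨k, hk, rfl⟩ := hx
      rw [Set.mem_Iio, Fintype.card_fin] at hk
      have h1 := congrArg ψ (congrFun hq ⟨k, hk⟩)
      simp only [Matrix.mulVec, dotProduct, Matrix.of_apply, map_sum, map_mul, Pi.zero_apply,
        map_zero] at h1
      rw [← h1]
      refine Finset.sum_congr rfl fun i _ => ?_
      exact congrArg (· * ψ (q i)) (congrFun (hiter k) i).symm
    | zero => simp
    | add x y _ _ hx hy => simp [add_mul, Finset.sum_add_distrib, hx, hy]
    | smul c x _ hx => simp [mul_assoc, ← Finset.mul_sum, hx]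
  have hmem := mem_of_formDeriv_stable hD hf0 hf hg hh hc W ?_ ?_
  · have h1 := hann _ hmem
    have h2 := eq_zero_of_sum_monomial_mul_eq_zero hD ψ hψ hψD hf0 hf hg hh hc
      (fun i : Fin (d + 1) => ((d.choose i.rev : ℕ) : ℤ[X]) * (-1) ^ (i : ℕ) * q i.rev) ?_
    · apply hq0
      funext i
      have h3 := congrFun h2 i.rev
      simp only [Fin.rev_rev, Pi.zero_apply, mul_eq_zero, Nat.cast_eq_zero] at h3
      rcases h3 with (h3 | h3) | h3
      · exact absurd h3 (Nat.choose_pos (Nat.lt_succ_iff.mp i.2)).ne'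
      · exact absurd h3 (pow_ne_zero _ (by norm_num))
      · exact h3
    · rw [← h1, ← Equiv.sum_comp Fin.revPerm]
      refine Finset.sum_congr rfl fun i _ => ?_
      have h4 : d - (i.rev : ℕ) = i := by
        rw [Fin.val_rev]
        omega
      have h5 : d - (i : ℕ) = i.rev := by
        rw [Fin.val_rev]
        omega
      simp only [Fin.revPerm_apply, Fin.rev_rev, h4, map_mul, map_natCast, map_pow, map_neg,
        map_one]
      rw [h5, ← mul_one ((-1 : F) ^ _), neg_pow g]
      ring
  · rw [Submodule.ne_bot_iff]
    refine ⟨P', hW 0, fun h0 => hP ?_⟩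
    funext i
    apply hψ
    simpa using congrFun h0 i
  · intro w hw
    refine formDeriv_mem_span Submodule.subset_span ?_ w hw
    rintro _ ⟨k, _, rfl⟩
    change L (L^[k] P') ∈ W
    rw [← Function.iterate_succ_apply' L]
    exact hW (k + 1)

end Transcendence

section ExponentialType

/-- Power series `∑ cₙ / n! * Xⁿ` with integers `cₙ` of at most geometric growth. -/
def IsExpType (φ : PowerSeries ℚ) : Prop :=
  ∃ C : ℕ, ∀ n, ∃ c : ℤ, PowerSeries.coeff n φ * n.factorial = c ∧ |c| ≤ (C : ℤ) ^ n

theorem IsExpType.one : IsExpType 1 := by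
  refine ⟨0, fun n => ?_⟩
  rcases Nat.eq_zero_or_pos n with rfl | h
  · exact ⟨1, by simp, by simp⟩
  · exact ⟨0, by simp [PowerSeries.coeff_one, h.ne'], by simp [h.ne']⟩

theorem IsExpType.mul {φ χ : PowerSeries ℚ} (hφ : IsExpType φ) (hχ : IsExpType χ) :
    IsExpType (φ * χ) := by
  obtain ⟨A, hA⟩ := hφ
  obtain ⟨B, hB⟩ := hχ
  choose a ha ha' using hA
  choose b hb hb' using hB
  refine ⟨A + B, fun n => ⟨∑ i ∈ Finset.range n.succ, n.choose i * (a i * b (n - i)), ?_, ?_⟩⟩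
  · rw [PowerSeries.coeff_mul, Finset.Nat.sum_antidiagonal_eq_sum_range_succ
      (fun i j => PowerSeries.coeff i φ * PowerSeries.coeff j χ), Finset.sum_mul]
    push_cast
    refine Finset.sum_congr rfl fun i hi => ?_
    rw [← ha, ← hb, ← Nat.choose_mul_factorial_mul_factorial (Finset.mem_range_succ_iff.mp hi)]
    push_cast
    ring
  · push_cast
    rw [add_pow]
    refine (Finset.abs_sum_le_sum_abs _ _).trans (Finset.sum_le_sum fun i _ => ?_)
    rw [abs_mul, abs_mul, Nat.abs_cast, mul_comm]
    gcongr
    · exact ha' _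
    · exact hb' _

theorem IsExpType.pow {φ : PowerSeries ℚ} (hφ : IsExpType φ) (k : ℕ) : IsExpType (φ ^ k) := by
  induction k with
  | zero => simpa using IsExpType.one
  | succ k ih =>
    rw [pow_succ]
    exact ih.mul hφ

theorem IsExpType.seriesEuler {φ : PowerSeries ℚ} (hφ : IsExpType φ) :
    IsExpType (seriesEuler φ) := by
  obtain ⟨A, hA⟩ := hφ
  refine ⟨2 * A, fun n => ?_⟩
  obtain ⟨c, hc, hc'⟩ := hA n
  refine ⟨n * c, ?_, ?_⟩
  · rw [coeff_seriesEuler, mul_assoc, hc]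
    push_cast
    rfl
  · rw [abs_mul, Nat.abs_cast]
    push_cast
    rw [mul_pow]
    gcongr
    exact_mod_cast Nat.lt_two_pow_self.le

end ExponentialType

section BesselSeries

/-- The even power series `∑ uₖ * X ^ (2 * k)`. -/
noncomputable def evenSeries (u : ℕ → ℚ) : PowerSeries ℚ :=
  PowerSeries.mk fun n => if Even n then u (n / 2) else 0

theorem coeff_evenSeries (u : ℕ → ℚ) (n : ℕ) :
    PowerSeries.coeff n (evenSeries u) = if Even n then u (n / 2) else 0 :=
  PowerSeries.coeff_mk _ _

theorem coeff_two_mul_evenSeries (u : ℕ → ℚ) (n : ℕ) :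
    PowerSeries.coeff (2 * n) (evenSeries u) = u n := by
  simp [coeff_evenSeries]

theorem seriesEuler_evenSeries (u : ℕ → ℚ) :
    seriesEuler (evenSeries u) = evenSeries fun k => 2 * k * u k := by
  ext n
  rw [coeff_seriesEuler, coeff_evenSeries, coeff_evenSeries]
  split_ifs with h
  · obtain ⟨k, rfl⟩ := h
    rw [← two_mul, Nat.mul_div_cancel_left _ two_pos]
    push_cast
    ring
  · ring

theorem X_sq_mul_evenSeries (u : ℕ → ℚ) :
    polyToSeries (4 * X ^ 2) * evenSeries u =
      evenSeries fun k => if k = 0 then 0 else 4 * u (k - 1) := by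
  have h : polyToSeries (4 * X ^ 2) * evenSeries u =
      PowerSeries.C 4 * evenSeries u * PowerSeries.X ^ 2 := by
    rw [map_mul, map_pow, polyToSeries_X, map_ofNat, map_ofNat]
    ring
  ext n
  rw [h, PowerSeries.coeff_mul_X_pow', PowerSeries.coeff_C_mul, coeff_evenSeries,
    coeff_evenSeries]
  rcases lt_or_ge n 2 with h2 | h2
  · have : n / 2 = 0 := Nat.div_eq_of_lt h2
    simp [this, h2]
  · obtain ⟨n, rfl⟩ := Nat.exists_eq_add_of_le h2
    have : (2 + n) / 2 = n / 2 + 1 := by omega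
    simp [this, Nat.even_add]

theorem evenSeries_add (u v : ℕ → ℚ) :
    evenSeries u + evenSeries v = evenSeries fun k => u k + v k := by
  ext n
  simp only [map_add, coeff_evenSeries]
  split_ifs <;> simp

theorem evenSeries_neg (u : ℕ → ℚ) : -evenSeries u = evenSeries fun k => -u k := by
  ext n
  simp only [map_neg, coeff_evenSeries]
  split_ifs <;> simp

/-- The power series of `J₀(2x)`. -/
noncomputable def besselSeries : PowerSeries ℚ :=
  evenSeries fun k => (-1) ^ k / (k.factorial : ℚ) ^ 2

/-- The regular part of the second solution of the differential equation of `J₀(2x)`. -/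
noncomputable def besselSeriesSecond : PowerSeries ℚ :=
  evenSeries fun k => -((-1) ^ k * harmonic k / (k.factorial : ℚ) ^ 2)

theorem seriesEuler_seriesEuler_besselSeries :
    seriesEuler (seriesEuler besselSeries) = -polyToSeries (4 * X ^ 2) * besselSeries := by
  rw [neg_mul, besselSeries, X_sq_mul_evenSeries, seriesEuler_evenSeries, seriesEuler_evenSeries,
    evenSeries_neg]
  congr 1
  funext k
  cases k with
  | zero => simp
  | succ k =>
    have : (k.factorial : ℚ) ≠ 0 := by exact_mod_cast k.factorial_ne_zero
    have : (k + 1 : ℚ) ≠ 0 := by exact_mod_cast k.succ_ne_zero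
    simp only [Nat.factorial_succ, Nat.succ_ne_zero, if_false, Nat.add_sub_cancel]
    push_cast
    field_simp
    ring

theorem seriesEuler_besselSeriesSecond :
    seriesEuler (seriesEuler besselSeriesSecond + besselSeries) =
      -polyToSeries (4 * X ^ 2) * besselSeriesSecond - seriesEuler besselSeries := by
  rw [neg_mul, sub_eq_add_neg, besselSeries, besselSeriesSecond, X_sq_mul_evenSeries,
    seriesEuler_evenSeries, seriesEuler_evenSeries, evenSeries_neg, evenSeries_neg,
    evenSeries_add, evenSeries_add, seriesEuler_evenSeries]
  congr 1
  funext k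
  cases k with
  | zero => simp
  | succ k =>
    have : (k.factorial : ℚ) ≠ 0 := by exact_mod_cast k.factorial_ne_zero
    have : (k + 1 : ℚ) ≠ 0 := by exact_mod_cast k.succ_ne_zero
    simp only [Nat.factorial_succ, Nat.succ_ne_zero, if_false, Nat.add_sub_cancel, harmonic_succ]
    push_cast
    field_simp
    ring

theorem isExpType_besselSeries : IsExpType besselSeries := by
  refine ⟨2, fun n => ?_⟩
  rcases Nat.even_or_odd n with h | h
  · obtain ⟨k, rfl⟩ := h
    rw [← two_mul]
    refine ⟨(-1) ^ k * k.centralBinom, ?_, ?_⟩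
    · rw [besselSeries, coeff_two_mul_evenSeries, Nat.centralBinom_eq_two_mul_choose]
      push_cast
      rw [Nat.cast_choose ℚ (by omega : k ≤ 2 * k), show 2 * k - k = k by omega]
      field_simp
    · rw [abs_mul, abs_pow, abs_neg, abs_one, one_pow, one_mul, Nat.abs_cast]
      have h1 : k.centralBinom ≤ 2 ^ (2 * k) := by
        rw [Nat.centralBinom_eq_two_mul_choose]
        exact Nat.choose_le_two_pow _ _
      exact_mod_cast h1
  · exact ⟨0, by simp [besselSeries, coeff_evenSeries, Nat.not_even_iff_odd.mpr h], by simp⟩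

theorem constantCoeff_besselSeries : PowerSeries.constantCoeff besselSeries = 1 := by
  rw [← PowerSeries.coeff_zero_eq_constantCoeff_apply, besselSeries, coeff_evenSeries]
  simp

theorem constantCoeff_seriesEuler (φ : PowerSeries ℚ) :
    PowerSeries.constantCoeff (seriesEuler φ) = 0 := by
  rw [← PowerSeries.coeff_zero_eq_constantCoeff_apply, coeff_seriesEuler]
  simp

theorem seriesEuler_monomial_besselSeries (d : ℕ) (j : Fin (d + 1)) :
    seriesEuler (besselSeries ^ (d - j : ℕ) * seriesEuler besselSeries ^ (j : ℕ)) =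
      ∑ i : Fin (d + 1), polyToSeries (symSystem d (4 * X ^ 2) j i) *
        (besselSeries ^ (d - i : ℕ) * seriesEuler besselSeries ^ (i : ℕ)) := by
  rw [derivation_monomial_eq rfl seriesEuler_seriesEuler_besselSeries, ← symSystem_map]
  rfl

theorem det_iterate_formDeriv_bessel_ne_zero {d : ℕ} {P : Fin (d + 1) → ℤ[X]} (hP : P ≠ 0) :
    (Matrix.of fun k i : Fin (d + 1) =>
      (formDeriv polyEuler (symSystem d (4 * X ^ 2)))^[k] P i).det ≠ 0 := by
  have : CharZero (LaurentSeries ℚ) :=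
    charZero_of_injective_ringHom (f := (HahnSeries.ofPowerSeries ℤ ℚ).comp polyToSeries)
      (HahnSeries.ofPowerSeries_injective.comp polyToSeries_injective)
  let ι : PowerSeries ℚ →+* LaurentSeries ℚ := HahnSeries.ofPowerSeries ℤ ℚ
  have hι : Function.Injective ι := HahnSeries.ofPowerSeries_injective
  have hD : ∀ φ, laurentEuler (ι φ) = ι (seriesEuler φ) := laurentEuler_ofPowerSeries
  have hc : besselSeries * (seriesEuler besselSeriesSecond + besselSeries) -
      seriesEuler besselSeries * besselSeriesSecond ≠ 0 := by
    intro h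
    simpa [constantCoeff_besselSeries, constantCoeff_seriesEuler] using
      congrArg PowerSeries.constantCoeff h
  have hf : besselSeries ≠ 0 := by
    intro h
    simpa [h] using constantCoeff_besselSeries
  refine det_iterate_formDeriv_symSystem_ne_zero (D := laurentEuler) laurentEuler_ne_one
    (f := ι besselSeries) (g := ι (seriesEuler besselSeries)) (h := ι besselSeriesSecond)
    (ι.comp polyToSeries) (hι.comp polyToSeries_injective) ?_ ?_ (hD _) ?_ ?_ ?_ hP
  · intro p
    rw [RingHom.comp_apply, hD, seriesEuler_polyToSeries]
    rfl
  · exact (map_ne_zero_iff ι hι).mpr hf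
  · rw [hD, seriesEuler_seriesEuler_besselSeries, map_mul, map_neg]
    rfl
  · rw [hD, ← map_add, hD, seriesEuler_besselSeriesSecond, map_sub, map_mul, map_neg]
    rfl
  · rw [hD, ← map_add, ← map_mul, ← map_mul, ← map_sub]
    exact (map_ne_zero_iff ι hι).mpr hc

end BesselSeries

section AuxiliaryForms

attribute [local instance] Matrix.seminormedAddCommGroup

/-- The entries of the matrix whose kernel consists of the integer vectors `p` for which the
linear form `∑ i, (∑ k < 2 * n, p (i, k) / k! * X ^ k) * φ i` vanishes to order `M`, when
`φ i = ∑ l, c i l / l! * X ^ l`. -/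
def vanishingEntry {m : ℕ} (c : Fin m → ℕ → ℤ) (n l : ℕ) (ik : Fin m × Fin (2 * n)) : ℤ :=
  if (ik.2 : ℕ) ≤ l then l.choose ik.2 * c ik.1 (l - ik.2) else 0

theorem abs_vanishingEntry_le {m : ℕ} {c : Fin m → ℕ → ℤ} {A : ℕ} (hA : 1 ≤ A)
    (hc : ∀ i n, |c i n| ≤ (A : ℤ) ^ n) (n l : ℕ) (ik) :
    |vanishingEntry c n l ik| ≤ (2 * A : ℤ) ^ l := by
  rw [vanishingEntry]
  split_ifs with h
  · rw [abs_mul, Nat.abs_cast, mul_pow]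
    gcongr
    · exact_mod_cast Nat.choose_le_two_pow _ _
    · refine (hc _ _).trans (pow_le_pow_right₀ (by exact_mod_cast hA) (Nat.sub_le _ _))
  · simp only [abs_zero]
    positivity

theorem exists_vanishing_vector {m : ℕ} (hm : 1 ≤ m) {c : Fin m → ℕ → ℤ} {A : ℕ} (hA : 1 ≤ A)
    (hc : ∀ i n, |c i n| ≤ (A : ℤ) ^ n) {n : ℕ} (hn : 1 ≤ n) :
    ∃ p : Fin m × Fin (2 * n) → ℤ, p ≠ 0 ∧
      (∀ l < (2 * m - 1) * n, ∑ ik, vanishingEntry c n l ik * p ik = 0) ∧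
      ∀ ik, |p ik| ≤ (((2 * m * 2 * (2 * A) ^ (2 * m - 1)) ^ (2 * m - 1) : ℕ) : ℤ) ^ n := by
  set M := (2 * m - 1) * n with hM
  have hMpos : 0 < M := Nat.mul_pos (by omega) hn
  have hcard : Fintype.card (Fin m × Fin (2 * n)) = M + n := by
    rw [Fintype.card_prod, Fintype.card_fin, Fintype.card_fin, hM]
    obtain ⟨m, rfl⟩ := Nat.exists_eq_add_of_le' hm
    rw [show 2 * (m + 1) - 1 = 2 * m + 1 by omega]
    ring
  obtain ⟨p, hp0, hp, hpn⟩ := Int.Matrix.exists_ne_zero_int_vec_norm_le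
    (Matrix.of fun (l : Fin M) ik => vanishingEntry c n l ik)
    (by rw [hcard, Fintype.card_fin]; omega) (by rwa [Fintype.card_fin])
  refine ⟨p, hp0, fun l hl => congrFun hp ⟨l, hl⟩, fun ik => ?_⟩
  have hexp : ((Fintype.card (Fin M) : ℝ) /
      ((Fintype.card (Fin m × Fin (2 * n)) : ℝ) - Fintype.card (Fin M))) = ((2 * m - 1 : ℕ) : ℝ) := by
    rw [hcard, Fintype.card_fin, hM]
    have : (n : ℝ) ≠ 0 := by positivity
    push_cast
    field_simp
    ring
  rw [hexp, Real.rpow_natCast, hcard] at hpn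
  have hnorm : ‖(Matrix.of fun (l : Fin M) ik => vanishingEntry c n l ik)‖ ≤
      (2 * A : ℝ) ^ M := by
    rw [Matrix.norm_le_iff (by positivity)]
    intro l ik
    rw [Matrix.of_apply, Int.norm_eq_abs]
    have h1 := abs_vanishingEntry_le hA hc n l ik
    have h2 : (2 * A : ℤ) ^ (l : ℕ) ≤ (2 * A : ℤ) ^ M :=
      pow_le_pow_right₀ (by omega) l.2.le
    exact_mod_cast h1.trans h2
  have hA' : (1 : ℝ) ≤ A := by exact_mod_cast hA
  have h1 : max 1 ‖(Matrix.of fun (l : Fin M) ik => vanishingEntry c n l ik)‖ ≤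
      (2 * A : ℝ) ^ M := max_le (one_le_pow₀ (by linarith)) hnorm
  have hle : ((M + n : ℕ) : ℝ) ≤ (2 * m * 2 : ℝ) ^ n := by
    have h2 : M + n ≤ (2 * m * 2) ^ n := by
      have h3 : M + n = 2 * m * n := by
        rw [← hcard, Fintype.card_prod, Fintype.card_fin, Fintype.card_fin]
        ring
      rw [h3, mul_pow]
      gcongr
      · exact Nat.le_self_pow (by omega) _
      · exact Nat.lt_two_pow_self.le
    exact_mod_cast h2
  have h3 : ‖p‖ ≤ (((2 * m * 2 * (2 * A) ^ (2 * m - 1)) ^ (2 * m - 1) : ℕ) : ℝ) ^ n := by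
    refine hpn.trans ?_
    push_cast
    rw [← pow_mul, mul_comm (2 * m - 1) n, pow_mul, mul_pow _ _ n, ← pow_mul (2 * (A : ℝ))]
    push_cast at hle
    gcongr
  have h4 := (norm_le_pi_norm p ik).trans h3
  rw [Int.norm_eq_abs] at h4
  exact_mod_cast h4

theorem exists_auxiliary_form {m : ℕ} (hm : 1 ≤ m) {φ : Fin m → PowerSeries ℚ}
    (hφ : ∀ i, IsExpType (φ i)) :
    ∃ C : ℕ, 1 ≤ C ∧ ∀ n, 1 ≤ n → ∃ P : Fin m → ℤ[X], P ≠ 0 ∧ (∀ i, (P i).natDegree < 2 * n) ∧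
      (∀ i k, |(P i).coeff k| ≤ (2 * n).factorial * (C : ℤ) ^ n) ∧
      ∃ r : ℕ → ℤ, ∀ l,
        PowerSeries.coeff l (∑ i, polyToSeries (P i) * φ i) * l.factorial =
          (2 * n).factorial * r l ∧
        (l < (2 * m - 1) * n → r l = 0) ∧ |r l| ≤ (C : ℤ) ^ n * C ^ l := by
  choose A₀ hA₀ using hφ
  set A := 1 + ∑ i, A₀ i with hAdef
  have hA : 1 ≤ A := by omega
  have hAi : ∀ i, A₀ i ≤ A := fun i =>
    (Finset.single_le_sum (fun _ _ => Nat.zero_le _) (Finset.mem_univ i)).trans (by omega)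
  choose c hc hc' using hA₀
  replace hc' : ∀ i n, |c i n| ≤ (A : ℤ) ^ n := fun i n =>
    (hc' i n).trans (pow_le_pow_left₀ (by positivity) (by exact_mod_cast hAi i) n)
  set B := (2 * m * 2 * (2 * A) ^ (2 * m - 1)) ^ (2 * m - 1) with hB
  have hBpos : 1 ≤ B := Nat.one_le_iff_ne_zero.mpr (by positivity)
  refine ⟨2 * m * 2 * B * (2 * A), Nat.one_le_iff_ne_zero.mpr (by positivity), fun n hn => ?_⟩
  have hBC : B ≤ 2 * m * 2 * B * (2 * A) := by
    calc B = 1 * B * 1 := by ring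
      _ ≤ _ := by
        gcongr
        · omega
        · omega
  have hAC : 2 * A ≤ 2 * m * 2 * B * (2 * A) := Nat.le_mul_of_pos_left _ (by positivity)
  obtain ⟨p, hp0, hp, hpB⟩ := exists_vanishing_vector hm hA hc' hn
  let P : Fin m → ℤ[X] := fun i =>
    ∑ k : Fin (2 * n), monomial k (p (i, k) * ((2 * n).factorial / (k : ℕ).factorial : ℕ))
  have hcoeff : ∀ i k, (P i).coeff k =
      if h : k < 2 * n then p (i, ⟨k, h⟩) * ((2 * n).factorial / k.factorial : ℕ) else 0 := by
    intro i k
    simp only [P, finsetSum_coeff, coeff_monomial]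
    split_ifs with h
    · rw [Finset.sum_eq_single ⟨k, h⟩]
      · simp
      · intro b _ hb
        rw [if_neg fun h' => hb (Fin.ext h')]
      · simp
    · exact Finset.sum_eq_zero fun b _ => if_neg (by omega)
  have hfac : ∀ k : Fin (2 * n), (((2 * n).factorial / (k : ℕ).factorial : ℕ) : ℚ) =
      (2 * n).factorial / (k : ℕ).factorial := fun k =>
    Nat.cast_div (Nat.factorial_dvd_factorial k.2.le) (by positivity)
  refine ⟨P, ?_, ?_, ?_, fun l => ∑ ik, vanishingEntry c n l ik * p ik, fun l => ⟨?_, hp l, ?_⟩⟩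
  · intro h
    apply hp0
    funext ⟨i, k⟩
    have h1 := hcoeff i k
    rw [h, dif_pos k.2] at h1
    have h2 : (2 * n).factorial / (k : ℕ).factorial ≠ 0 :=
      (Nat.div_pos (Nat.factorial_le k.2.le) (Nat.factorial_pos _)).ne'
    have h3 : (((2 * n).factorial / (k : ℕ).factorial : ℕ) : ℤ) ≠ 0 := by exact_mod_cast h2
    exact (mul_eq_zero.mp h1.symm).resolve_right h3
  · intro i
    rw [Nat.lt_iff_le_pred (by omega), natDegree_le_iff_coeff_eq_zero]
    intro k hk
    rw [hcoeff, dif_neg (by omega)]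
  · intro i k
    rw [hcoeff]
    split_ifs with h
    · rw [abs_mul, Nat.abs_cast, mul_comm]
      gcongr
      · exact Nat.div_le_self _ _
      · refine (hpB _).trans ?_
        exact pow_le_pow_left₀ (by positivity) (by exact_mod_cast hBC) n
    · simp only [abs_zero]
      positivity
  · simp only [Fintype.sum_prod_type]
    rw [map_sum, Finset.sum_mul]
    push_cast
    rw [Finset.mul_sum]
    refine Finset.sum_congr rfl fun i _ => ?_
    have h1 : polyToSeries (P i) * φ i = ∑ k : Fin (2 * n),
        PowerSeries.C ((p (i, k) * ((2 * n).factorial / (k : ℕ).factorial) : ℚ)) * φ i *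
          PowerSeries.X ^ (k : ℕ) := by
      simp only [P, map_sum, Finset.sum_mul]
      refine Finset.sum_congr rfl fun k _ => ?_
      rw [← C_mul_X_pow_eq_monomial, map_mul, map_pow, polyToSeries_X, ← hfac]
      have : ∀ z : ℤ, polyToSeries (C z) = PowerSeries.C (z : ℚ) := by
        intro z
        simp [polyToSeries]
      rw [this, Int.cast_mul, Int.cast_natCast]
      ring
    rw [h1, map_sum, Finset.sum_mul, Finset.mul_sum]
    refine Finset.sum_congr rfl fun k _ => ?_
    rw [PowerSeries.coeff_mul_X_pow', vanishingEntry]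
    split_ifs with h
    · rw [PowerSeries.coeff_C_mul]
      push_cast
      rw [← hc, ← Nat.choose_mul_factorial_mul_factorial h]
      have : ((k : ℕ).factorial : ℚ) ≠ 0 := by positivity
      push_cast
      field_simp
    · simp
  · have h1 : ∀ ik, |vanishingEntry c n l ik * p ik| ≤ (2 * A : ℤ) ^ l * B ^ n := fun ik => by
      rw [abs_mul]
      gcongr
      · exact abs_vanishingEntry_le hA hc' n l ik
      · exact hpB ik
    have h2 : (2 * m * n : ℤ) ≤ (2 * m * 2 : ℤ) ^ n := by
      rw [mul_pow]
      gcongr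
      · exact_mod_cast Nat.le_self_pow (by omega) (2 * m)
      · exact_mod_cast Nat.lt_two_pow_self.le
    calc |∑ ik, vanishingEntry c n l ik * p ik| ≤ ∑ ik, |vanishingEntry c n l ik * p ik| :=
          Finset.abs_sum_le_sum_abs _ _
      _ ≤ ∑ _ik : Fin m × Fin (2 * n), (2 * A : ℤ) ^ l * B ^ n := Finset.sum_le_sum fun ik _ => h1 ik
      _ = 2 * m * n * B ^ n * (2 * A) ^ l := by
        rw [Finset.sum_const, Finset.card_univ, Fintype.card_prod, Fintype.card_fin,
          Fintype.card_fin, nsmul_eq_mul]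
        push_cast
        ring
      _ ≤ (2 * m * 2) ^ n * B ^ n * (2 * A) ^ l := by gcongr
      _ = (2 * m * 2 * B : ℤ) ^ n * (2 * A) ^ l := by rw [mul_pow _ (B : ℤ)]
      _ ≤ _ := by
        refine mul_le_mul (pow_le_pow_left₀ (by positivity) ?_ n)
          (pow_le_pow_left₀ (by positivity) (by exact_mod_cast hAC) l) (by positivity)
          (by positivity)
        exact_mod_cast Nat.le_mul_of_pos_right (2 * m * 2 * B) (by omega : 0 < 2 * A)

end AuxiliaryForms

section Evaluation

/-- The sum of a rational power series at a complex point. -/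
noncomputable def seriesEval (z : ℂ) (φ : PowerSeries ℚ) : ℂ :=
  ∑' n, ((PowerSeries.coeff n φ : ℚ) : ℂ) * z ^ n

theorem IsExpType.summable {φ : PowerSeries ℚ} (hφ : IsExpType φ) (z : ℂ) :
    Summable fun n => ‖((PowerSeries.coeff n φ : ℚ) : ℂ) * z ^ n‖ := by
  obtain ⟨C, hC⟩ := hφ
  refine (Real.summable_pow_div_factorial (C * ‖z‖)).of_nonneg_of_le (fun _ => norm_nonneg _)
    fun n => ?_
  obtain ⟨c, hc, hc'⟩ := hC n
  have h1 : PowerSeries.coeff n φ = c / n.factorial := by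
    rw [← hc]
    field_simp
  have h2 : ‖(c : ℂ)‖ ≤ (C : ℝ) ^ n := by
    rw [Complex.norm_intCast]
    exact_mod_cast hc'
  rw [h1, norm_mul, norm_pow, mul_pow, mul_div_right_comm]
  push_cast
  rw [norm_div, Complex.norm_natCast]
  gcongr

theorem summable_polyToSeries (p : ℤ[X]) (z : ℂ) :
    Summable fun n => ‖((PowerSeries.coeff n (polyToSeries p) : ℚ) : ℂ) * z ^ n‖ := by
  refine summable_of_ne_finset_zero (s := Finset.range (p.natDegree + 1)) fun n hn => ?_
  rw [coeff_polyToSeries, coeff_eq_zero_of_natDegree_lt (by simpa using hn)]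
  simp

theorem seriesEval_polyToSeries (p : ℤ[X]) (z : ℂ) :
    seriesEval z (polyToSeries p) = aeval z p := by
  rw [seriesEval, tsum_eq_sum (s := Finset.range (p.natDegree + 1)), aeval_eq_sum_range]
  · refine Finset.sum_congr rfl fun n _ => ?_
    rw [coeff_polyToSeries]
    simp
  · intro n hn
    rw [coeff_polyToSeries, coeff_eq_zero_of_natDegree_lt (by simpa using hn)]
    simp

theorem coeff_mul_mul_pow (φ χ : PowerSeries ℚ) (z : ℂ) (n : ℕ) :
    ((PowerSeries.coeff n (φ * χ) : ℚ) : ℂ) * z ^ n =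
      ∑ kl ∈ Finset.HasAntidiagonal.antidiagonal n, ((PowerSeries.coeff kl.1 φ : ℚ) : ℂ) * z ^ kl.1 *
        (((PowerSeries.coeff kl.2 χ : ℚ) : ℂ) * z ^ kl.2) := by
  rw [PowerSeries.coeff_mul]
  push_cast
  rw [Finset.sum_mul]
  refine Finset.sum_congr rfl fun kl hkl => ?_
  rw [← Finset.HasAntidiagonal.mem_antidiagonal.mp hkl, pow_add]
  ring

theorem seriesEval_mul {φ χ : PowerSeries ℚ} {z : ℂ}
    (hφ : Summable fun n => ‖((PowerSeries.coeff n φ : ℚ) : ℂ) * z ^ n‖)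
    (hχ : Summable fun n => ‖((PowerSeries.coeff n χ : ℚ) : ℂ) * z ^ n‖) :
    seriesEval z (φ * χ) = seriesEval z φ * seriesEval z χ := by
  simp only [seriesEval, coeff_mul_mul_pow]
  exact (tsum_mul_tsum_eq_tsum_sum_antidiagonal_of_summable_norm hφ hχ).symm

theorem seriesEval_form {m : ℕ} {φ : Fin m → PowerSeries ℚ} (hφ : ∀ i, IsExpType (φ i))
    (P : Fin m → ℤ[X]) (z : ℂ) :
    seriesEval z (∑ i, polyToSeries (P i) * φ i) = ∑ i, aeval z (P i) * seriesEval z (φ i) := by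
  have h1 : ∀ i, Summable fun n =>
      ((PowerSeries.coeff n (polyToSeries (P i) * φ i) : ℚ) : ℂ) * z ^ n := by
    intro i
    simp only [coeff_mul_mul_pow]
    exact (summable_norm_sum_mul_antidiagonal_of_summable_norm (summable_polyToSeries (P i) z)
      ((hφ i).summable z)).of_norm
  have h2 : seriesEval z (∑ i, polyToSeries (P i) * φ i) =
      ∑ i, seriesEval z (polyToSeries (P i) * φ i) := by
    simp only [seriesEval]
    rw [← Summable.tsum_finsetSum fun i _ => h1 i]
    congr 1
    funext n
    rw [map_sum]
    push_cast
    rw [Finset.sum_mul]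
  rw [h2]
  refine Finset.sum_congr rfl fun i _ => ?_
  rw [seriesEval_mul (summable_polyToSeries _ z) ((hφ i).summable z), seriesEval_polyToSeries]

theorem coeff_iterate_seriesEuler (φ : PowerSeries ℚ) (k n : ℕ) :
    PowerSeries.coeff n (seriesEuler^[k] φ) = (n : ℚ) ^ k * PowerSeries.coeff n φ := by
  induction k with
  | zero => simp
  | succ k ih =>
    rw [Function.iterate_succ_apply', coeff_seriesEuler, ih]
    ring

theorem natCast_pow_le_factorial_mul_exp (n k : ℕ) :
    (n : ℝ) ^ k ≤ k.factorial * Real.exp 1 ^ n := by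
  have h := Real.pow_div_factorial_le_exp (n : ℝ) n.cast_nonneg k
  rw [div_le_iff₀ (by positivity)] at h
  rw [← Real.exp_nat_mul, mul_one, mul_comm]
  exact h

theorem norm_seriesEval_iterate_le {R : PowerSeries ℚ} {r : ℕ → ℤ} {B : ℝ} (hB : 0 ≤ B) {C M : ℕ}
    {N : ℕ} (hR : ∀ l, PowerSeries.coeff l R * l.factorial = N * r l) (hM : ∀ l < M, r l = 0)
    (hr : ∀ l, (|r l| : ℝ) ≤ B * C ^ l) (z : ℂ) (k : ℕ) :
    ‖seriesEval z (seriesEuler^[k] R)‖ ≤ N * k.factorial * B *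
      (Real.exp 1 * C * ‖z‖) ^ M / M.factorial * Real.exp (Real.exp 1 * C * ‖z‖) := by
  set Y := Real.exp 1 * C * ‖z‖ with hY
  have hY0 : 0 ≤ Y := by positivity
  set f : ℕ → ℂ := fun l => ((PowerSeries.coeff l (seriesEuler^[k] R) : ℚ) : ℂ) * z ^ l with hf
  have hRl : ∀ l, PowerSeries.coeff l R = N * r l / l.factorial := by
    intro l
    rw [← hR]
    field_simp
  have hf0 : ∀ l < M, f l = 0 := by
    intro l hl
    simp only [hf, coeff_iterate_seriesEuler, hRl, hM l hl]
    simp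
  have hfb : ∀ j, ‖f (j + M)‖ ≤ N * k.factorial * B * Y ^ M / M.factorial *
      (Y ^ j / j.factorial) := by
    intro j
    have h1 : ‖f (j + M)‖ = ((j + M : ℕ) : ℝ) ^ k *
        (N * (|r (j + M)| : ℝ) / (j + M).factorial) * ‖z‖ ^ (j + M) := by
      simp only [hf, coeff_iterate_seriesEuler, hRl]
      rw [norm_mul, norm_pow]
      push_cast
      rw [norm_mul, norm_pow, norm_div, norm_mul, Complex.norm_natCast, Complex.norm_natCast,
        Complex.norm_intCast, ← Nat.cast_add, Complex.norm_natCast]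
      push_cast
      rfl
    have h2 : (M.factorial : ℝ) * j.factorial ≤ (j + M).factorial := by
      rw [mul_comm]
      exact_mod_cast Nat.le_of_dvd (Nat.factorial_pos _)
        (Nat.factorial_mul_factorial_dvd_factorial_add j M)
    rw [h1]
    calc _ ≤ (k.factorial * Real.exp 1 ^ (j + M)) *
        (N * (B * C ^ (j + M)) / (M.factorial * j.factorial)) * ‖z‖ ^ (j + M) := by
          gcongr
          · exact natCast_pow_le_factorial_mul_exp _ _
          · exact hr _
      _ = _ := by
        rw [hY]
        field_simp
        ring
  have hsum := (NormedSpace.expSeries_div_hasSum_exp Y).mul_left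
    (N * k.factorial * B * Y ^ M / M.factorial)
  have hs : Summable f := by
    rw [← summable_nat_add_iff M]
    exact Summable.of_norm_bounded hsum.summable hfb
  have h3 : seriesEval z (seriesEuler^[k] R) = ∑' j, f (j + M) := by
    change ∑' l, f l = _
    rw [← hs.sum_add_tsum_nat_add M, Finset.sum_eq_zero, zero_add]
    intro l hl
    exact hf0 l (Finset.mem_range.mp hl)
  rw [h3, Real.exp_eq_exp_ℝ]
  exact tsum_of_norm_bounded hsum hfb

end Evaluation

section Height

/-- The sum of the absolute values of the coefficients of an integer polynomial. -/
noncomputable def coeffSum (p : ℤ[X]) : ℕ := p.sum fun _ c => c.natAbs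

theorem coeffSum_eq_sum_range {p : ℤ[X]} {n : ℕ} (h : p.natDegree < n) :
    coeffSum p = ∑ i ∈ Finset.range n, (p.coeff i).natAbs :=
  p.sum_over_range' (fun _ => rfl) n h

theorem coeffSum_zero : coeffSum 0 = 0 := sum_zero_index _

theorem coeffSum_add_le (p q : ℤ[X]) : coeffSum (p + q) ≤ coeffSum p + coeffSum q := by
  have hp : p.natDegree < max p.natDegree q.natDegree + 1 := by omega
  have hq : q.natDegree < max p.natDegree q.natDegree + 1 := by omega
  rw [coeffSum_eq_sum_range hp, coeffSum_eq_sum_range hq,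
    coeffSum_eq_sum_range (Nat.lt_succ_of_le (natDegree_add_le p q)), ← Finset.sum_add_distrib]
  refine Finset.sum_le_sum fun i _ => ?_
  rw [coeff_add]
  exact Int.natAbs_add_le _ _

theorem coeffSum_sum_le {ι : Type*} (s : Finset ι) (p : ι → ℤ[X]) :
    coeffSum (∑ i ∈ s, p i) ≤ ∑ i ∈ s, coeffSum (p i) :=
  Finset.le_sum_of_subadditive coeffSum coeffSum_zero.le coeffSum_add_le s p

theorem coeffSum_C_mul_le (c : ℤ) (p : ℤ[X]) : coeffSum (C c * p) ≤ c.natAbs * coeffSum p := by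
  rw [coeffSum_eq_sum_range (Nat.lt_succ_of_le (natDegree_C_mul_le c p)),
    coeffSum_eq_sum_range p.natDegree.lt_succ_self, Finset.mul_sum]
  simp [Int.natAbs_mul]

theorem coeffSum_X_mul (p : ℤ[X]) : coeffSum (X * p) = coeffSum p := by
  have h : (X * p).natDegree < p.natDegree + 1 + 1 := by
    refine Nat.lt_succ_of_le (natDegree_mul_le.trans ?_)
    rw [natDegree_X, add_comm]
  rw [coeffSum_eq_sum_range h, coeffSum_eq_sum_range p.natDegree.lt_succ_self,
    Finset.sum_range_succ']
  simp

theorem coeffSum_mul_le (p q : ℤ[X]) : coeffSum (p * q) ≤ coeffSum p * coeffSum q := by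
  have hX : ∀ k, coeffSum (X ^ k * q) = coeffSum q := by
    intro k
    induction k with
    | zero => simp
    | succ k ih => rw [pow_succ', mul_assoc, coeffSum_X_mul, ih]
  conv_lhs => rw [p.as_sum_range_C_mul_X_pow, Finset.sum_mul]
  refine (coeffSum_sum_le _ _).trans ?_
  rw [coeffSum_eq_sum_range p.natDegree.lt_succ_self, Finset.sum_mul]
  refine Finset.sum_le_sum fun i _ => ?_
  rw [mul_assoc, ← hX i]
  exact coeffSum_C_mul_le _ _

theorem natDegree_polyEuler_le (p : ℤ[X]) : (polyEuler p).natDegree ≤ p.natDegree := by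
  rw [natDegree_le_iff_coeff_eq_zero]
  intro n hn
  rw [coeff_polyEuler, coeff_eq_zero_of_natDegree_lt hn, mul_zero]

theorem coeffSum_polyEuler_le (p : ℤ[X]) :
    coeffSum (polyEuler p) ≤ p.natDegree * coeffSum p := by
  rw [coeffSum_eq_sum_range (Nat.lt_succ_of_le (natDegree_polyEuler_le p)),
    coeffSum_eq_sum_range p.natDegree.lt_succ_self, Finset.mul_sum]
  refine Finset.sum_le_sum fun i hi => ?_
  rw [coeff_polyEuler, Int.natAbs_mul, Int.natAbs_natCast]
  exact Nat.mul_le_mul_right _ (Nat.lt_succ_iff.mp (Finset.mem_range.mp hi))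

theorem norm_aeval_le_coeffSum {p : ℤ[X]} {d : ℕ} (hd : p.natDegree ≤ d) {z : ℂ} {ρ : ℝ}
    (hρ : 1 ≤ ρ) (hz : ‖z‖ ≤ ρ) : ‖aeval z p‖ ≤ coeffSum p * ρ ^ d := by
  rw [aeval_eq_sum_range' (Nat.lt_succ_of_le hd), coeffSum_eq_sum_range (Nat.lt_succ_of_le hd)]
  push_cast
  rw [Finset.sum_mul]
  refine (norm_sum_le _ _).trans (Finset.sum_le_sum fun i hi => ?_)
  rw [zsmul_eq_mul, norm_mul, norm_pow, Complex.norm_intCast]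
  have h : ‖z‖ ^ i ≤ ρ ^ d := (pow_le_pow_left₀ (norm_nonneg z) hz i).trans
    (pow_le_pow_right₀ hρ (Nat.lt_succ_iff.mp (Finset.mem_range.mp hi)))
  rw [Nat.cast_natAbs, Int.cast_abs]
  gcongr

theorem coeffSum_le_of_forall_coeff_le {p : ℤ[X]} {n b : ℕ} (hn : p.natDegree < n)
    (hb : ∀ k, |p.coeff k| ≤ b) : coeffSum p ≤ n * b := by
  rw [coeffSum_eq_sum_range hn]
  refine (Finset.sum_le_card_nsmul _ _ b fun i _ => ?_).trans (by simp)
  have := hb i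
  rw [Int.abs_eq_natAbs] at this
  exact_mod_cast this

variable {m : ℕ} {a : Matrix (Fin m) (Fin m) ℤ[X]} {A B : ℕ}

theorem natDegree_formDeriv_le (hA : ∀ j i, (a j i).natDegree ≤ A) {P : Fin m → ℤ[X]} {d : ℕ}
    (hd : ∀ i, (P i).natDegree ≤ d) (i : Fin m) :
    (formDeriv polyEuler a P i).natDegree ≤ d + A := by
  refine natDegree_add_le_of_degree_le (((natDegree_polyEuler_le _).trans (hd i)).trans
    (Nat.le_add_right _ _)) (natDegree_sum_le_of_forall_le _ _ fun j _ => ?_)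
  exact natDegree_mul_le.trans (add_le_add (hd j) (hA j i))

theorem coeffSum_formDeriv_le (hB : ∀ i, ∑ j, coeffSum (a j i) ≤ B) {P : Fin m → ℤ[X]} {d h : ℕ}
    (hd : ∀ i, (P i).natDegree ≤ d) (hh : ∀ i, coeffSum (P i) ≤ h) (i : Fin m) :
    coeffSum (formDeriv polyEuler a P i) ≤ (d + B) * h := by
  refine (coeffSum_add_le _ _).trans ?_
  rw [add_mul]
  gcongr
  · exact (coeffSum_polyEuler_le _).trans (Nat.mul_le_mul (hd i) (hh i))
  · refine (coeffSum_sum_le _ _).trans ?_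
    calc ∑ j, coeffSum (P j * a j i) ≤ ∑ j, coeffSum (a j i) * h := by
          refine Finset.sum_le_sum fun j _ => (coeffSum_mul_le _ _).trans ?_
          rw [mul_comm]
          exact Nat.mul_le_mul_left _ (hh j)
      _ ≤ B * h := by
        rw [← Finset.sum_mul]
        exact Nat.mul_le_mul_right _ (hB i)

theorem natDegree_iterate_formDeriv_le (hA : ∀ j i, (a j i).natDegree ≤ A) {P : Fin m → ℤ[X]}
    {d : ℕ} (hd : ∀ i, (P i).natDegree ≤ d) (k : ℕ) :
    ∀ i, ((formDeriv polyEuler a)^[k] P i).natDegree ≤ d + A * k := by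
  induction k with
  | zero => simpa using hd
  | succ k ih =>
    intro i
    rw [Function.iterate_succ_apply', mul_add, mul_one, ← add_assoc]
    exact natDegree_formDeriv_le hA ih i

theorem coeffSum_iterate_formDeriv_le (hA : ∀ j i, (a j i).natDegree ≤ A)
    (hB : ∀ i, ∑ j, coeffSum (a j i) ≤ B) {P : Fin m → ℤ[X]} {d h : ℕ}
    (hd : ∀ i, (P i).natDegree ≤ d) (hh : ∀ i, coeffSum (P i) ≤ h) {N k : ℕ} (hk : k ≤ N) :
    ∀ i, coeffSum ((formDeriv polyEuler a)^[k] P i) ≤ (d + A * N + B) ^ k * h := by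
  induction k with
  | zero => simpa using hh
  | succ k ih =>
    intro i
    rw [Function.iterate_succ_apply']
    refine (coeffSum_formDeriv_le hB (natDegree_iterate_formDeriv_le hA hd k)
      (ih (Nat.le_of_succ_le hk)) i).trans ?_
    rw [pow_succ', mul_assoc]
    gcongr
    omega

end Height

section Wronskian

theorem formDeriv_single_mem_span {A ι : Type*} [CommRing A] [Fintype ι] [DecidableEq ι]
    (D : IntDerivation A) (a : Matrix ι ι A) (c : A) (S : Set (ι → A))
    (hS : ∀ i, c • Pi.single i 1 ∈ S) (j : ι) :
    c • formDeriv D a (Pi.single j 1) ∈ Submodule.span A S := by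
  rw [pi_eq_sum_univ' (formDeriv D a (Pi.single j 1)), Finset.smul_sum]
  refine Submodule.sum_mem _ fun i _ => ?_
  rw [smul_comm]
  refine Submodule.smul_mem _ _ (Submodule.subset_span ?_)
  convert hS i using 2

/-- The derivatives of the determinant of the iterated forms are combinations of these forms. -/
theorem iterate_det_smul_single_mem_span {A : Type*} [CommRing A] {m : ℕ}
    (D : IntDerivation A) (a : Matrix (Fin m) (Fin m) A) (P : Fin m → A) (s : ℕ) (j : Fin m) :
    D^[s] (Matrix.of fun k : Fin m => (formDeriv D a)^[k] P).det • Pi.single j (1 : A) ∈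
      Submodule.span A ({v | (∃ k < m + s, v = (formDeriv D a)^[k] P) ∨ ∃ u < s, ∃ i,
        v = D^[u] (Matrix.of fun k : Fin m => (formDeriv D a)^[k] P).det •
          Pi.single i (1 : A)} : Set (Fin m → A)) := by
  set N : Matrix (Fin m) (Fin m) A := Matrix.of fun k : Fin m => (formDeriv D a)^[k] P with hN
  set S : ℕ → Set (Fin m → A) := fun s => {v | (∃ k < m + s, v = (formDeriv D a)^[k] P) ∨
    ∃ u < s, ∃ i, v = D^[u] N.det • Pi.single i (1 : A)} with hS
  change _ ∈ Submodule.span A (S s)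
  have hmono : S s ⊆ S (s + 1) := by
    rintro v (⟨k, hk, rfl⟩ | ⟨u, hu, i, rfl⟩)
    · exact Or.inl ⟨k, by omega, rfl⟩
    · exact Or.inr ⟨u, by omega, i, rfl⟩
  induction s generalizing j with
  | zero =>
    have h : N.det • Pi.single j (1 : A) = ∑ k, N.adjugate j k • (formDeriv D a)^[k] P := by
      funext i
      have := congrFun (congrFun N.adjugate_mul j) i
      rw [Matrix.mul_apply] at this
      simp only [Finset.sum_apply, Pi.smul_apply, smul_eq_mul]
      rw [show ∑ k, N.adjugate j k * (formDeriv D a)^[k] P i = ∑ k, N.adjugate j k * N k i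
        from rfl, this]
      simp [Matrix.one_apply, Pi.single_apply, eq_comm]
    rw [Function.iterate_zero, id, h]
    exact Submodule.sum_mem _ fun k _ => Submodule.smul_mem _ _
      (Submodule.subset_span (Or.inl ⟨k, by omega, rfl⟩))
  | succ s ih =>
    have hm : S s ⊆ S (s + 1) := by
      rintro v (⟨k, hk, rfl⟩ | ⟨u, hu, i, rfl⟩)
      · exact Or.inl ⟨k, by omega, rfl⟩
      · exact Or.inr ⟨u, by omega, i, rfl⟩
    have hd : ∀ u < s + 1, ∀ i, D^[u] N.det • formDeriv D a (Pi.single i 1) ∈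
        Submodule.span A (S (s + 1)) := fun u hu i =>
      formDeriv_single_mem_span D a _ _ (fun l => Or.inr ⟨u, hu, l, rfl⟩) i
    have hL := formDeriv_mem_span (D := D) (a := a) (S := S s)
      (T := Submodule.span A (S (s + 1))) (hm.trans Submodule.subset_span) ?_ _
      (ih j (by
        rintro v (⟨k, hk, rfl⟩ | ⟨u, hu, i, rfl⟩)
        · exact Or.inl ⟨k, by omega, rfl⟩
        · exact Or.inr ⟨u, by omega, i, rfl⟩))
    · rw [formDeriv_smul, ← Function.iterate_succ_apply' D] at hL
      exact (Submodule.add_mem_iff_right _ (hd s (by omega) j)).mp hL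
    · rintro v (⟨k, hk, rfl⟩ | ⟨u, hu, i, rfl⟩)
      · rw [← Function.iterate_succ_apply' (formDeriv D a)]
        exact Submodule.subset_span (Or.inl ⟨k + 1, by omega, rfl⟩)
      · rw [formDeriv_smul, ← Function.iterate_succ_apply' D]
        exact Submodule.add_mem _ (hd u (by omega) i)
          (Submodule.subset_span (Or.inr ⟨u + 1, by omega, i, rfl⟩))

theorem iterate_det_eq_zero_of_forms_eq_zero {A K : Type*} [CommRing A] [Field K] {m : ℕ}
    (D : IntDerivation A) (a : Matrix (Fin m) (Fin m) A) (P : Fin m → A) (ψ : A →+* K)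
    {β : Fin m → K} (hβ : β ≠ 0) {t : ℕ}
    (h : ∀ k < m + t, ∑ i, ψ ((formDeriv D a)^[k] P i) * β i = 0) (s : ℕ) (hs : s ≤ t) :
    ψ (D^[s] (Matrix.of fun k : Fin m => (formDeriv D a)^[k] P).det) = 0 := by
  induction s using Nat.strong_induction_on with
  | _ s ih =>
    obtain ⟨j, hj⟩ := Function.ne_iff.mp hβ
    have key := iterate_det_smul_single_mem_span D a P s j
    have hz : ∀ v ∈ Submodule.span A ({v | (∃ k < m + s, v = (formDeriv D a)^[k] P) ∨
        ∃ u < s, ∃ i, v = D^[u] (Matrix.of fun k : Fin m => (formDeriv D a)^[k] P).det •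
          Pi.single i (1 : A)} : Set (Fin m → A)), ∑ i, ψ (v i) * β i = 0 := by
      intro v hv
      induction hv using Submodule.span_induction with
      | mem x hx =>
        rcases hx with ⟨k, hk, rfl⟩ | ⟨u, hu, i, rfl⟩
        · exact h k (by omega)
        · simp [ih u hu (by omega)]
      | zero => simp
      | add x y _ _ hx hy => simp [add_mul, Finset.sum_add_distrib, hx, hy]
      | smul c x _ hx => simp [mul_assoc, ← Finset.mul_sum, hx]
    have := hz _ key
    rw [Finset.sum_eq_single j (fun i _ hi => by simp [hi]) (by simp)] at this
    simpa using (mul_eq_zero.mp this).resolve_right hj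

theorem rootMultiplicity_le_natDegree {K : Type*} [Field K] (q : K[X]) (α : K) :
    rootMultiplicity α q ≤ q.natDegree := by
  classical
  rw [← count_roots]
  exact (Multiset.count_le_card _ _).trans (card_roots' q)

theorem eval_iterate_euler_ne_zero {K : Type*} [Field K] [CharZero K] {α : K} (hα : α ≠ 0)
    {q : K[X]} (hq : q ≠ 0) :
    eval α ((fun p => X * derivative p)^[rootMultiplicity α q] q) ≠ 0 := by
  generalize hr : rootMultiplicity α q = r
  induction r generalizing q with
  | zero =>
    intro h0
    exact ((rootMultiplicity_pos hq).mpr h0).ne' hr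
  | succ r ih =>
    have hroot : q.IsRoot α := (rootMultiplicity_pos hq).mp (by omega)
    have hd : derivative q ≠ 0 := by
      intro h0
      have h1 := derivative_eq_zero.mp h0
      have := rootMultiplicity_le_natDegree q α
      omega
    have hX : (X : K[X]) * derivative q ≠ 0 := mul_ne_zero X_ne_zero hd
    rw [Function.iterate_succ_apply]
    apply ih hX
    rw [rootMultiplicity_mul hX, derivative_rootMultiplicity_of_root hroot, hr,
      rootMultiplicity_eq_zero (by simpa using hα)]
    omega

theorem exists_aeval_iterate_polyEuler_ne_zero {K : Type*} [Field K] [CharZero K] {α : K}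
    (hα : α ≠ 0) {q : ℤ[X]} (hq : q ≠ 0) {M N : ℕ} (hM : X ^ M ∣ q) (hN : q.natDegree ≤ M + N) :
    ∃ s ≤ N, aeval α (polyEuler^[s] q) ≠ 0 := by
  obtain ⟨q', rfl⟩ := hM
  have hq' : q' ≠ 0 := right_ne_zero_of_mul hq
  have hinj : Function.Injective (Int.castRingHom K) := Int.cast_injective
  have hiter : ∀ s (p : ℤ[X]), (polyEuler^[s] p).map (Int.castRingHom K) =
      (fun p => X * derivative p)^[s] (p.map (Int.castRingHom K)) := by
    intro s p
    induction s generalizing p with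
    | zero => rfl
    | succ s ih =>
      rw [Function.iterate_succ_apply, Function.iterate_succ_apply, ih, polyEuler_apply]
      simp [Polynomial.map_mul, derivative_map]
  have hne : (X ^ M * q').map (Int.castRingHom K) ≠ 0 := (Polynomial.map_ne_zero_iff hinj).mpr hq
  refine ⟨rootMultiplicity α ((X ^ M * q').map (Int.castRingHom K)), ?_, ?_⟩
  · rw [Polynomial.map_mul] at hne ⊢
    rw [rootMultiplicity_mul hne, rootMultiplicity_eq_zero (by simp [hα]),
      zero_add]
    refine (rootMultiplicity_le_natDegree _ _).trans (natDegree_map_le.trans ?_)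
    rw [natDegree_X_pow_mul _ hq'] at hN
    omega
  · have := eval_iterate_euler_ne_zero hα hne
    rw [← hiter] at this
    rwa [aeval_def, eval₂_eq_eval_map]

/-- Among the first derivatives of a form with non-zero determinant, one does not vanish. -/
theorem exists_form_ne_zero {K : Type*} [Field K] [CharZero K] {m : ℕ}
    (a : Matrix (Fin m) (Fin m) ℤ[X]) (P : Fin m → ℤ[X]) {α : K} (hα : α ≠ 0)
    {β : Fin m → K} (hβ : β ≠ 0) {M N : ℕ}
    (hdet : (Matrix.of fun k : Fin m => (formDeriv polyEuler a)^[k] P).det ≠ 0)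
    (hM : X ^ M ∣ (Matrix.of fun k : Fin m => (formDeriv polyEuler a)^[k] P).det)
    (hN : (Matrix.of fun k : Fin m => (formDeriv polyEuler a)^[k] P).det.natDegree ≤ M + N) :
    ∃ k ≤ m + N, ∑ i, aeval α ((formDeriv polyEuler a)^[k] P i) * β i ≠ 0 := by
  obtain ⟨s, hs, hne⟩ := exists_aeval_iterate_polyEuler_ne_zero hα hdet hM hN
  by_contra! h
  exact hne (iterate_det_eq_zero_of_forms_eq_zero polyEuler a P (aeval α).toRingHom hβ (t := s)
    (fun k hk => h k (by omega)) s le_rfl)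

/-- The order of vanishing of a form is inherited by the determinant of its derivatives. -/
theorem X_pow_dvd_det {m : ℕ} {φ : Fin m → PowerSeries ℚ}
    (a : Matrix (Fin m) (Fin m) ℤ[X])
    (hφ : ∀ j, seriesEuler (φ j) = ∑ i, polyToSeries (a j i) * φ i) {j₀ : Fin m}
    (hj₀ : PowerSeries.constantCoeff (φ j₀) ≠ 0) (P : Fin m → ℤ[X]) {M : ℕ}
    (hR : PowerSeries.X ^ M ∣ ∑ i, polyToSeries (P i) * φ i) :
    X ^ M ∣ (Matrix.of fun k : Fin m => (formDeriv polyEuler a)^[k] P).det := by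
  set N : Matrix (Fin m) (Fin m) ℤ[X] :=
    Matrix.of fun k : Fin m => (formDeriv polyEuler a)^[k] P with hN
  have hk : ∀ k, PowerSeries.X ^ M ∣ ∑ i, polyToSeries ((formDeriv polyEuler a)^[k] P i) * φ i := by
    intro k
    rw [sum_iterate_formDeriv_mul polyToSeries seriesEuler_polyToSeries φ hφ]
    rw [PowerSeries.X_pow_dvd_iff] at hR ⊢
    intro l hl
    rw [coeff_iterate_seriesEuler, hR l hl, mul_zero]
  have hcr : polyToSeries N.det * φ j₀ =
      ∑ k, polyToSeries (N.adjugate j₀ k) * ∑ i, polyToSeries (N k i) * φ i := by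
    simp only [Finset.mul_sum]
    rw [Finset.sum_comm]
    have : ∀ i, ∑ k, polyToSeries (N.adjugate j₀ k) * (polyToSeries (N k i) * φ i) =
        polyToSeries ((N.adjugate * N) j₀ i) * φ i := by
      intro i
      rw [Matrix.mul_apply, map_sum, Finset.sum_mul]
      exact Finset.sum_congr rfl fun k _ => by rw [map_mul, mul_assoc]
    simp only [this, Matrix.adjugate_mul]
    rw [Finset.sum_eq_single j₀ (fun i _ hi => by simp [hi.symm]) (by simp)]
    simp
  have hu : IsUnit (φ j₀) := PowerSeries.isUnit_iff_constantCoeff.mpr hj₀.isUnit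
  have hdvd : PowerSeries.X ^ M ∣ polyToSeries N.det := by
    rw [← hu.dvd_mul_right, hcr]
    exact Finset.dvd_sum fun k _ => (hk k).mul_left _
  rw [X_pow_dvd_iff]
  rw [PowerSeries.X_pow_dvd_iff] at hdvd
  intro l hl
  have := hdvd l hl
  rw [coeff_polyToSeries] at this
  exact_mod_cast this

theorem natDegree_det_le {m d : ℕ} (N : Matrix (Fin m) (Fin m) ℤ[X])
    (h : ∀ k i, (N k i).natDegree ≤ d) : N.det.natDegree ≤ m * d := by
  rw [Matrix.det_apply]
  refine natDegree_sum_le_of_forall_le _ _ fun s _ => ?_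
  refine (natDegree_smul_le _ _).trans ((natDegree_prod_le _ _).trans ?_)
  refine (Finset.sum_le_card_nsmul _ _ d fun i _ => h _ _).trans ?_
  simp

end Wronskian

section Engine

theorem exists_factorial_growth_bound (c : ℕ) {C : ℕ} (hC : 1 ≤ C) :
    ∃ E : ℝ, 1 ≤ E ∧ ∀ n : ℕ, 1 ≤ n → ∀ k ≤ n + c,
      ((2 * n).factorial : ℝ) * ((C : ℝ) * n) ^ k ≤ (n.factorial : ℝ) ^ 3 * E ^ n := by
  have hC1 : (1 : ℝ) ≤ C := by exact_mod_cast hC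
  refine ⟨4 * (C ^ (1 + c) * (Real.exp 1 * 2 ^ c)), ?_, fun n hn k hk => ?_⟩
  · have h1 : (1 : ℝ) ≤ C ^ (1 + c) := one_le_pow₀ hC1
    have h2 : (1 : ℝ) ≤ Real.exp 1 * 2 ^ c :=
      one_le_mul_of_one_le_of_one_le (Real.one_le_exp zero_le_one) (one_le_pow₀ one_le_two)
    nlinarith [one_le_mul_of_one_le_of_one_le h1 h2]
  · have hn1 : (1 : ℝ) ≤ n := by exact_mod_cast hn
    have hA : ((2 * n).factorial : ℝ) ≤ 4 ^ n * (n.factorial : ℝ) ^ 2 := by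
      have h1 : (2 * n).factorial = n.centralBinom * n.factorial ^ 2 := by
        have := Nat.choose_mul_factorial_mul_factorial (show n ≤ 2 * n by omega)
        rw [Nat.centralBinom, ← this, show 2 * n - n = n by omega]
        ring
      rw [h1]
      push_cast
      gcongr
      exact_mod_cast n.centralBinom_le_four_pow
    have hB : ((C : ℝ) * n) ^ k ≤ n.factorial * (C ^ (1 + c) * (Real.exp 1 * 2 ^ c)) ^ n := by
      calc ((C : ℝ) * n) ^ k ≤ (C * n) ^ (n + c) :=
            pow_le_pow_right₀ (one_le_mul_of_one_le_of_one_le hC1 hn1) hk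
        _ = C ^ (n + c) * (n ^ n * n ^ c) := by rw [mul_pow, pow_add (n : ℝ)]
        _ ≤ C ^ ((1 + c) * n) * ((n.factorial * Real.exp 1 ^ n) * ((2 ^ c) ^ n)) := by
          gcongr
          · nlinarith
          · have := Real.pow_div_factorial_le_exp (n : ℝ) (by positivity) n
            rw [div_le_iff₀ (by positivity)] at this
            rw [← Real.exp_nat_mul, mul_one, mul_comm]
            exact this
          · rw [← pow_mul, mul_comm c n, pow_mul]
            gcongr
            exact_mod_cast n.lt_two_pow_self.le
        _ = _ := by
          rw [pow_mul, mul_pow, mul_pow]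
          ring
    calc _ ≤ (4 ^ n * (n.factorial : ℝ) ^ 2) *
          (n.factorial * (C ^ (1 + c) * (Real.exp 1 * 2 ^ c)) ^ n) := by gcongr
      _ = _ := by
        rw [mul_pow 4]
        ring

theorem exists_forms {m : ℕ} {φ : Fin m → PowerSeries ℚ} (hE : ∀ i, IsExpType (φ i))
    (a : Matrix (Fin m) (Fin m) ℤ[X])
    (hφ : ∀ j, seriesEuler (φ j) = ∑ i, polyToSeries (a j i) * φ i) {j₀ : Fin m}
    (hj₀ : PowerSeries.constantCoeff (φ j₀) ≠ 0)
    (hZ : ∃ n₀, ∀ n ≥ n₀, ∀ P : Fin m → ℤ[X], P ≠ 0 → (∀ i, (P i).natDegree < 2 * n) →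
      PowerSeries.X ^ ((2 * m - 1) * n) ∣ ∑ i, polyToSeries (P i) * φ i →
      (Matrix.of fun k : Fin m => (formDeriv polyEuler a)^[k] P).det ≠ 0)
    {K : Type*} [Field K] [CharZero K] {α : K} (hα : α ≠ 0) {β : Fin m → K} (hβ : β ≠ 0) (z : ℂ) :
    ∃ (C : ℕ) (E : ℝ) (n₀ : ℕ), 1 ≤ E ∧ ∀ n ≥ n₀, ∃ Q : Fin m → ℤ[X],
      (∀ i, (Q i).natDegree ≤ C * n) ∧
      (∀ i, (coeffSum (Q i) : ℝ) ≤ (n.factorial : ℝ) ^ 3 * E ^ n) ∧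
      ∑ i, aeval α (Q i) * β i ≠ 0 ∧
      ‖seriesEval z (∑ i, polyToSeries (Q i) * φ i)‖ * ((2 * m - 1) * n).factorial ≤
        (n.factorial : ℝ) ^ 3 * E ^ n := by
  have hm : 1 ≤ m := Fin.pos j₀
  obtain ⟨C, hC, haux⟩ := exists_auxiliary_form hm hE
  obtain ⟨n₀, hn₀⟩ := hZ
  set A := ∑ j, ∑ i, (a j i).natDegree with hAdef
  set B := ∑ i, ∑ j, coeffSum (a j i) with hBdef
  have hA : ∀ j i, (a j i).natDegree ≤ A := fun j i =>
    (Finset.single_le_sum (f := fun i => (a j i).natDegree) (fun _ _ => Nat.zero_le _)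
      (Finset.mem_univ i)).trans (Finset.single_le_sum (f := fun j => ∑ i, (a j i).natDegree)
      (fun _ _ => Nat.zero_le _) (Finset.mem_univ j))
  have hB : ∀ i, ∑ j, coeffSum (a j i) ≤ B := fun i =>
    Finset.single_le_sum (f := fun i => ∑ j, coeffSum (a j i)) (fun _ _ => Nat.zero_le _)
      (Finset.mem_univ i)
  set c := m + m * (A * m) with hc
  set G := 2 + A * (1 + c) + B + (1 + c) with hG
  obtain ⟨E, hE1, hEb⟩ := exists_factorial_growth_bound c (show 1 ≤ G by omega)
  set Y := Real.exp 1 * C * ‖z‖ with hY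
  have hY0 : 0 ≤ Y := by positivity
  have hC1 : (1 : ℝ) ≤ C := by exact_mod_cast hC
  have hexp : 1 ≤ Real.exp Y := Real.one_le_exp hY0
  set E' := E * (4 * C * (Real.exp Y * (1 + Y) ^ (2 * m - 1))) with hE'
  have hW : 1 ≤ Real.exp Y * (1 + Y) ^ (2 * m - 1) :=
    one_le_mul_of_one_le_of_one_le hexp (one_le_pow₀ (by linarith))
  have h4C : (1 : ℝ) ≤ 4 * C := by linarith
  refine ⟨G, E', max n₀ 1, one_le_mul_of_one_le_of_one_le hE1
    (one_le_mul_of_one_le_of_one_le h4C hW), fun n hn => ?_⟩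
  have hn1 : 1 ≤ n := (le_max_right _ _).trans hn
  obtain ⟨P, hP0, hPd, hPc, r, hr⟩ := haux n hn1
  have hX : PowerSeries.X ^ ((2 * m - 1) * n) ∣ ∑ i, polyToSeries (P i) * φ i := by
    rw [PowerSeries.X_pow_dvd_iff]
    intro l hl
    have h1 := (hr l).1
    rw [(hr l).2.1 hl, Int.cast_zero, mul_zero] at h1
    exact (mul_eq_zero.mp h1).resolve_right (by exact_mod_cast l.factorial_ne_zero)
  have hdet := hn₀ n ((le_max_left _ _).trans hn) P hP0 hPd hX
  have hdeg : (Matrix.of fun k : Fin m => (formDeriv polyEuler a)^[k] P).det.natDegree ≤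
      (2 * m - 1) * n + (n + m * (A * m)) := by
    refine (natDegree_det_le _ (d := 2 * n + A * m) fun k i =>
      (natDegree_iterate_formDeriv_le hA (fun i => (hPd i).le) k i).trans ?_).trans ?_
    · gcongr
      exact k.2.le
    · obtain ⟨m', rfl⟩ : ∃ m', m = m' + 1 := ⟨m - 1, by omega⟩
      rw [show 2 * (m' + 1) - 1 = 2 * m' + 1 by omega]
      apply le_of_eq
      ring
  obtain ⟨k, hk, hne⟩ := exists_form_ne_zero a P hα hβ hdet (X_pow_dvd_det a hφ hj₀ P hX) hdeg
  have hkc : k ≤ n + c := by omega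
  have hkn : k ≤ (1 + c) * n := by nlinarith
  have hkA : A * k ≤ A * (1 + c) * n := by rw [mul_assoc]; exact Nat.mul_le_mul_left _ hkn
  have hEn : E ^ n * (4 * C) ^ n ≤ E' ^ n := by
    rw [hE', ← mul_assoc, mul_pow (E * (4 * C)), mul_pow E]
    exact le_mul_of_one_le_right (by positivity) (one_le_pow₀ hW)
  refine ⟨(formDeriv polyEuler a)^[k] P, fun i => ?_, fun i => ?_, hne, ?_⟩
  · refine (natDegree_iterate_formDeriv_le hA (fun i => (hPd i).le) k i).trans ?_
    rw [hG]
    nlinarith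
  · have h1 := coeffSum_iterate_formDeriv_le hA hB (P := P) (d := 2 * n)
      (h := 2 * n * ((2 * n).factorial * C ^ n)) (fun i => (hPd i).le)
      (fun i => coeffSum_le_of_forall_coeff_le (hPd i) (by exact_mod_cast hPc i)) le_rfl i (k := k)
    have h2 : 2 * n + A * k + B ≤ G * n := by rw [hG]; nlinarith
    have h3 : (2 * n : ℝ) ≤ 4 ^ n := by
      have := n.lt_two_pow_self
      have h4 : 2 * n ≤ 4 ^ n := by
        rw [show 4 ^ n = 2 ^ n * 2 ^ n by rw [← mul_pow]; norm_num]
        exact Nat.mul_le_mul (by simpa using Nat.pow_le_pow_right two_pos hn1) this.le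
      exact_mod_cast h4
    calc (coeffSum ((formDeriv polyEuler a)^[k] P i) : ℝ)
        ≤ (2 * n + A * k + B : ℕ) ^ k * (2 * n * ((2 * n).factorial * C ^ n)) := by
          exact_mod_cast h1
      _ ≤ (G * n : ℕ) ^ k * (4 ^ n * ((2 * n).factorial * C ^ n)) := by gcongr
      _ = ((2 * n).factorial * ((G : ℝ) * n) ^ k) * (4 * C) ^ n := by
          push_cast
          ring
      _ ≤ (n.factorial : ℝ) ^ 3 * E ^ n * (4 * C) ^ n := by
          refine mul_le_mul_of_nonneg_right (hEb n hn1 k hkc) ?_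
          positivity
      _ ≤ _ := by
          rw [mul_assoc]
          gcongr
  · rw [sum_iterate_formDeriv_mul polyToSeries seriesEuler_polyToSeries φ hφ]
    have h1 := norm_seriesEval_iterate_le (R := ∑ i, polyToSeries (P i) * φ i) (r := r)
      (B := (C : ℝ) ^ n) (by positivity) (C := C) (M := (2 * m - 1) * n) (N := (2 * n).factorial)
      (fun l => (hr l).1) (fun l hl => (hr l).2.1 hl) (fun l => by exact_mod_cast (hr l).2.2) z k
    rw [← hY] at h1
    have hkf : (k.factorial : ℝ) ≤ (G * n) ^ k := by
      have h2 : k.factorial ≤ (G * n) ^ k :=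
        k.factorial_le_pow.trans (Nat.pow_le_pow_left (hkn.trans (by
          gcongr
          omega)) _)
      exact_mod_cast h2
    calc _ ≤ ((2 * n).factorial * k.factorial * (C : ℝ) ^ n * Y ^ ((2 * m - 1) * n) /
            ((2 * m - 1) * n).factorial * Real.exp Y) * ((2 * m - 1) * n).factorial := by
          gcongr
      _ = (2 * n).factorial * k.factorial * ((C : ℝ) ^ n * (Real.exp Y *
            (Y ^ (2 * m - 1)) ^ n)) := by
          have : (((2 * m - 1) * n).factorial : ℝ) ≠ 0 := by positivity
          rw [← pow_mul]
          field_simp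
      _ ≤ (2 * n).factorial * (G * n) ^ k * ((4 * C : ℝ) ^ n * (Real.exp Y ^ n *
            ((1 + Y) ^ (2 * m - 1)) ^ n)) := by
          gcongr
          · linarith
          · exact le_self_pow₀ hexp (by omega)
          · linarith
      _ ≤ (n.factorial : ℝ) ^ 3 * E ^ n * ((4 * C : ℝ) ^ n * (Real.exp Y ^ n *
            ((1 + Y) ^ (2 * m - 1)) ^ n)) := by
          refine mul_le_mul_of_nonneg_right (hEb n hn1 k hkc) ?_
          positivity
      _ = _ := by
          rw [hE', mul_pow E, mul_pow (4 * (C : ℝ)), mul_pow (Real.exp Y)]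
          ring

end Engine

section NumberFieldEngine

theorem one_le_prod_norm_embeddings {K : Type*} [Field K] [NumberField K] {x : K} (hx : x ≠ 0)
    (hi : IsIntegral ℤ x) : 1 ≤ ∏ τ : K →ₐ[ℚ] ℂ, ‖τ x‖ := by
  obtain ⟨y, hy⟩ := IsIntegrallyClosed.isIntegral_iff.mp (Algebra.isIntegral_norm ℚ hi)
  have hy0 : y ≠ 0 := by
    rintro rfl
    rw [map_zero] at hy
    exact hx (Algebra.norm_eq_zero_iff.mp hy.symm)
  rw [← norm_prod, ← Algebra.norm_eq_prod_embeddings ℚ ℂ x, ← hy]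
  simp only [algebraMap_int_eq, eq_intCast, eq_ratCast, Rat.cast_intCast, Complex.norm_intCast]
  exact_mod_cast Int.one_le_abs hy0

theorem isIntegral_pow_mul_aeval {K : Type*} [Field K] {D : ℤ} {α : K}
    (hα : IsIntegral ℤ (D * α)) {p : ℤ[X]} {N : ℕ} (hp : p.natDegree ≤ N) :
    IsIntegral ℤ ((D : K) ^ N * aeval α p) := by
  rw [aeval_eq_sum_range' (Nat.lt_succ_of_le hp), Finset.mul_sum]
  refine IsIntegral.sum _ fun i hi => ?_
  have hi' : i ≤ N := Nat.lt_succ_iff.mp (Finset.mem_range.mp hi)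
  have : (D : K) ^ N * (p.coeff i • α ^ i) = ((p.coeff i * D ^ (N - i) : ℤ) : K) * (D * α) ^ i := by
    conv_lhs => rw [← Nat.sub_add_cancel hi', pow_add, zsmul_eq_mul]
    push_cast
    ring
  rw [this]
  exact (isIntegral_algebraMap (R := ℤ) (A := K)).mul (hα.pow i)

theorem factorial_pow_le_factorial_mul (s n : ℕ) : n.factorial ^ s ≤ (s * n).factorial := by
  have := Nat.le_of_dvd (Nat.factorial_pos _)
    (Nat.prod_factorial_dvd_factorial_sum (Finset.range s) fun _ => n)
  simpa using this

theorem exists_pow_lt_factorial (W : ℝ) (n₀ : ℕ) : ∃ n ≥ n₀, W ^ n < n.factorial := by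
  have h := (FloorSemiring.tendsto_pow_div_factorial_atTop W).eventually_lt_const one_pos
  obtain ⟨n, hn, hn'⟩ := (h.and (Filter.eventually_ge_atTop n₀)).exists
  exact ⟨n, hn', by rwa [div_lt_one (by positivity)] at hn⟩

/-- Siegel's method: a non-degenerate system of exponential type functions satisfying linear
differential equations cannot take, up to a common factor, too many values in a number field
at a non-zero algebraic point. -/
theorem siegel_method {m : ℕ} {φ : Fin m → PowerSeries ℚ} (hE : ∀ i, IsExpType (φ i))
    (a : Matrix (Fin m) (Fin m) ℤ[X])
    (hφ : ∀ j, seriesEuler (φ j) = ∑ i, polyToSeries (a j i) * φ i) {j₀ : Fin m}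
    (hj₀ : PowerSeries.constantCoeff (φ j₀) ≠ 0)
    (hZ : ∃ n₀, ∀ n ≥ n₀, ∀ P : Fin m → ℤ[X], P ≠ 0 → (∀ i, (P i).natDegree < 2 * n) →
      PowerSeries.X ^ ((2 * m - 1) * n) ∣ ∑ i, polyToSeries (P i) * φ i →
      (Matrix.of fun k : Fin m => (formDeriv polyEuler a)^[k] P).det ≠ 0)
    {K : Type*} [Field K] [NumberField K] (σ : K →ₐ[ℚ] ℂ) {α : K} (hα : α ≠ 0) {β : Fin m → K}
    (hβ : β ≠ 0) {l : ℂ} (hl : l ≠ 0) (hval : ∀ i, seriesEval (σ α) (φ i) = l * σ (β i))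
    (hm : 3 * Module.finrank ℚ K + 2 ≤ 2 * m) : False := by
  classical
  obtain ⟨C, E, n₀, hE1, hforms⟩ := exists_forms hE a hφ hj₀ hZ hα hβ (σ α)
  obtain ⟨D, hD0, hD⟩ := exists_integral_multiples ℤ ℚ (insert α (Finset.univ.image β))
  simp only [zsmul_eq_mul] at hD
  have hDα : IsIntegral ℤ (D * α) := hD α (Finset.mem_insert_self _ _)
  have hDβ : ∀ i, IsIntegral ℤ (D * β i) := fun i =>
    hD _ (Finset.mem_insert_of_mem (Finset.mem_image_of_mem _ (Finset.mem_univ i)))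
  have hD1 : (1 : ℝ) ≤ |(D : ℝ)| := by exact_mod_cast Int.one_le_abs hD0
  set ρ : ℝ := 1 + ∑ τ : K →ₐ[ℚ] ℂ, ‖τ α‖ with hρ
  have hρ1 : 1 ≤ ρ := le_add_of_nonneg_right (Finset.sum_nonneg fun _ _ => norm_nonneg _)
  have hρτ : ∀ τ : K →ₐ[ℚ] ℂ, ‖τ α‖ ≤ ρ := fun τ =>
    (Finset.single_le_sum (f := fun τ : K →ₐ[ℚ] ℂ => ‖τ α‖) (fun _ _ => norm_nonneg _)
      (Finset.mem_univ τ)).trans (by rw [hρ]; linarith)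
  set b : ℝ := 1 + ∑ τ : K →ₐ[ℚ] ℂ, ∑ i, ‖τ (β i)‖ with hb
  have hb1 : 1 ≤ b := le_add_of_nonneg_right
    (Finset.sum_nonneg fun _ _ => Finset.sum_nonneg fun _ _ => norm_nonneg _)
  have hbτ : ∀ τ : K →ₐ[ℚ] ℂ, ∑ i, ‖τ (β i)‖ ≤ b := fun τ =>
    (Finset.single_le_sum (f := fun τ : K →ₐ[ℚ] ℂ => ∑ i, ‖τ (β i)‖)
      (fun _ _ => Finset.sum_nonneg fun _ _ => norm_nonneg _)
      (Finset.mem_univ τ)).trans (by rw [hb]; linarith)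
  set L : ℝ := 1 + ‖l‖⁻¹ with hL
  have hL1 : 1 ≤ L := le_add_of_nonneg_right (inv_nonneg.mpr (norm_nonneg _))
  set W := |(D : ℝ)| ^ (C + 1) * (E * (ρ ^ C * b * L)) with hW
  have hρC : 1 ≤ ρ ^ C := one_le_pow₀ hρ1
  have hρb : 1 ≤ ρ ^ C * b := one_le_mul_of_one_le_of_one_le hρC hb1
  obtain ⟨n, hn, hlt⟩ := exists_pow_lt_factorial (W ^ Module.finrank ℚ K) (max n₀ 1)
  have hn1 : 1 ≤ n := (le_max_right _ _).trans hn
  obtain ⟨Q, hQd, hQc, hT, hR⟩ := hforms n ((le_max_left _ _).trans hn)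
  set F : ℝ := (n.factorial : ℝ) ^ 3 * E ^ n with hF
  have hF0 : 0 ≤ F := by positivity
  set T := ∑ i, aeval α (Q i) * β i with hTdef
  set x := (D : K) ^ (C * n + 1) * T with hx
  have hx0 : x ≠ 0 := mul_ne_zero (pow_ne_zero _ (Int.cast_ne_zero.mpr hD0)) hT
  have hxi : IsIntegral ℤ x := by
    rw [hx, hTdef, Finset.mul_sum]
    refine IsIntegral.sum _ fun i _ => ?_
    rw [show (D : K) ^ (C * n + 1) * (aeval α (Q i) * β i) =
      ((D : K) ^ (C * n) * aeval α (Q i)) * (D * β i) by ring]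
    exact (isIntegral_pow_mul_aeval hDα (hQd i)).mul (hDβ i)
  have hτx : ∀ τ : K →ₐ[ℚ] ℂ, ‖τ x‖ ≤ (|(D : ℝ)| ^ (C + 1)) ^ n * ‖τ T‖ := by
    intro τ
    rw [hx, map_mul, norm_mul, map_pow, map_intCast, norm_pow, Complex.norm_intCast, ← pow_mul]
    refine mul_le_mul_of_nonneg_right (pow_le_pow_right₀ hD1 ?_) (norm_nonneg _)
    rw [add_mul]
    omega
  have hcoe : ∀ (τ : K →ₐ[ℚ] ℂ) (p : ℤ[X]), τ (aeval α p) = aeval (τ α) p := fun τ p => by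
    rw [aeval_def, aeval_def, ← RingHom.coe_coe, hom_eval₂]
    congr 1
    exact RingHom.ext_int _ _
  have hW3 : (n.factorial : ℝ) ^ 3 * W ^ n =
      (|(D : ℝ)| ^ (C + 1)) ^ n * (F * ((ρ ^ C * b) ^ n * L ^ n)) := by
    rw [hW, hF, mul_pow (_ ^ (C + 1)), mul_pow E, mul_pow _ L]
    ring
  have hall : ∀ τ : K →ₐ[ℚ] ℂ, ‖τ x‖ ≤ (n.factorial : ℝ) ^ 3 * W ^ n := by
    intro τ
    refine (hτx τ).trans ?_
    rw [hW3]
    gcongr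
    calc ‖τ T‖ = ‖∑ i, aeval (τ α) (Q i) * τ (β i)‖ := by simp [hTdef, hcoe]
      _ ≤ ∑ i, F * ρ ^ (C * n) * ‖τ (β i)‖ := by
        refine (norm_sum_le _ _).trans (Finset.sum_le_sum fun i _ => ?_)
        rw [norm_mul]
        gcongr
        refine (norm_aeval_le_coeffSum (hQd i) hρ1 (hρτ τ)).trans ?_
        gcongr
        exact hQc i
      _ ≤ F * ρ ^ (C * n) * b := by
        rw [← Finset.mul_sum]
        gcongr
        exact hbτ τ
      _ ≤ F * ((ρ ^ C * b) ^ n * L ^ n) := by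
        rw [mul_assoc, pow_mul, mul_pow, mul_assoc (_ ^ n)]
        gcongr
        refine le_trans ?_ (le_mul_of_one_le_right (by positivity) (one_le_pow₀ hL1))
        exact le_self_pow₀ hb1 (by omega)
  have hσ : ‖σ x‖ * ((2 * m - 1) * n).factorial ≤ (n.factorial : ℝ) ^ 3 * W ^ n := by
    rw [seriesEval_form hE] at hR
    have h1 : ∑ i, aeval (σ α) (Q i) * seriesEval (σ α) (φ i) = l * σ T := by
      simp only [hval, hTdef, map_sum, map_mul, hcoe, Finset.mul_sum]
      exact Finset.sum_congr rfl fun i _ => by ring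
    rw [h1, norm_mul] at hR
    have hl0 : 0 < ‖l‖ := norm_pos_iff.mpr hl
    rw [hW3]
    calc _ ≤ (|(D : ℝ)| ^ (C + 1)) ^ n * ‖σ T‖ * ((2 * m - 1) * n).factorial := by
          gcongr
          exact hτx σ
      _ = (|(D : ℝ)| ^ (C + 1)) ^ n * ((‖l‖ * ‖σ T‖ * ((2 * m - 1) * n).factorial) * ‖l‖⁻¹) := by
          field_simp
      _ ≤ (|(D : ℝ)| ^ (C + 1)) ^ n * (F * ((ρ ^ C * b) ^ n * L ^ n)) := by
          gcongr
          refine le_trans ?_ (le_mul_of_one_le_left (by positivity) (one_le_pow₀ hρb))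
          refine le_trans ?_ (le_self_pow₀ hL1 (by omega))
          rw [hL]
          linarith
  have hprod := one_le_prod_norm_embeddings hx0 hxi
  have hcard : (Finset.univ.erase σ).card + 1 = Module.finrank ℚ K := by
    rw [Finset.card_erase_add_one (Finset.mem_univ σ), Finset.card_univ, AlgHom.card]
  rw [← Finset.mul_prod_erase _ _ (Finset.mem_univ σ)] at hprod
  have hbig : (((2 * m - 1) * n).factorial : ℝ) ≤
      ((n.factorial : ℝ) ^ 3 * W ^ n) ^ Module.finrank ℚ K := by
    calc (((2 * m - 1) * n).factorial : ℝ)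
        ≤ ((2 * m - 1) * n).factorial * (‖σ x‖ * ∏ τ ∈ Finset.univ.erase σ, ‖τ x‖) :=
          le_mul_of_one_le_right (by positivity) hprod
      _ = (‖σ x‖ * ((2 * m - 1) * n).factorial) * ∏ τ ∈ Finset.univ.erase σ, ‖τ x‖ := by ring
      _ ≤ ((n.factorial : ℝ) ^ 3 * W ^ n) *
          ∏ _τ ∈ Finset.univ.erase σ, ((n.factorial : ℝ) ^ 3 * W ^ n) := by
          gcongr with τ
          exact hall τ
      _ = _ := by rw [Finset.prod_const, ← pow_succ', hcard]
  have hsm : (n.factorial : ℝ) ^ (3 * Module.finrank ℚ K) * n.factorial ≤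
      ((2 * m - 1) * n).factorial := by
    rw [← pow_succ]
    have h1 : n.factorial ^ (3 * Module.finrank ℚ K + 1) ≤ ((2 * m - 1) * n).factorial :=
      (Nat.pow_le_pow_right n.factorial_pos (by omega)).trans (factorial_pow_le_factorial_mul _ _)
    exact_mod_cast h1
  have hfin := hsm.trans hbig
  rw [mul_pow, ← pow_mul, ← pow_mul, mul_comm n, pow_mul W] at hfin
  exact absurd (le_of_mul_le_mul_left hfin (by positivity)) (not_le.mpr hlt)

end NumberFieldEngine

section Exponential

/-- The power series of `exp (u x)`. -/
noncomputable def expSeries (u : ℕ) : PowerSeries ℚ :=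
  PowerSeries.mk fun n => (u : ℚ) ^ n / n.factorial

/-- The matrix of the differential system satisfied by the functions `exp (u i * x)`. -/
noncomputable def expSystem {m : ℕ} (u : Fin m → ℕ) : Matrix (Fin m) (Fin m) ℤ[X] :=
  Matrix.diagonal fun i => (u i : ℤ[X]) * X

theorem isExpType_expSeries (u : ℕ) : IsExpType (expSeries u) := by
  refine ⟨u, fun n => ⟨(u : ℤ) ^ n, ?_, ?_⟩⟩
  · have : (n.factorial : ℚ) ≠ 0 := by exact_mod_cast n.factorial_ne_zero
    rw [expSeries, PowerSeries.coeff_mk]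
    push_cast
    field_simp
  · rw [abs_pow, Nat.abs_cast]

theorem constantCoeff_expSeries (u : ℕ) : PowerSeries.constantCoeff (expSeries u) = 1 := by
  rw [← PowerSeries.coeff_zero_eq_constantCoeff_apply, expSeries, PowerSeries.coeff_mk]
  simp

theorem seriesEuler_expSeries {m : ℕ} (u : Fin m → ℕ) (j : Fin m) :
    seriesEuler (expSeries (u j)) =
      ∑ i, polyToSeries (expSystem u j i) * expSeries (u i) := by
  rw [Finset.sum_eq_single j (fun i _ hi => by simp [expSystem, hi.symm]) (by simp)]
  rw [expSystem, Matrix.diagonal_apply_eq, map_mul, map_natCast, polyToSeries_X]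
  ext n
  rw [coeff_seriesEuler, mul_assoc, ← nsmul_eq_mul (u j), map_nsmul, nsmul_eq_mul]
  cases n with
  | zero => simp
  | succ n =>
    rw [PowerSeries.coeff_succ_X_mul, expSeries, PowerSeries.coeff_mk, PowerSeries.coeff_mk,
      Nat.factorial_succ]
    have : (n.factorial : ℚ) ≠ 0 := by exact_mod_cast n.factorial_ne_zero
    push_cast
    field_simp
    ring

theorem formDeriv_expSystem_apply {m : ℕ} (u : Fin m → ℕ) (P : Fin m → ℤ[X]) (i : Fin m) :
    formDeriv polyEuler (expSystem u) P i = X * derivative (P i) + P i * ((u i : ℤ[X]) * X) := by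
  rw [formDeriv, polyEuler_apply,
    Finset.sum_eq_single i (fun j _ hj => by simp [expSystem, hj]) (by simp)]
  simp [expSystem]

theorem coeff_iterate_expSystem {m : ℕ} (u : Fin m → ℕ) (P : Fin m → ℤ[X]) (i : Fin m) (k : ℕ) :
    ((formDeriv polyEuler (expSystem u))^[k] P i).natDegree ≤ (P i).natDegree + k ∧
      ((formDeriv polyEuler (expSystem u))^[k] P i).coeff ((P i).natDegree + k) =
        (u i : ℤ) ^ k * (P i).leadingCoeff := by
  induction k with
  | zero => simp
  | succ k ih =>
    rw [Function.iterate_succ_apply', formDeriv_expSystem_apply, ← polyEuler_apply]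
    set p := (formDeriv polyEuler (expSystem u))^[k] P i
    constructor
    · refine natDegree_add_le_of_degree_le ((natDegree_polyEuler_le p).trans (by omega)) ?_
      refine natDegree_mul_le.trans ?_
      have : ((u i : ℤ[X]) * X).natDegree ≤ 1 := by
        refine natDegree_mul_le.trans ?_
        simp
      omega
    · rw [coeff_add, coeff_polyEuler, coeff_eq_zero_of_natDegree_lt (by omega), mul_zero, zero_add,
        ← mul_assoc, ← add_assoc, coeff_mul_X, mul_comm p, ← nsmul_eq_mul, coeff_smul, ih.2,
        nsmul_eq_mul]
      ring

theorem det_expSystem_ne_zero {m : ℕ} {u : Fin m → ℕ} (hu : Function.Injective u)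
    {P : Fin m → ℤ[X]} (hP : ∀ i, P i ≠ 0) :
    (Matrix.of fun k : Fin m => (formDeriv polyEuler (expSystem u))^[k] P).det ≠ 0 := by
  intro hdet
  obtain ⟨q, hq, hNq⟩ := Matrix.exists_mulVec_eq_zero_iff.mpr hdet
  obtain ⟨i₁, hi₁⟩ := Function.ne_iff.mp hq
  have hne : (Finset.univ.filter fun i => q i ≠ 0).Nonempty := ⟨i₁, by simpa using hi₁⟩
  obtain ⟨i₀, hi₀, hmax⟩ := Finset.exists_max_image _
    (fun i => (P i).natDegree + (q i).natDegree) hne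
  set e := (P i₀).natDegree + (q i₀).natDegree with he
  simp only [Finset.mem_filter, Finset.mem_univ, true_and] at hi₀ hmax
  have hv := Matrix.eq_zero_of_forall_pow_sum_mul_pow_eq_zero (R := ℤ) (f := fun i => (u i : ℤ))
    (v := fun i => (P i).leadingCoeff * (q i).coeff (e - (P i).natDegree))
    (Nat.cast_injective.comp hu) fun k => by
      have h1 := congrArg (fun p => coeff p (e + k)) (congrFun hNq k)
      simp only [Matrix.mulVec, dotProduct, Matrix.of_apply, finsetSum_coeff, Pi.zero_apply,
        coeff_zero] at h1
      rw [← h1]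
      refine Finset.sum_congr rfl fun i _ => ?_
      by_cases hqi : q i = 0
      · simp [hqi]
      · have h2 := hmax i hqi
        obtain ⟨h3, h4⟩ := coeff_iterate_expSystem u P i k
        rw [show e + (k : ℕ) = (P i).natDegree + k + (e - (P i).natDegree) by omega,
          coeff_mul_add_eq_of_natDegree_le h3 (by omega), h4]
        ring
  have h5 := congrFun hv i₀
  simp only [Pi.zero_apply, mul_eq_zero, leadingCoeff_eq_zero, hP i₀, false_or] at h5
  rw [show e - (P i₀).natDegree = (q i₀).natDegree by omega] at h5
  exact hi₀ (leadingCoeff_eq_zero.mp h5)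

theorem natDegree_expSystem_le {m : ℕ} (u : Fin m → ℕ) (j i : Fin m) :
    (expSystem u j i).natDegree ≤ 1 := by
  by_cases h : j = i
  · subst h
    rw [expSystem, Matrix.diagonal_apply_eq]
    exact natDegree_mul_le.trans (by simp)
  · simp [expSystem, h]

theorem det_expSystem_ne_zero_of_dvd {m : ℕ} {u : Fin m → ℕ} (hu : Function.Injective u)
    {n : ℕ} (hn : m * m < n) {P : Fin m → ℤ[X]} (hP : P ≠ 0)
    (hd : ∀ i, (P i).natDegree < 2 * n)
    (hX : PowerSeries.X ^ ((2 * m - 1) * n) ∣ ∑ i, polyToSeries (P i) * expSeries (u i)) :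
    (Matrix.of fun k : Fin m => (formDeriv polyEuler (expSystem u))^[k] P).det ≠ 0 := by
  classical
  obtain ⟨i₁, hi₁⟩ := Function.ne_iff.mp hP
  by_cases hall : ∀ i, P i ≠ 0
  · exact det_expSystem_ne_zero hu hall
  exfalso
  set S := Finset.univ.filter fun i => P i ≠ 0 with hS
  have hS0 : 0 < S.card := Finset.card_pos.mpr ⟨i₁, by simpa [hS] using hi₁⟩
  have hSm : S.card < m := by
    obtain ⟨i, hi⟩ := not_forall.mp hall
    have : S ⊂ Finset.univ := Finset.filter_ssubset.mpr ⟨i, Finset.mem_univ i, hi⟩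
    simpa using Finset.card_lt_card this
  set e := S.orderEmbOfFin rfl with he
  have heS : ∀ i, P (e i) ≠ 0 := fun i =>
    (Finset.mem_filter.mp (S.orderEmbOfFin_mem rfl i)).2
  have hsum : ∑ i, polyToSeries (P (e i)) * expSeries (u (e i)) =
      ∑ i, polyToSeries (P i) * expSeries (u i) := by
    rw [← Finset.sum_filter_of_ne (p := fun i => P i ≠ 0)
      (fun i _ hi h0 => hi (by rw [h0, map_zero, zero_mul])), ← hS]
    have himg : S = Finset.univ.map e.toEmbedding := (Finset.map_orderEmbOfFin_univ S rfl).symm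
    conv_rhs => rw [himg]
    rw [Finset.sum_map]
    rfl
  have hdet := det_expSystem_ne_zero (u := u ∘ e) (hu.comp e.injective) (P := P ∘ e) heS
  have hdvd := X_pow_dvd_det (φ := fun i => expSeries ((u ∘ e) i)) (expSystem (u ∘ e))
    (seriesEuler_expSeries _) (j₀ := ⟨0, hS0⟩) (by rw [constantCoeff_expSeries]; exact one_ne_zero)
    (P ∘ e) (M := (2 * m - 1) * n) (by
      simp only [Function.comp_apply]
      rw [hsum]
      exact hX)
  have h1 := natDegree_le_of_dvd hdvd hdet
  have h2 := natDegree_det_le (d := 2 * n + 1 * S.card)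
    (Matrix.of fun k : Fin S.card => (formDeriv polyEuler (expSystem (u ∘ e)))^[k] (P ∘ e))
    fun k i => (natDegree_iterate_formDeriv_le (natDegree_expSystem_le _)
      (fun i => (hd (e i)).le) k i).trans (by have := k.2; omega)
  rw [natDegree_X_pow] at h1
  have h3 := h1.trans h2
  obtain ⟨m', rfl⟩ : ∃ m', m = m' + 1 := ⟨m - 1, by omega⟩
  rw [show 2 * (m' + 1) - 1 = 2 * m' + 1 by omega] at h3
  have h4 : S.card * (2 * n + 1 * S.card) ≤ m' * (2 * n + 1 * m') := by
    gcongr <;> omega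
  nlinarith

end Exponential

section Consequences

theorem seriesEval_one (z : ℂ) : seriesEval z 1 = 1 := by
  have := seriesEval_polyToSeries 1 z
  rwa [map_one, map_one] at this

theorem seriesEval_pow {φ : PowerSeries ℚ} (hφ : IsExpType φ) (z : ℂ) (k : ℕ) :
    seriesEval z (φ ^ k) = seriesEval z φ ^ k := by
  induction k with
  | zero => simp [seriesEval_one]
  | succ k ih => rw [pow_succ, pow_succ, seriesEval_mul ((hφ.pow k).summable z) (hφ.summable z), ih]

theorem seriesEval_expSeries (z : ℂ) (u : ℕ) : seriesEval z (expSeries u) = Complex.exp z ^ u := by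
  rw [← Complex.exp_nat_mul, Complex.exp_eq_exp_ℂ, NormedSpace.exp_eq_tsum_div, seriesEval]
  refine tsum_congr fun n => ?_
  rw [expSeries, PowerSeries.coeff_mk, mul_pow]
  push_cast
  ring

/-- The exponential of a non-zero algebraic number is transcendental. -/
theorem exp_ne_of_numberField {K : Type*} [Field K] [NumberField K] (σ : K →ₐ[ℚ] ℂ) {α : K}
    (hα : α ≠ 0) (β : K) : Complex.exp (σ α) ≠ σ β := by
  intro h
  set m := 3 * Module.finrank ℚ K + 2 with hm
  have hval : ∀ i : Fin m, seriesEval (σ α) (expSeries i) = 1 * σ (β ^ (i : ℕ)) := fun i => by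
    rw [seriesEval_expSeries, h, one_mul, map_pow]
  refine siegel_method (φ := fun i : Fin m => expSeries i) (fun i => isExpType_expSeries i)
    (expSystem fun i : Fin m => (i : ℕ)) (seriesEuler_expSeries _) (j₀ := ⟨0, by omega⟩)
    (by rw [constantCoeff_expSeries]; exact one_ne_zero) ?_ σ hα (β := fun i => β ^ (i : ℕ)) ?_
    one_ne_zero hval (by omega)
  · exact ⟨m * m + 1, fun n hn P hP hd hX =>
      det_expSystem_ne_zero_of_dvd Fin.val_injective (by omega) hP hd hX⟩
  · exact Function.ne_iff.mpr ⟨⟨0, by omega⟩, by simp⟩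

/-- Siegel's theorem: the ratio of a solution and its derivative is transcendental at non-zero
algebraic points, for the Bessel equation of order zero. -/
theorem besselSeries_ne_of_numberField {K : Type*} [Field K] [NumberField K] (σ : K →ₐ[ℚ] ℂ)
    {α : K} (hα : α ≠ 0) {b₀ b₁ : K} (hb : b₀ ≠ 0 ∨ b₁ ≠ 0) {l : ℂ} (hl : l ≠ 0)
    (h₀ : seriesEval (σ α) besselSeries = l * σ b₀) :
    seriesEval (σ α) (seriesEuler besselSeries) ≠ l * σ b₁ := by
  intro h₁
  set d := 3 * Module.finrank ℚ K with hd
  have he := isExpType_besselSeries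
  have he' := he.seriesEuler
  have hval : ∀ i : Fin (d + 1), seriesEval (σ α)
      (besselSeries ^ (d - i : ℕ) * seriesEuler besselSeries ^ (i : ℕ)) =
        l ^ d * σ (b₀ ^ (d - i : ℕ) * b₁ ^ (i : ℕ)) := fun i => by
    have hi : l ^ d = l ^ (d - i : ℕ) * l ^ (i : ℕ) := by
      rw [← pow_add, Nat.sub_add_cancel (Nat.lt_succ_iff.mp i.2)]
    rw [seriesEval_mul ((he.pow _).summable _) ((he'.pow _).summable _), seriesEval_pow he,
      seriesEval_pow he', h₀, h₁, map_mul, map_pow, map_pow, mul_pow, mul_pow, hi]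
    ring
  refine siegel_method
    (φ := fun i : Fin (d + 1) => besselSeries ^ (d - i : ℕ) * seriesEuler besselSeries ^ (i : ℕ))
    (fun i => (he.pow _).mul (he'.pow _)) (symSystem d (4 * X ^ 2))
    (seriesEuler_monomial_besselSeries d) (j₀ := 0) (by simp [constantCoeff_besselSeries])
    ⟨0, fun n _ P hP _ _ => det_iterate_formDeriv_bessel_ne_zero hP⟩ σ hα
    (β := fun i => b₀ ^ (d - i : ℕ) * b₁ ^ (i : ℕ)) ?_ (pow_ne_zero d hl) hval (by omega)
  rcases hb with hb | hb
  · exact Function.ne_iff.mpr ⟨0, by simp [hb]⟩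
  · exact Function.ne_iff.mpr ⟨Fin.last d, by simp [hb]⟩

end Consequences

section Bessel

/-- The terms of the entire function `(√y) ^ (-ν) * J_ν (2 √y)` of `y`. -/
noncomputable def clifford (ν y : ℝ) (k : ℕ) : ℝ :=
  (-1) ^ k * y ^ k / (k.factorial * Real.Gamma (k + ν + 1))

theorem besselJ_eq_tsum_clifford (ν : ℝ) {x : ℝ} (hx : 0 < x) :
    besselJ ν x = (x / 2) ^ ν * ∑' k, clifford ν ((x / 2) ^ 2) k := by
  rw [besselJ, ← tsum_mul_left]
  refine tsum_congr fun k => ?_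
  rw [Real.rpow_add (by positivity), mul_comm (2 : ℝ), Real.rpow_mul (by positivity),
    Real.rpow_natCast, Real.rpow_ofNat, clifford, ← pow_mul, ← pow_mul, mul_comm k]
  ring

theorem pow_mul_Gamma_le {ν : ℝ} (hν : -1 < ν) (k : ℕ) :
    (ν + 1) ^ k * Real.Gamma (ν + 1) ≤ Real.Gamma (k + ν + 1) := by
  have h0 : 0 < ν + 1 := by linarith
  induction k with
  | zero => simp
  | succ k ih =>
    have hk0 : (0 : ℝ) ≤ k := by positivity
    have hk : (k : ℝ) + ν + 1 ≠ 0 := (by linarith : (0 : ℝ) < k + ν + 1).ne'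
    rw [show ((k + 1 : ℕ) : ℝ) + ν + 1 = (k + ν + 1) + 1 by push_cast; ring, Real.Gamma_add_one hk,
      pow_succ', mul_assoc]
    have : 0 < Real.Gamma (ν + 1) := Real.Gamma_pos_of_pos h0
    gcongr
    all_goals linarith

theorem abs_clifford_le {ν : ℝ} (hν : -1 < ν) (y : ℝ) (k : ℕ) :
    |clifford ν y k| ≤ (|y| / (ν + 1)) ^ k / k.factorial * (Real.Gamma (ν + 1))⁻¹ := by
  have h0 : 0 < ν + 1 := by linarith
  have hG : 0 < Real.Gamma (ν + 1) := Real.Gamma_pos_of_pos h0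
  have hG' : 0 < Real.Gamma (k + ν + 1) := (by positivity : (0 : ℝ) < _).trans_le
    (pow_mul_Gamma_le hν k)
  rw [clifford, abs_div, abs_mul, abs_pow, abs_pow, abs_neg, abs_one, one_pow, one_mul, abs_mul,
    Nat.abs_cast, abs_of_pos hG']
  calc |y| ^ k / (k.factorial * Real.Gamma (k + ν + 1))
      ≤ |y| ^ k / (k.factorial * ((ν + 1) ^ k * Real.Gamma (ν + 1))) := by
        gcongr
        exact pow_mul_Gamma_le hν k
    _ = _ := by
        rw [div_pow]
        field_simp

theorem summable_clifford {ν : ℝ} (hν : -1 < ν) (y : ℝ) : Summable (clifford ν y) :=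
  Summable.of_abs (((Real.summable_pow_div_factorial _).mul_right _).of_nonneg_of_le
    (fun _ => abs_nonneg _) (abs_clifford_le hν y))

theorem tsum_clifford_recurrence {ν : ℝ} (hν : -1 < ν) (y : ℝ) :
    ∑' k, clifford ν y k + y * ∑' k, clifford (ν + 2) y k =
      (ν + 1) * ∑' k, clifford (ν + 1) y k := by
  have h0 : 0 < ν + 1 := by linarith
  have s0 := summable_clifford hν y
  have s1 := summable_clifford (show -1 < ν + 1 by linarith) y
  rw [s0.tsum_eq_zero_add, s1.tsum_eq_zero_add, mul_add, ← tsum_mul_left, ← tsum_mul_left,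
    add_assoc, ← ((summable_nat_add_iff 1).mpr s0).tsum_add
      ((summable_clifford (show -1 < ν + 2 by linarith) y).mul_left y)]
  congr 1
  · have hG : Real.Gamma (ν + 1) ≠ 0 := (Real.Gamma_pos_of_pos h0).ne'
    simp only [clifford, Nat.factorial_zero, pow_zero, Nat.cast_zero, zero_add, Nat.cast_one]
    rw [Real.Gamma_add_one h0.ne']
    field_simp
  · refine tsum_congr fun k => ?_
    have hk : 0 < (k : ℝ) + ν + 2 := by
      have : (0 : ℝ) ≤ k := by positivity
      linarith
    have hG : Real.Gamma (k + ν + 2) ≠ 0 := (Real.Gamma_pos_of_pos hk).ne'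
    have hf : (k.factorial : ℝ) ≠ 0 := by positivity
    simp only [clifford]
    rw [show ((k + 1 : ℕ) : ℝ) + ν + 1 = k + ν + 2 by push_cast; ring,
      show ((k + 1 : ℕ) : ℝ) + (ν + 1) + 1 = (k + ν + 2) + 1 by push_cast; ring,
      show (k : ℝ) + (ν + 2) + 1 = (k + ν + 2) + 1 by ring, Real.Gamma_add_one hk.ne',
      Nat.factorial_succ]
    push_cast
    field_simp
    ring

theorem tsum_clifford_ne_zero {ν y : ℝ} (hν : 2 * |y| < ν + 1) : ∑' k, clifford ν y k ≠ 0 := by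
  have h0 : 0 < ν + 1 := (by positivity : (0 : ℝ) ≤ 2 * |y|).trans_lt hν
  have hν' : -1 < ν := by linarith
  have hG : 0 < Real.Gamma (ν + 1) := Real.Gamma_pos_of_pos h0
  have s := summable_clifford hν' y
  set x := |y| / (ν + 1) with hx
  have hx2 : x ≤ 1 / 2 := by
    rw [hx, div_le_iff₀ h0]
    linarith
  have hexp : HasSum (fun k : ℕ => x ^ k / k.factorial) (Real.exp x) := by
    rw [Real.exp_eq_exp_ℝ]
    exact NormedSpace.expSeries_div_hasSum_exp x
  have htail : HasSum (fun k : ℕ => x ^ (k + 1) / (k + 1).factorial * (Real.Gamma (ν + 1))⁻¹)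
      ((Real.exp x - 1) * (Real.Gamma (ν + 1))⁻¹) := by
    have := (hasSum_nat_add_iff' 1).mpr hexp
    simp only [Finset.sum_range_one, pow_zero, Nat.factorial_zero, Nat.cast_one, div_one] at this
    exact this.mul_right _
  have hb := tsum_of_norm_bounded (f := fun k => clifford ν y (k + 1)) htail
    fun k => abs_clifford_le hν' y (k + 1)
  rw [s.tsum_eq_zero_add]
  intro h
  have hc0 : clifford ν y 0 = (Real.Gamma (ν + 1))⁻¹ := by simp [clifford]
  rw [hc0] at h
  rw [eq_neg_of_add_eq_zero_right h, norm_neg, Real.norm_of_nonneg (by positivity)] at hb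
  have h1 : 1 ≤ Real.exp x - 1 := le_of_mul_le_mul_right (by rwa [one_mul]) (inv_pos.mpr hG)
  have h2 : Real.exp x ≤ Real.exp (1 / 2) := Real.exp_le_exp.mpr hx2
  have h3 : Real.exp (1 / 2) ^ 2 < 2 ^ 2 := by
    rw [← Real.exp_nat_mul]
    norm_num
    linarith [Real.exp_one_lt_d9]
  have h4 := lt_of_pow_lt_pow_left₀ 2 (by norm_num) h3
  linarith

theorem seriesEval_evenSeries (u : ℕ → ℚ) (z : ℂ) :
    seriesEval z (evenSeries u) = ∑' k, (u k : ℂ) * (z ^ 2) ^ k := by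
  rw [seriesEval, ← (mul_right_injective₀ (two_ne_zero' ℕ)).tsum_eq]
  · exact tsum_congr fun k => by rw [coeff_two_mul_evenSeries, pow_mul]
  · intro n hn
    rcases Nat.even_or_odd n with ⟨k, rfl⟩ | h
    · exact ⟨k, by ring⟩
    · exact absurd (by simp [coeff_evenSeries, Nat.not_even_iff_odd.mpr h]) hn

theorem clifford_natCast (n : ℕ) (y : ℝ) (k : ℕ) :
    clifford n y k = (-1) ^ k * y ^ k / (k.factorial * (k + n).factorial) := by
  rw [clifford, ← Real.Gamma_nat_eq_factorial (k + n)]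
  push_cast
  rfl

theorem seriesEval_besselSeries (x : ℝ) :
    seriesEval x besselSeries = ((∑' k, clifford 0 (x ^ 2) k : ℝ) : ℂ) := by
  rw [besselSeries, seriesEval_evenSeries, Complex.ofReal_tsum]
  refine tsum_congr fun k => ?_
  have := clifford_natCast 0 (x ^ 2) k
  rw [Nat.cast_zero] at this
  rw [this, add_zero]
  push_cast
  ring

theorem seriesEval_seriesEuler_besselSeries (x : ℝ) :
    seriesEval x (seriesEuler besselSeries) =
      ((-2 * x ^ 2 * ∑' k, clifford 1 (x ^ 2) k : ℝ) : ℂ) := by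
  rw [besselSeries, seriesEuler_evenSeries, seriesEval_evenSeries, ← tsum_mul_left,
    Complex.ofReal_tsum, ← (Nat.succ_injective).tsum_eq]
  · refine tsum_congr fun k => ?_
    have := clifford_natCast 1 (x ^ 2) k
    rw [Nat.cast_one] at this
    rw [this, Nat.succ_eq_add_one]
    have hf : (k.factorial : ℂ) ≠ 0 := by exact_mod_cast k.factorial_ne_zero
    have hk : (k + 1 : ℂ) ≠ 0 := by exact_mod_cast k.succ_ne_zero
    push_cast [Nat.factorial_succ]
    field_simp
    ring
  · intro n hn
    cases n with
    | zero => exact absurd (by simp) hn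
    | succ n => exact ⟨n, rfl⟩

theorem factorial_mul_Gamma_add_half (k : ℕ) :
    k.factorial * Real.Gamma (k + 1 / 2) * 4 ^ k = (2 * k).factorial * √Real.pi := by
  induction k with
  | zero => simpa using Real.Gamma_one_half_eq
  | succ k ih =>
    have hk : (k : ℝ) + 1 / 2 ≠ 0 := by positivity
    rw [show ((k + 1 : ℕ) : ℝ) + 1 / 2 = (k + 1 / 2) + 1 by push_cast; ring, Real.Gamma_add_one hk,
      show 2 * (k + 1) = 2 * k + 1 + 1 by ring, Nat.factorial_succ, Nat.factorial_succ,
      Nat.factorial_succ]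
    push_cast
    linear_combination (2 * (k : ℝ) + 1) * (2 * k + 2) * ih

theorem tsum_clifford_neg_half (x : ℝ) :
    √Real.pi * ∑' k, clifford (-(1 / 2)) ((x / 2) ^ 2) k = Real.cos x := by
  rw [Real.cos_eq_tsum, ← tsum_mul_left]
  refine tsum_congr fun k => ?_
  have h := factorial_mul_Gamma_add_half k
  have hf : ((2 * k).factorial : ℝ) ≠ 0 := by positivity
  have hd : (k.factorial : ℝ) * Real.Gamma (k + 1 / 2) ≠ 0 :=
    mul_ne_zero (by positivity) (Real.Gamma_pos_of_pos (by positivity)).ne'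
  rw [clifford, show (k : ℝ) + -(1 / 2) + 1 = k + 1 / 2 by ring, ← pow_mul, div_pow, pow_mul 2]
  rw [show (2 : ℝ) ^ 2 = 4 by norm_num, mul_div_assoc', div_eq_div_iff hd hf]
  have h4 : (4 : ℝ) ^ k ≠ 0 := by positivity
  generalize Real.Gamma (k + 1 / 2) = G at h hd ⊢
  field_simp
  linear_combination -x ^ (2 * k) * h

theorem tsum_clifford_half (x : ℝ) :
    √Real.pi * (x / 2 * ∑' k, clifford (1 / 2) ((x / 2) ^ 2) k) = Real.sin x := by
  rw [Real.sin_eq_tsum, ← tsum_mul_left, ← tsum_mul_left]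
  refine tsum_congr fun k => ?_
  have h := factorial_mul_Gamma_add_half k
  have hf : ((2 * k + 1).factorial : ℝ) ≠ 0 := by positivity
  have hk : (k : ℝ) + 1 / 2 ≠ 0 := by positivity
  have hG := (Real.Gamma_pos_of_pos (show (0 : ℝ) < k + 1 / 2 by positivity)).ne'
  have hd : (k.factorial : ℝ) * (((k : ℝ) + 1 / 2) * Real.Gamma (k + 1 / 2)) ≠ 0 :=
    mul_ne_zero (by positivity) (mul_ne_zero hk hG)
  rw [clifford, show (k : ℝ) + 1 / 2 + 1 = (k + 1 / 2) + 1 by ring, Real.Gamma_add_one hk,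
    ← pow_mul, div_pow, pow_mul 2, show (2 : ℝ) ^ 2 = 4 by norm_num, mul_div_assoc',
    mul_div_assoc', div_eq_div_iff hd hf, Nat.factorial_succ]
  have h4 : (4 : ℝ) ^ k ≠ 0 := by positivity
  push_cast
  generalize Real.Gamma (k + 1 / 2) = G at h hd hG ⊢
  field_simp
  linear_combination -x ^ (2 * k + 1) * h

end Bessel

section Recurrence

variable {t : ℕ → ℝ} {c : ℕ → ℚ} {y : ℝ}

theorem recurrence_eq_zero (h : ∀ j, t j + y * t (j + 2) = c j * t (j + 1)) (hy : y ≠ 0)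
    {i : ℕ} (h0 : t i = 0) (h1 : t (i + 1) = 0) (j : ℕ) : t (i + j) = 0 ∧ t (i + j + 1) = 0 := by
  induction j with
  | zero => exact ⟨h0, h1⟩
  | succ j ih =>
    refine ⟨ih.2, ?_⟩
    have := h (i + j)
    rw [ih.1, ih.2, zero_add, mul_zero] at this
    exact (mul_eq_zero.mp this).resolve_left hy

theorem exists_recurrence_polynomial (h : ∀ j, t j + y * t (j + 2) = c j * t (j + 1))
    (hc : ∀ j, c j ≠ 0) {n : ℕ} (h0 : t n = 0) (k : ℕ) :
    ∃ A B : ℚ[X], A.coeff 0 ≠ 0 ∧ B.coeff 0 ≠ 0 ∧ t (n + 1 + k) * y ^ k = aeval y A * t (n + 1) ∧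
      t (n + 1 + k + 1) * y ^ (k + 1) = aeval y B * t (n + 1) := by
  induction k with
  | zero =>
    refine ⟨1, C (c n), by simp, by simpa using hc n, by simp, ?_⟩
    have := h n
    rw [h0, zero_add] at this
    simp only [add_zero, zero_add, pow_one, aeval_C, eq_ratCast]
    linear_combination this
  | succ k ih =>
    obtain ⟨A, B, hA, hB, h1, h2⟩ := ih
    refine ⟨B, C (c (n + 1 + k)) * B - X * A, hB, ?_, h2, ?_⟩
    · simpa using ⟨hc _, hB⟩
    · simp only [map_sub, map_mul, aeval_C, aeval_X, eq_ratCast]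
      linear_combination y ^ (k + 1) * h (n + 1 + k) - y * h1 + c (n + 1 + k) * h2

theorem exists_recurrence_polynomial_initial (n : ℕ) {t : ℕ → ℝ} {c : ℕ → ℚ}
    (h : ∀ j, t j + y * t (j + 2) = c j * t (j + 1)) (h0 : t n = 0) :
    ∃ A B : ℚ[X], t 0 = aeval y A * t (n + 1) ∧ t 1 = aeval y B * t (n + 1) := by
  induction n generalizing t c with
  | zero => exact ⟨0, 1, by simpa using h0, by simp⟩
  | succ n ih =>
    obtain ⟨A, B, hA, hB⟩ := ih (t := fun j => t (j + 1)) (c := fun j => c (j + 1))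
      (fun j => h (j + 1)) h0
    refine ⟨C (c 0) * A - X * B, A, ?_, hA⟩
    simp only [map_sub, map_mul, aeval_C, aeval_X, eq_ratCast]
    linear_combination h 0 + c 0 * hA - y * hB

end Recurrence

section CommonZeros

theorem isAlgebraic_of_tsum_clifford_eq_zero {ν : ℚ} (hν : -1 < ν) {y : ℝ} (hy : y ≠ 0)
    {n p : ℕ} (hp : 1 ≤ p) (h0 : ∑' k, clifford (ν + n) y k = 0)
    (h1 : ∑' k, clifford (ν + (n + p : ℕ)) y k = 0) :
    IsAlgebraic ℚ y ∧ ∃ A B : ℚ[X], ∃ l : ℝ, l ≠ 0 ∧ (aeval y A ≠ 0 ∨ aeval y B ≠ 0) ∧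
      ∑' k, clifford ν y k = aeval y A * l ∧ ∑' k, clifford (ν + 1) y k = aeval y B * l := by
  set t : ℕ → ℝ := fun j => ∑' k, clifford (ν + j) y k with ht
  have hν' : (-1 : ℝ) < ν := by exact_mod_cast hν
  have hrec : ∀ j, t j + y * t (j + 2) = ((ν + j + 1 : ℚ) : ℝ) * t (j + 1) := fun j => by
    have hj : (0 : ℝ) ≤ j := by positivity
    have := tsum_clifford_recurrence (show -1 < (ν : ℝ) + j by linarith) y
    simp only [ht]
    push_cast
    simpa only [add_assoc] using this
  have hc : ∀ j : ℕ, (ν + j + 1 : ℚ) ≠ 0 := fun j => by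
    have hj : (0 : ℚ) ≤ j := by positivity
    exact (by linarith : (0 : ℚ) < ν + j + 1).ne'
  have hne : ∀ i, t i = 0 → t (i + 1) ≠ 0 := fun i hi hi' => by
    obtain ⟨j, hj⟩ := exists_nat_gt (2 * |y|)
    refine tsum_clifford_ne_zero ?_ (recurrence_eq_zero hrec hy hi hi' j).1
    have : (0 : ℝ) ≤ i := by positivity
    push_cast
    linarith
  have h0 : t n = 0 := h0
  have h1 : t (n + p) = 0 := h1
  have hl := hne n h0
  have ht0 : t 0 = ∑' k, clifford ν y k := by simp [ht]
  have ht1 : t 1 = ∑' k, clifford (ν + 1) y k := by simp [ht]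
  refine ⟨?_, ?_⟩
  · obtain ⟨q, rfl⟩ := Nat.exists_eq_add_of_le hp
    obtain ⟨A, -, hA, -, hA', -⟩ := exists_recurrence_polynomial hrec hc h0 q
    refine ⟨A, fun h => hA (by simp [h]), ?_⟩
    rw [add_assoc, h1, zero_mul] at hA'
    exact (mul_eq_zero.mp hA'.symm).resolve_right hl
  · obtain ⟨A, B, hA, hB⟩ := exists_recurrence_polynomial_initial n hrec h0
    refine ⟨A, B, _, hl, ?_, ht0 ▸ hA, ht1 ▸ hB⟩
    by_contra! hAB
    rw [hAB.1, zero_mul] at hA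
    rw [hAB.2, zero_mul] at hB
    exact hne 0 hA hB

theorem exists_numberField_of_isAlgebraic {r : ℝ} (hr : IsAlgebraic ℚ r) :
    ∃ (K : Type) (_ : Field K) (_ : NumberField K) (σ : K →ₐ[ℚ] ℂ) (α i : K),
      σ α = r ∧ σ i = Complex.I := by
  have hr' : IsIntegral ℚ (r : ℂ) := (hr.algHom (Complex.ofRealAm.restrictScalars ℚ)).isIntegral
  have hI : IsIntegral ℚ Complex.I :=
    ⟨X ^ 2 + 1, by monicity!, by simp⟩
  have : FiniteDimensional ℚ (IntermediateField.adjoin ℚ {(r : ℂ), Complex.I}) :=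
    IntermediateField.finiteDimensional_adjoin (by
      rintro x (rfl | rfl)
      exacts [hr', hI])
  have hK : NumberField (IntermediateField.adjoin ℚ {(r : ℂ), Complex.I}) :=
    { to_charZero := inferInstance, to_finiteDimensional := this }
  exact ⟨_, inferInstance, hK,
    (algebraMap (IntermediateField.adjoin ℚ {(r : ℂ), Complex.I}) ℂ).toRatAlgHom,
    ⟨r, IntermediateField.subset_adjoin _ _ (by simp)⟩,
    ⟨Complex.I, IntermediateField.subset_adjoin _ _ (by simp)⟩, rfl, rfl⟩

theorem ofReal_aeval (y : ℝ) (A : ℚ[X]) : ((aeval y A : ℝ) : ℂ) = aeval (y : ℂ) A :=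
  (aeval_algHom_apply (Complex.ofRealAm.restrictScalars ℚ) y A).symm

theorem tsum_clifford_natCast_ne_zero {r : ℝ} (hr : 0 < r) (n : ℕ) {p : ℕ} (hp : 1 ≤ p)
    (h0 : ∑' k, clifford n ((r / 2) ^ 2) k = 0) :
    ∑' k, clifford (n + p : ℕ) ((r / 2) ^ 2) k ≠ 0 := by
  intro h1
  obtain ⟨hy, A, B, l, hl, hAB, hA, hB⟩ := isAlgebraic_of_tsum_clifford_eq_zero (ν := 0)
    (y := (r / 2) ^ 2) (n := n) (p := p) (by norm_num) (by positivity) hp (by simpa using h0)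
    (by simpa using h1)
  have hr' : IsAlgebraic ℚ (r / 2) := hy.of_pow two_pos
  obtain ⟨K, _, _, σ, α, -, hα, -⟩ := exists_numberField_of_isAlgebraic hr'
  have hα0 : α ≠ 0 := fun h => by
    rw [h, map_zero] at hα
    exact (by positivity : r / 2 ≠ 0) (Complex.ofReal_eq_zero.mp hα.symm)
  have hσ (A : ℚ[X]) : σ (aeval (α ^ 2) A) = ((aeval ((r / 2) ^ 2) A : ℝ) : ℂ) := by
    rw [← aeval_algHom_apply, map_pow, hα, ofReal_aeval, Complex.ofReal_pow]
  have hAB' : aeval (α ^ 2) A ≠ 0 ∨ -2 * α ^ 2 * aeval (α ^ 2) B ≠ 0 := by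
    refine hAB.imp (fun h h' => h ?_) (fun h h' => h ?_)
    · have := hσ A
      rw [h', map_zero] at this
      exact_mod_cast this.symm
    · have := hσ B
      rw [(mul_eq_zero.mp h').resolve_left (by simpa using hα0), map_zero] at this
      exact_mod_cast this.symm
  refine besselSeries_ne_of_numberField σ hα0 hAB' (l := l) (by exact_mod_cast hl) ?_ ?_
  · rw [hα, seriesEval_besselSeries, hσ]
    rw [Rat.cast_zero] at hA
    rw [hA, Complex.ofReal_mul, mul_comm]
  · rw [hα, seriesEval_seriesEuler_besselSeries, map_mul, hσ, map_mul, map_pow, hα, map_neg,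
      map_ofNat]
    rw [Rat.cast_zero, zero_add] at hB
    rw [hB]
    push_cast
    ring

theorem tsum_clifford_sub_half_ne_zero {r : ℝ} (hr : 0 < r) (n : ℕ) {p : ℕ} (hp : 1 ≤ p)
    (h0 : ∑' k, clifford (-(1 / 2) + n) ((r / 2) ^ 2) k = 0) :
    ∑' k, clifford (-(1 / 2) + (n + p : ℕ)) ((r / 2) ^ 2) k ≠ 0 := by
  intro h1
  have hν : ((-(1 / 2) : ℚ) : ℝ) = -(1 / 2) := by norm_num
  obtain ⟨hy, A, B, l, hl, hAB, hA, hB⟩ := isAlgebraic_of_tsum_clifford_eq_zero (ν := -(1 / 2))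
    (y := (r / 2) ^ 2) (n := n) (p := p) (by norm_num) (by positivity) hp (by rwa [hν])
    (by rwa [hν])
  rw [hν] at hA hB
  rw [show (-(1 / 2) + 1 : ℝ) = 1 / 2 by norm_num] at hB
  have hr' : IsAlgebraic ℚ (r / 2) := hy.of_pow two_pos
  obtain ⟨K, _, _, σ, α, i, hα, hi⟩ := exists_numberField_of_isAlgebraic hr'
  have hσ (A : ℚ[X]) : σ (aeval (α ^ 2) A) = ((aeval ((r / 2) ^ 2) A : ℝ) : ℂ) := by
    rw [← aeval_algHom_apply, map_pow, hα, ofReal_aeval, Complex.ofReal_pow]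
  have hα0 : 4 * (i * α) ≠ 0 := fun h => by
    have := congrArg σ h
    rw [map_mul, map_mul, hα, hi, map_zero, map_ofNat] at this
    simp [hr.ne'] at this
  have hcos := tsum_clifford_neg_half r
  have hsin := tsum_clifford_half r
  rw [hA] at hcos
  rw [hB] at hsin
  set a := aeval ((r / 2) ^ 2) A with ha
  set b := aeval ((r / 2) ^ 2) B with hb
  have hexp : Complex.exp (r * Complex.I) = √Real.pi * l * (a + Complex.I * (r / 2 * b)) := by
    rw [Complex.exp_mul_I, ← Complex.ofReal_cos, ← Complex.ofReal_sin, ← hcos, ← hsin]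
    push_cast
    ring
  have hexp' : Complex.exp (-r * Complex.I) = √Real.pi * l * (a - Complex.I * (r / 2 * b)) := by
    rw [Complex.exp_mul_I, Complex.cos_neg, Complex.sin_neg, ← Complex.ofReal_cos,
      ← Complex.ofReal_sin, ← hcos, ← hsin]
    push_cast
    ring
  have hne : √Real.pi * l * (a - Complex.I * (r / 2 * b)) ≠ 0 := hexp' ▸ Complex.exp_ne_zero _
  refine exp_ne_of_numberField σ hα0 ((aeval (α ^ 2) A + i * (α * aeval (α ^ 2) B)) /
    (aeval (α ^ 2) A - i * (α * aeval (α ^ 2) B))) ?_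
  simp only [map_div₀, map_add, map_sub, map_mul, hσ, hα, hi, map_ofNat, ← ha, ← hb]
  rw [show 4 * (Complex.I * ((r / 2 : ℝ) : ℂ)) = r * Complex.I - -r * Complex.I by
    push_cast; ring, Complex.exp_sub, hexp, hexp']
  push_cast
  rw [mul_div_mul_left]
  exact left_ne_zero_of_mul hne

theorem tsum_clifford_eq_zero_of_besselJ {ν r : ℝ} (hr : 0 < r) (h : besselJ ν r = 0) :
    ∑' k, clifford ν ((r / 2) ^ 2) k = 0 := by
  rw [besselJ_eq_tsum_clifford ν hr] at h
  exact (mul_eq_zero.mp h).resolve_left (by positivity)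

end CommonZeros

theorem besselJ_no_common_zeros (d ℓ p : ℕ) (hd : 2 ≤ d) (hp : 1 ≤ p) :
    ¬ ∃ r : ℝ, 0 < r ∧ besselJ ((ℓ : ℝ) + (d : ℝ) / 2 - 1) r = 0 ∧
      besselJ ((ℓ : ℝ) + (p : ℝ) + (d : ℝ) / 2 - 1) r = 0 := by
  rintro ⟨r, hr, h0, h1⟩
  replace h0 := tsum_clifford_eq_zero_of_besselJ hr h0
  replace h1 := tsum_clifford_eq_zero_of_besselJ hr h1
  obtain ⟨e, rfl | rfl⟩ := Nat.even_or_odd' d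
  · obtain ⟨f, rfl⟩ := Nat.exists_eq_add_of_le (show 1 ≤ e by omega)
    refine tsum_clifford_natCast_ne_zero hr (ℓ + f) hp ?_ ?_
    · convert h0 using 4
      push_cast
      ring
    · convert h1 using 4
      push_cast
      ring
  · refine tsum_clifford_sub_half_ne_zero hr (ℓ + e) hp ?_ ?_
    · convert h0 using 4
      push_cast
      ring
    · convert h1 using 4
      push_cast
      ring
end

section
/- For every integer d ≥ 2, one has (j_{d/2-1, 1})² ≤ (d/(d+3)) · (j_{d/2, 1})², where j_{ν,1} denotes the smallest positive zero of the Bessel function J_ν. Equivalently, (j_{d/2-1,1}/j_{d/2,1})² ≤ 1 − 3/(d+3). -/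
/-- `j_{ν,1}`: the smallest positive zero of the Bessel function `J_ν`. -/
noncomputable def besselJZero1 (ν : ℝ) : ℝ := sInf {r : ℝ | 0 < r ∧ besselJ ν r = 0}

open Set

/-- The entire function `z ↦ ∑ (-z)^k / (k! Γ(m + k))`, which satisfies
`J_ν(x) = (x/2)^ν F_{ν+1}(x²/4)`. -/
noncomputable def besselEntire (m z : ℝ) : ℝ :=
  ∑' k : ℕ, (-1 : ℝ) ^ k / (k.factorial * Real.Gamma (m + k)) * z ^ k

namespace besselEntire

lemma Gamma_le_Gamma_add_nat {m : ℝ} (hm : 1 ≤ m) (k : ℕ) :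
    Real.Gamma m ≤ Real.Gamma (m + k) := by
  induction k with
  | zero => simp
  | succ k ih =>
    have hk : (0 : ℝ) ≤ k := k.cast_nonneg
    have h := Real.Gamma_add_one (s := m + k) (by positivity)
    have hpos := Real.Gamma_pos_of_pos (s := m + k) (by positivity)
    push_cast
    rw [← add_assoc, h]
    nlinarith

lemma norm_coeff_le {m : ℝ} (hm : 1 ≤ m) (k : ℕ) :
    ‖(-1 : ℝ) ^ k / (k.factorial * Real.Gamma (m + k))‖ ≤
      (Real.Gamma m)⁻¹ * (k.factorial : ℝ)⁻¹ := by
  have h0 := Real.Gamma_pos_of_pos (s := m) (by positivity)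
  have h1 := Gamma_le_Gamma_add_nat hm k
  have hk : (0 : ℝ) < k.factorial := by positivity
  rw [norm_div, norm_pow, norm_neg, norm_one, one_pow, Real.norm_of_nonneg (by positivity),
    one_div, mul_inv, mul_comm]
  gcongr

lemma summable_term {m : ℝ} (hm : 1 ≤ m) (z : ℝ) :
    Summable fun k : ℕ => (-1 : ℝ) ^ k / (k.factorial * Real.Gamma (m + k)) * z ^ k := by
  refine Summable.of_norm_bounded
    ((Real.summable_pow_div_factorial |z|).mul_left (Real.Gamma m)⁻¹) fun k => ?_
  rw [norm_mul, norm_pow, Real.norm_eq_abs z]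
  calc _ ≤ (Real.Gamma m)⁻¹ * (k.factorial : ℝ)⁻¹ * |z| ^ k := by
        gcongr; exact norm_coeff_le hm k
    _ = _ := by ring

lemma coeff_succ (m : ℝ) (k : ℕ) :
    (-1 : ℝ) ^ (k + 1) / ((k + 1).factorial * Real.Gamma (m + (k + 1 : ℕ))) * (k + 1 : ℕ) =
      -((-1 : ℝ) ^ k / (k.factorial * Real.Gamma (m + 1 + k))) := by
  have h : m + ((k + 1 : ℕ) : ℝ) = m + 1 + k := by push_cast; ring
  have hk : ((k : ℝ) + 1) ≠ 0 := by positivity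
  rw [h, Nat.factorial_succ, pow_succ]
  push_cast
  have := mul_inv_cancel₀ hk
  rw [div_eq_mul_inv, div_eq_mul_inv, mul_inv, mul_inv, mul_inv]
  linear_combination (-(-1 : ℝ) ^ k * (k.factorial : ℝ)⁻¹ * (Real.Gamma (m + 1 + k))⁻¹) * this

lemma hasDerivAt {m : ℝ} (hm : 1 ≤ m) (z : ℝ) :
    HasDerivAt (besselEntire m) (-besselEntire (m + 1) z) z := by
  set R : ℝ := |z| + 1
  have hR : 0 ≤ R := by positivity
  have hsum : Summable fun k : ℕ =>
      (Real.Gamma m)⁻¹ * (k.factorial : ℝ)⁻¹ * (k * R ^ (k - 1)) := by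
    rw [← summable_nat_add_iff 1]
    refine ((Real.summable_pow_div_factorial R).mul_left (Real.Gamma m)⁻¹).congr fun k => ?_
    have hk : ((k : ℝ) + 1) ≠ 0 := by positivity
    rw [Nat.factorial_succ]
    push_cast
    field_simp
  have key := hasDerivAt_tsum_of_isPreconnected (𝕜 := ℝ) (t := Metric.ball (0 : ℝ) R)
    (g := fun (k : ℕ) (x : ℝ) => (-1 : ℝ) ^ k / (k.factorial * Real.Gamma (m + k)) * x ^ k)
    (g' := fun (k : ℕ) (x : ℝ) =>
      (-1 : ℝ) ^ k / (k.factorial * Real.Gamma (m + k)) * (k * x ^ (k - 1)))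
    (y₀ := z) (y := z) hsum Metric.isOpen_ball
    (convex_ball (0 : ℝ) R).isPreconnected
    (fun k x _ => (hasDerivAt_pow k x).const_mul _)
    (fun k x hx => by
      have hx' : ‖x‖ ≤ R := by simpa using (mem_ball_zero_iff.1 hx).le
      rw [norm_mul, norm_mul, norm_pow, RCLike.norm_natCast]
      gcongr
      exact norm_coeff_le hm k)
    (by simp [R]) (summable_term hm z) (by simp [R])
  have hs : (∑' k : ℕ, (-1 : ℝ) ^ k / (k.factorial * Real.Gamma (m + k)) * (k * z ^ (k - 1))) =
      -besselEntire (m + 1) z := by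
    rw [besselEntire, ← tsum_neg, Summable.tsum_eq_zero_add]
    · simp only [Nat.cast_zero, zero_mul, mul_zero, zero_add, Nat.add_sub_cancel]
      refine tsum_congr fun k => ?_
      rw [← mul_assoc, coeff_succ, neg_mul]
    · rw [← summable_nat_add_iff 1]
      refine (summable_term (m := m + 1) (by linarith) z).neg.congr fun k => ?_
      rw [Nat.add_sub_cancel, ← mul_assoc, coeff_succ, neg_mul]
  rw [hs] at key
  exact key

lemma continuous {m : ℝ} (hm : 1 ≤ m) : Continuous (besselEntire m) :=
  continuous_iff_continuousAt.2 fun z => (hasDerivAt hm z).continuousAt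

/-- The three-term recurrence. -/
lemma eq_mul_sub_mul {m : ℝ} (hm : 1 ≤ m) (z : ℝ) :
    besselEntire m z = m * besselEntire (m + 1) z - z * besselEntire (m + 1 + 1) z := by
  have h1 : 1 ≤ m + 1 := by linarith
  have h2 : 1 ≤ m + 1 + 1 := by linarith
  have hd : HasSum (fun k : ℕ => (-1 : ℝ) ^ k / (k.factorial * Real.Gamma (m + 1 + k)) *
      k * z ^ k) (-(z * besselEntire (m + 1 + 1) z)) := by
    rw [← hasSum_nat_add_iff' 1]
    simp only [Finset.range_one, Finset.sum_singleton, Nat.cast_zero, mul_zero, zero_mul, sub_zero]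
    refine (((summable_term h2 z).hasSum.mul_left z).neg).congr_fun ?_
    intro k
    rw [coeff_succ, pow_succ]
    ring
  have hm' := (summable_term h1 z).hasSum.mul_left m
  have := (hm'.add hd).tsum_eq
  rw [sub_eq_add_neg]
  unfold besselEntire at this ⊢
  rw [← this]
  refine tsum_congr fun k => ?_
  have hk : (0 : ℝ) < m + k := by positivity
  have hg : m + 1 + (k : ℝ) = (m + k) + 1 := by ring
  have := Real.Gamma_pos_of_pos hk
  rw [hg, Real.Gamma_add_one hk.ne']
  field_simp

lemma apply_zero (m : ℝ) : besselEntire m 0 = (Real.Gamma m)⁻¹ := by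
  rw [besselEntire, tsum_eq_single 0]
  · simp
  · intro k hk
    simp [hk]

lemma apply_zero_pos {m : ℝ} (hm : 1 ≤ m) : 0 < besselEntire m 0 := by
  rw [apply_zero]
  exact inv_pos.2 (Real.Gamma_pos_of_pos (by linarith))

lemma rpow_eq_rpow_sub_one_mul {z : ℝ} (hz : 0 < z) (m : ℝ) : z ^ m = z ^ (m - 1) * z := by
  rw [Real.rpow_sub_one hz.ne']
  field_simp

lemma hasDerivAt_rpow_mul {m z : ℝ} (hm : 1 ≤ m) (hz : 0 < z) :
    HasDerivAt (fun x => x ^ m * besselEntire (m + 1) x)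
      (z ^ (m - 1) * besselEntire m z) z := by
  have h := (Real.hasDerivAt_rpow_const (p := m) (Or.inl hz.ne')).mul
    (hasDerivAt (m := m + 1) (by linarith) z)
  refine h.congr_deriv ?_
  rw [eq_mul_sub_mul hm z, rpow_eq_rpow_sub_one_mul hz m]
  ring

/-- If `F_m` has a zero in `[0, Z]`, it has a smallest one. -/
lemma exists_first_zero {m Z : ℝ} (hm : 1 ≤ m) (h : ∃ z ∈ Icc 0 Z, besselEntire m z ≤ 0) :
    ∃ b, 0 < b ∧ b ≤ Z ∧ besselEntire m b = 0 ∧ ∀ z, 0 ≤ z → z < b → 0 < besselEntire m z := by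
  obtain ⟨z, hz, hz0⟩ := h
  set S := {x | x ∈ Icc 0 Z ∧ besselEntire m x ≤ 0}
  have hS : IsCompact S :=
    isCompact_Icc.inter_right (isClosed_le (continuous hm) continuous_const)
  obtain ⟨b, hb, hmin⟩ := hS.exists_isLeast ⟨z, hz, hz0⟩
  have hlt : ∀ x, 0 ≤ x → x < b → 0 < besselEntire m x := by
    intro x hx hxb
    by_contra! hcon
    exact absurd (hmin (show x ∈ S from ⟨⟨hx, hxb.le.trans hb.1.2⟩, hcon⟩)) (not_le.2 hxb)
  have hb0 : 0 < b := by
    rcases hb.1.1.eq_or_lt with h | h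
    · have := hb.2
      rw [← h] at this
      exact absurd (apply_zero_pos hm) (not_lt.2 this)
    · exact h
  refine ⟨b, hb0, hb.1.2, le_antisymm hb.2 ?_, hlt⟩
  refine ge_of_tendsto (x := nhdsWithin b (Iio b))
    ((continuous hm).continuousAt.tendsto.mono_left nhdsWithin_le_nhds) ?_
  filter_upwards [Ioo_mem_nhdsLT hb0] with x hx
  exact (hlt x hx.1.le hx.2).le

/-- `F_m` has a zero at most `(3 (m + 2)² + 1) / 8`; the test function is `(Z - z)³`. -/
lemma exists_nonpos {m : ℝ} (hm : 1 ≤ m) :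
    ∃ z ∈ Icc 0 ((3 * (m + 2) ^ 2 + 1) / 8), besselEntire m z ≤ 0 := by
  set Z := (3 * (m + 2) ^ 2 + 1) / 8 with hZ
  have hZ0 : 0 < Z := by positivity
  by_contra! hpos
  set W : ℝ → ℝ := fun z =>
    -3 * (Z - z) ^ 2 * (z ^ m * besselEntire m z) +
      (Z - z) ^ 3 * (z ^ m * besselEntire (m + 1) z)
  have hmono : StrictMonoOn W (Icc 0 Z) := by
    refine strictMonoOn_of_deriv_pos (convex_Icc 0 Z) ?_ ?_
    · have h1 := continuous hm
      have h2 := continuous (m := m + 1) (by linarith)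
      have h3 := Real.continuous_rpow_const (q := m) (by linarith)
      exact Continuous.continuousOn (by fun_prop)
    · intro z hz
      rw [interior_Icc] at hz
      have hid : HasDerivAt (fun x : ℝ => Z - x) (-1) z := (hasDerivAt_id z).const_sub Z
      have hpow := Real.hasDerivAt_rpow_const (p := m) (Or.inl hz.1.ne')
      have hW : HasDerivAt W (z ^ (m - 1) * besselEntire m z * (Z - z) *
          (6 * z - 3 * m * (Z - z) + (Z - z) ^ 2)) z := by
        refine ((((hid.pow 2).const_mul (-3)).mul (hpow.mul (hasDerivAt hm z))).add
          ((hid.pow 3).mul (hasDerivAt_rpow_mul hm hz.1))).congr_deriv ?_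
        simp only [Pi.pow_apply, Pi.mul_apply]
        rw [rpow_eq_rpow_sub_one_mul hz.1 m]
        push_cast
        ring
      rw [hW.deriv]
      have h1 := Real.rpow_pos_of_pos hz.1 (m - 1)
      have h2 := hpos z ⟨hz.1.le, hz.2.le⟩
      have h3 : 0 < Z - z := sub_pos.2 hz.2
      have h4 : 0 < 6 * z - 3 * m * (Z - z) + (Z - z) ^ 2 := by
        nlinarith [sq_nonneg (Z - z - (3 * m + 6) / 2)]
      positivity
  have := hmono (left_mem_Icc.2 hZ0.le) (right_mem_Icc.2 hZ0.le) hZ0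
  simp [W, Real.zero_rpow (show m ≠ 0 by linarith)] at this

/-- `F_m` is positive on `[0, (m - 1)² / 4]`. -/
lemma pos_of_le_sq {m z : ℝ} (hm : 1 < m) (hz : 0 ≤ z) (hzm : z ≤ (m - 1) ^ 2 / 4) :
    0 < besselEntire m z := by
  by_contra! hcon
  obtain ⟨b, hb0, hbz, hb, hpos⟩ := exists_first_zero hm.le ⟨z, ⟨hz, le_rfl⟩, hcon⟩
  obtain ⟨q, hq⟩ : ∃ q, q = (m - 1) / 2 := ⟨_, rfl⟩
  have hq0 : 0 < q := by simp only [hq]; linarith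
  have hm' : m = 2 * q + 1 := by simp only [hq]; ring
  have hF := continuous hm.le
  have hF1 := continuous (m := m + 1) (by linarith)
  have hcr := Real.continuous_rpow_const (q := q) hq0.le
  have hQ : StrictMonoOn (fun x => x ^ q * (q * besselEntire m x - x * besselEntire (m + 1) x))
      (Icc 0 b) := by
    refine strictMonoOn_of_deriv_pos (convex_Icc 0 b) (Continuous.continuousOn (by fun_prop)) ?_
    intro x hx
    rw [interior_Icc] at hx
    have hd : HasDerivAt (fun x => x ^ q * (q * besselEntire m x - x * besselEntire (m + 1) x))
        (x ^ (q - 1) * ((q ^ 2 - x) * besselEntire m x)) x := by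
      refine ((Real.hasDerivAt_rpow_const (p := q) (Or.inl hx.1.ne')).mul
        (((hasDerivAt hm.le x).const_mul q).sub ((hasDerivAt_id x).mul
          (hasDerivAt (m := m + 1) (by linarith) x)))).congr_deriv ?_
      have := eq_mul_sub_mul hm.le x
      rw [rpow_eq_rpow_sub_one_mul hx.1 q]
      simp only [Pi.sub_apply, Pi.mul_apply, id]
      linear_combination (x ^ (q - 1) * x) * this +
        (x ^ (q - 1) * x * besselEntire (m + 1) x) * hm'
    rw [hd.deriv]
    have h1 := Real.rpow_pos_of_pos hx.1 (q - 1)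
    have h2 := hpos x hx.1.le hx.2
    have h3 : 0 < q ^ 2 - x := by rw [hq]; nlinarith [hx.2]
    positivity
  have hH : StrictMonoOn (fun x => x ^ q * besselEntire m x) (Icc 0 b) := by
    refine strictMonoOn_of_deriv_pos (convex_Icc 0 b) (Continuous.continuousOn (by fun_prop)) ?_
    intro x hx
    rw [interior_Icc] at hx
    have hd : HasDerivAt (fun x => x ^ q * besselEntire m x)
        (x ^ (q - 1) * (q * besselEntire m x - x * besselEntire (m + 1) x)) x := by
      refine ((Real.hasDerivAt_rpow_const (p := q) (Or.inl hx.1.ne')).mul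
        (hasDerivAt hm.le x)).congr_deriv ?_
      rw [rpow_eq_rpow_sub_one_mul hx.1 q]
      ring
    rw [hd.deriv]
    have h1 := Real.rpow_pos_of_pos hx.1 (q - 1)
    have h2 := hQ (left_mem_Icc.2 hb0.le) ⟨hx.1.le, hx.2.le⟩ hx.1
    simp only [Real.zero_rpow hq0.ne', zero_mul] at h2
    exact mul_pos h1 (pos_of_mul_pos_right h2 (Real.rpow_nonneg hx.1.le q))
  have := hH (left_mem_Icc.2 hb0.le) (right_mem_Icc.2 hb0.le) hb0
  simp [hb, Real.zero_rpow hq0.ne'] at this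

/-- On `[0, b]`, `F_n` can be estimated from above by integrating its differential equation
backwards from a zero `b` of its derivative. -/
lemma le_of_deriv_zero {n b z : ℝ} (hn : 1 < n) (hb : 0 < b) (hb0 : besselEntire (n + 1) b = 0)
    (hpos : ∀ x, 0 ≤ x → x < b → 0 < besselEntire (n + 1) x) (hz : 0 < z) (hzb : z ≤ b) :
    besselEntire n b ≤ 0 ∧ besselEntire n z ≤ besselEntire n b * (1 -
      1 / n * ((b ^ n * z ^ (1 - n) - b) / (n - 1) - (b - z))) := by
  set c := -besselEntire n b with hc
  have hF := continuous hn.le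
  have hF1 := continuous (m := n + 1) (by linarith)
  have hcr := Real.continuous_rpow_const (q := n) (by linarith)
  have hanti : AntitoneOn (besselEntire n) (Icc 0 b) := by
    refine antitoneOn_of_deriv_nonpos (convex_Icc 0 b) hF.continuousOn
      (fun x _ => (hasDerivAt hn.le x).differentiableAt.differentiableWithinAt) ?_
    intro x hx
    rw [interior_Icc] at hx
    rw [(hasDerivAt hn.le x).deriv]
    exact neg_nonpos.2 (hpos x hx.1.le hx.2).le
  have hA : MonotoneOn (fun x => x ^ n * besselEntire (n + 1) x + c / n * x ^ n) (Icc 0 b) := by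
    have hd : ∀ x, 0 < x → HasDerivAt (fun x => x ^ n * besselEntire (n + 1) x + c / n * x ^ n)
        (x ^ (n - 1) * (besselEntire n x + c)) x := by
      intro x hx
      refine ((hasDerivAt_rpow_mul hn.le hx).add
        ((Real.hasDerivAt_rpow_const (p := n) (Or.inl hx.ne')).const_mul (c / n))).congr_deriv ?_
      field_simp
    refine monotoneOn_of_deriv_nonneg (convex_Icc 0 b) (Continuous.continuousOn (by fun_prop)) ?_ ?_
    · intro x hx
      rw [interior_Icc] at hx
      exact (hd x hx.1).differentiableAt.differentiableWithinAt
    · intro x hx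
      rw [interior_Icc] at hx
      rw [(hd x hx.1).deriv]
      have := hanti ⟨hx.1.le, hx.2.le⟩ (right_mem_Icc.2 hb.le) hx.2.le
      exact mul_nonneg (Real.rpow_nonneg hx.1.le _) (by linarith)
  have hAb : ∀ x ∈ Icc 0 b, x ^ n * besselEntire (n + 1) x + c / n * x ^ n ≤ c / n * b ^ n := by
    intro x hx
    have := hA hx (right_mem_Icc.2 hb.le) hx.2
    simpa [hb0] using this
  have hc0 : 0 ≤ c := by
    have := hAb 0 (left_mem_Icc.2 hb.le)
    simp only [Real.zero_rpow (show n ≠ 0 by linarith), zero_mul, mul_zero, add_zero] at this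
    have h2 := nonneg_of_mul_nonneg_left this (Real.rpow_pos_of_pos hb n)
    have h3 : c = c / n * n := by field_simp
    rw [h3]; positivity
  refine ⟨by linarith, ?_⟩
  have hB : MonotoneOn (fun x => besselEntire n x + c / n * (b ^ n * (x ^ (1 - n) / (1 - n)) - x))
      (Icc z b) := by
    have hd : ∀ x, 0 < x →
        HasDerivAt (fun x => besselEntire n x + c / n * (b ^ n * (x ^ (1 - n) / (1 - n)) - x))
        (-besselEntire (n + 1) x + c / n * (b ^ n * x ^ (-n) - 1)) x := by
      intro x hx
      refine ((hasDerivAt hn.le x).add (((((Real.hasDerivAt_rpow_const (p := 1 - n)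
        (Or.inl hx.ne')).div_const (1 - n)).const_mul (b ^ n)).sub
          (hasDerivAt_id x)).const_mul (c / n))).congr_deriv ?_
      have : 1 - n ≠ 0 := by linarith
      rw [show (1 - n - 1) = -n by ring]
      field_simp
    refine monotoneOn_of_deriv_nonneg (convex_Icc z b)
      (fun x hx => (hd x (hz.trans_le hx.1)).continuousAt.continuousWithinAt) ?_ ?_
    · intro x hx
      rw [interior_Icc] at hx
      exact (hd x (hz.trans hx.1)).differentiableAt.differentiableWithinAt
    · intro x hx
      rw [interior_Icc] at hx
      have hx0 := hz.trans hx.1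
      rw [(hd x hx0).deriv, Real.rpow_neg hx0.le]
      have h1 := hAb x ⟨hx0.le, hx.2.le⟩
      have h2 := Real.rpow_pos_of_pos hx0 n
      have h3 : -besselEntire (n + 1) x + c / n * (b ^ n * (x ^ n)⁻¹ - 1) =
          (c / n * b ^ n - (x ^ n * besselEntire (n + 1) x + c / n * x ^ n)) / x ^ n := by
        field_simp
        ring
      rw [h3]
      exact div_nonneg (by linarith) h2.le
  have h := hB (left_mem_Icc.2 hzb) (right_mem_Icc.2 hzb) hzb
  have hbb : b ^ n * b ^ (1 - n) = b := by
    rw [← Real.rpow_add hb]; simp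
  have hn1 : n - 1 ≠ 0 := by linarith
  have hn1' : 1 - n ≠ 0 := by linarith
  simp only [← mul_div_assoc, hbb] at h
  have e : ∀ y : ℝ, y / (1 - n) = -(y / (n - 1)) := by
    intro y
    rw [← div_neg, neg_sub]
  rw [e, e] at h
  rw [show besselEntire n b = -c by rw [hc, neg_neg]] at h ⊢
  refine (le_of_sub_nonneg ?_)
  have := sub_nonneg.2 h
  refine this.trans_eq ?_
  rw [sub_div (b ^ n * z ^ (1 - n))]
  ring

/-- Horner form of the partial sums of the series of `F_m`, normalized by their first term. -/
noncomputable def horner (m z : ℝ) : ℕ → ℕ → ℝ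
  | _, 0 => 0
  | k, N + 1 => 1 - z / ((k + 1) * (m + k)) * horner m z (k + 1) N

lemma term_succ {m : ℝ} (hm : 1 ≤ m) (z : ℝ) (k : ℕ) :
    (-1 : ℝ) ^ (k + 1) / ((k + 1).factorial * Real.Gamma (m + (k + 1 : ℕ))) * z ^ (k + 1) =
      -(z / ((k + 1) * (m + k))) *
        ((-1 : ℝ) ^ k / (k.factorial * Real.Gamma (m + k)) * z ^ k) := by
  have hk : (0 : ℝ) < m + k := by positivity
  have h : m + ((k + 1 : ℕ) : ℝ) = m + k + 1 := by push_cast; ring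
  have := Real.Gamma_pos_of_pos hk
  rw [h, Real.Gamma_add_one hk.ne', Nat.factorial_succ]
  push_cast
  field_simp
  ring

lemma sum_term_eq {m : ℝ} (hm : 1 ≤ m) (z : ℝ) (N k : ℕ) :
    ∑ i ∈ Finset.range N,
      (-1 : ℝ) ^ (k + i) / ((k + i).factorial * Real.Gamma (m + (k + i : ℕ))) * z ^ (k + i) =
      (-1 : ℝ) ^ k / (k.factorial * Real.Gamma (m + k)) * z ^ k * horner m z k N := by
  induction N generalizing k with
  | zero => simp [horner]
  | succ N ih =>
    have h := ih (k + 1)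
    rw [term_succ hm] at h
    rw [Finset.sum_range_succ', horner]
    simp only [← add_assoc, add_right_comm k _ 1, add_zero]
    rw [h]
    ring

/-- The remainder of an alternating series has the sign of its first term. -/
lemma tail_nonneg {m z : ℝ} (hm : 1 ≤ m) (hz : 0 ≤ z) {N : ℕ}
    (hN : z ≤ (N + 1) * (m + N)) :
    0 ≤ (-1 : ℝ) ^ N * (besselEntire m z - (Real.Gamma m)⁻¹ * horner m z 0 N) := by
  set t : ℕ → ℝ := fun k => (-1 : ℝ) ^ k / (k.factorial * Real.Gamma (m + k)) * z ^ k with ht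
  have hsum := summable_term hm z
  have hsplit := hsum.sum_add_tsum_nat_add N
  have h0 := sum_term_eq hm z N 0
  simp only [zero_add, pow_zero, Nat.factorial_zero, Nat.cast_one, Nat.cast_zero, add_zero,
    one_mul, mul_one, one_div] at h0
  have htail : besselEntire m z - (Real.Gamma m)⁻¹ * horner m z 0 N = ∑' i, t (i + N) := by
    rw [← h0, besselEntire, ← hsplit]
    ring
  rw [htail, ← tsum_mul_left]
  set a : ℕ → ℝ := fun i => (-1) ^ i * ((-1) ^ N * t (i + N)) with ha
  have ha0 : ∀ i, 0 ≤ a i := by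
    intro i
    have hk : (0 : ℝ) < m + (i + N : ℕ) := by positivity
    have := Real.Gamma_pos_of_pos hk
    have : a i = z ^ (i + N) / ((i + N).factorial * Real.Gamma (m + (i + N : ℕ))) := by
      simp only [ha, ht]
      have : ((-1 : ℝ) ^ i * (-1) ^ N) * (-1) ^ (i + N) = 1 := by
        rw [← pow_add, ← mul_pow]; simp
      linear_combination (z ^ (i + N) / ((i + N).factorial * Real.Gamma (m + (i + N : ℕ)))) * this
    rw [this]
    positivity
  have hanti : Antitone a := by
    refine antitone_nat_of_succ_le fun i => ?_
    have h1 : a (i + 1) = z / (((i + N : ℕ) + 1) * (m + (i + N : ℕ))) * a i := by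
      simp only [ha, ht]
      rw [add_right_comm i 1 N, term_succ hm, pow_succ]
      ring
    rw [h1]
    refine mul_le_of_le_one_left (ha0 i) (div_le_one_of_le₀ (hN.trans ?_) (by positivity))
    push_cast
    have : (0 : ℝ) ≤ i := i.cast_nonneg
    gcongr <;> linarith
  have hal : ∀ i, (-1 : ℝ) ^ i * a i = (-1) ^ N * t (i + N) := by
    intro i
    simp only [ha]
    rw [← mul_assoc, ← mul_pow]
    simp
  have hs : Summable fun i => (-1 : ℝ) ^ N * t (i + N) :=
    ((summable_nat_add_iff N).2 hsum).mul_left _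
  have hl : Filter.Tendsto (fun n => ∑ i ∈ Finset.range n, (-1 : ℝ) ^ i * a i) Filter.atTop
      (nhds (∑' i, (-1 : ℝ) ^ N * t (i + N))) := by
    simp only [hal]
    exact hs.hasSum.tendsto_sum_nat
  simpa using hanti.alternating_series_le_tendsto hl 0

lemma pos_of_horner {m z : ℝ} (hm : 1 ≤ m) (hz : 0 ≤ z) (N : ℕ)
    (hN : z ≤ (2 * N + 1) * (m + 2 * N)) (h : 0 < horner m z 0 (2 * N)) :
    0 < besselEntire m z := by
  have := tail_nonneg hm hz (N := 2 * N) (by push_cast; exact hN)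
  have hg := inv_pos.2 (Real.Gamma_pos_of_pos (s := m) (by linarith))
  simp only [pow_mul, even_two, Even.neg_pow, one_pow, one_mul] at this
  nlinarith [mul_pos hg h]

lemma nonpos_of_horner {m z : ℝ} (hm : 1 ≤ m) (hz : 0 ≤ z) (N : ℕ)
    (hN : z ≤ (2 * N + 2) * (m + 2 * N + 1)) (h : horner m z 0 (2 * N + 1) ≤ 0) :
    besselEntire m z ≤ 0 := by
  have := tail_nonneg hm hz (N := 2 * N + 1) (by push_cast; linarith)
  have hg := inv_pos.2 (Real.Gamma_pos_of_pos (s := m) (by linarith))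
  rw [Odd.neg_one_pow ⟨N, rfl⟩] at this
  nlinarith [mul_nonneg hg.le (neg_nonneg.2 h)]

/-- Since `F_m' = -F_{m+1}`, positivity of `F_{m+1}` on an interval reduces positivity of `F_m`
there to a single point. -/
lemma pos_of_pos_succ {m w z : ℝ} (hm : 1 ≤ m)
    (hpos : ∀ x, 0 ≤ x → x ≤ w → 0 < besselEntire (m + 1) x) (hzw : z ≤ w)
    (hz : 0 < besselEntire m z) : ∀ x, 0 ≤ x → x ≤ z → 0 < besselEntire m x := by
  intro x hx hxz
  have hanti : AntitoneOn (besselEntire m) (Icc 0 z) := by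
    refine antitoneOn_of_deriv_nonpos (convex_Icc 0 z) (continuous hm).continuousOn
      (fun x _ => (hasDerivAt hm x).differentiableAt.differentiableWithinAt) ?_
    intro y hy
    rw [interior_Icc] at hy
    rw [(hasDerivAt hm y).deriv]
    exact neg_nonpos.2 (hpos y hy.1.le (hy.2.le.trans hzw)).le
  exact hz.trans_le (hanti ⟨hx, hxz⟩ (right_mem_Icc.2 (hx.trans hxz)) hxz)

/-- `F_n` has a zero which is at most `n / (n + 3/2)` times any positive zero of `F_{n+1}`. -/
def HasZeroBound (n : ℝ) : Prop :=
  ∃ a, 0 < a ∧ besselEntire n a = 0 ∧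
    ∀ b, 0 < b → besselEntire (n + 1) b = 0 → a ≤ n / (n + 3 / 2) * b

lemma hasZeroBound_of_horner {n z w : ℝ} (N : ℕ) (hn : 1 ≤ n) (hz : 0 ≤ z)
    (hN : z ≤ (2 * N + 2) * (n + 2 * N + 1)) (h : horner n z 0 (2 * N + 1) ≤ 0)
    (hzw : z * (n + 3 / 2) ≤ n * w)
    (hpos : ∀ x, 0 ≤ x → x ≤ w → 0 < besselEntire (n + 1) x) : HasZeroBound n := by
  obtain ⟨a, ha0, haz, ha, -⟩ :=
    exists_first_zero hn ⟨z, ⟨hz, le_rfl⟩, nonpos_of_horner hn hz N hN h⟩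
  refine ⟨a, ha0, ha, fun b hb hb0 => haz.trans ?_⟩
  have hwb : w ≤ b := by
    by_contra! hbw
    exact (hpos b hb.le hbw.le).ne' hb0
  rw [div_mul_eq_mul_div, le_div_iff₀ (by linarith)]
  nlinarith

lemma exp_three_halves_le : Real.exp (3 / 2) ≤ 4.482 := by
  have h : Real.exp (3 / 2) ^ 2 = Real.exp 1 ^ 3 := by
    rw [← Real.exp_nat_mul, ← Real.exp_nat_mul]
    norm_num
  have h1 := Real.exp_one_lt_d9
  have h2 : Real.exp 1 ^ 3 ≤ 2.7182818286 ^ 3 := by gcongr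
  refine (pow_le_pow_iff_left₀ (Real.exp_pos _).le (by norm_num) two_ne_zero).1 ?_
  rw [h]
  exact h2.trans (by norm_num)

lemma rpow_le_of_nine_le {n : ℝ} (hn : 9 ≤ n) :
    (1 + 3 / (2 * n)) ^ (n - 1) ≤ 4.482 / (1 + (21 * n + 9) / (4 * n * (2 * n + 3)) +
      ((21 * n + 9) / (4 * n * (2 * n + 3))) ^ 2 / 2) := by
  have hn0 : 0 < n := by linarith
  set δ := (21 * n + 9) / (4 * n * (2 * n + 3)) with hδ
  have hδ0 : 0 ≤ δ := by positivity
  have hy : 0 < 1 + 3 / (2 * n) := by positivity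
  have hlog : Real.log (1 + 3 / (2 * n)) ≤
      ((1 + 3 / (2 * n)) - (1 + 3 / (2 * n))⁻¹) / 2 := by
    rw [← Real.sinh_log hy, Real.self_le_sinh_iff]
    exact Real.log_nonneg (by linarith [show 0 ≤ 3 / (2 * n) by positivity])
  have hexp : Real.log (1 + 3 / (2 * n)) * (n - 1) ≤ 3 / 2 - δ := by
    refine (mul_le_mul_of_nonneg_right hlog (by linarith)).trans_eq ?_
    rw [hδ]
    field_simp
    ring
  rw [Real.rpow_def_of_pos hy]
  refine (Real.exp_le_exp.2 hexp).trans ?_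
  rw [Real.exp_sub]
  exact div_le_div₀ (by norm_num) exp_three_halves_le (by positivity)
    (Real.quadratic_le_exp_of_nonneg hδ0)

lemma hasZeroBound_of_nine_le {n : ℝ} (hn : 9 ≤ n) : HasZeroBound n := by
  obtain ⟨b, hb, hbZ, hb0, hpos⟩ :=
    exists_first_zero (m := n + 1) (by linarith) (exists_nonpos (m := n + 1) (by linarith))
  have hn0 : 0 < n := by linarith
  set r := n / (n + 3 / 2) with hr
  have hr0 : 0 < r := by positivity
  have hr1 : r ≤ 1 := div_le_one_of_le₀ (by linarith) (by linarith)
  have hrb : r * b ≤ b := mul_le_of_le_one_left hb.le hr1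
  obtain ⟨hc, hle⟩ := le_of_deriv_zero (z := r * b) (by linarith) hb hb0 hpos (by positivity) hrb
  have hnonpos : besselEntire n (r * b) ≤ 0 := by
    refine hle.trans (mul_nonpos_of_nonpos_of_nonneg hc ?_)
    have hpw : b ^ n * (r * b) ^ (1 - n) = b * (1 + 3 / (2 * n)) ^ (n - 1) := by
      rw [Real.mul_rpow hr0.le hb.le, mul_left_comm, ← Real.rpow_add hb, ← neg_sub n 1,
        Real.rpow_neg hr0.le, ← Real.inv_rpow hr0.le]
      rw [show n + -(n - 1) = 1 by ring, Real.rpow_one, mul_comm]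
      congr 2
      rw [hr]
      field_simp
    rw [hpw]
    have hX := rpow_le_of_nine_le hn
    set X := (1 + 3 / (2 * n)) ^ (n - 1)
    have hn1 : 0 < n - 1 := by linarith
    have hmain : (3 * (n + 1 + 2) ^ 2 + 1) / 8 * ((X - 1) / (n - 1) - 3 / (2 * n + 3)) ≤ n := by
      have h1 : (X - 1) / (n - 1) ≤ 3 / (2 * n + 3) + 8 * n / (3 * (n + 1 + 2) ^ 2 + 1) := by
        rw [div_le_iff₀ hn1]
        refine sub_le_iff_le_add.2 (hX.trans ?_)
        obtain ⟨t, ht, rfl⟩ : ∃ t, 0 ≤ t ∧ n = 9 + t := ⟨n - 9, by linarith, by ring⟩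
        rw [div_le_iff₀ (by positivity)]
        field_simp
        rw [← sub_nonneg]
        ring_nf
        positivity
      have h2 : (3 * (n + 1 + 2) ^ 2 + 1) / 8 * (8 * n / (3 * (n + 1 + 2) ^ 2 + 1)) = n := by
        field_simp
      calc _ ≤ (3 * (n + 1 + 2) ^ 2 + 1) / 8 * (8 * n / (3 * (n + 1 + 2) ^ 2 + 1)) := by
            gcongr; linarith
        _ = n := h2
    have h3 : b * ((X - 1) / (n - 1) - 3 / (2 * n + 3)) ≤ n := by
      rcases le_total 0 ((X - 1) / (n - 1) - 3 / (2 * n + 3)) with h | h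
      · exact (mul_le_mul_of_nonneg_right hbZ h).trans hmain
      · exact (mul_nonpos_of_nonneg_of_nonpos hb.le h).trans hn0.le
    have h4 : 1 - 1 / n * ((b * X - b) / (n - 1) - (b - r * b)) =
        1 - b * ((X - 1) / (n - 1) - 3 / (2 * n + 3)) / n := by
      rw [hr]
      field_simp
      ring
    rw [h4, sub_nonneg]
    exact div_le_one_of_le₀ h3 hn0.le
  obtain ⟨a, ha0, haz, ha, -⟩ :=
    exists_first_zero (m := n) (by linarith) ⟨r * b, ⟨by positivity, le_rfl⟩, hnonpos⟩
  refine ⟨a, ha0, ha, fun b' hb' hb'0 => haz.trans ?_⟩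
  have : b ≤ b' := by
    by_contra! hlt
    exact (hpos b' hb'.le hlt).ne' hb'0
  gcongr

/-- Abscissae separating the first zeros of `F_n` and `F_{n+1}`, `n = d / 2`. -/
noncomputable def node (d : ℕ) : ℝ := (3 * d ^ 2 + 24 * d - 6) / 37

noncomputable def nodeSucc (d : ℕ) : ℝ := node d * (d + 3) / d

lemma horner_node_nonpos {d : ℕ} (hd : 2 ≤ d) (hd' : d ≤ 17) :
    horner (d / 2) (node d) 0 13 ≤ 0 := by
  interval_cases d <;> norm_num [horner, node]

lemma horner_nodeSucc_pos {d : ℕ} (hd : 2 ≤ d) (hd' : d ≤ 17) :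
    0 < horner (d / 2 + 1) (nodeSucc d) 0 16 := by
  interval_cases d <;> norm_num [horner, node, nodeSucc]

lemma nodeSucc_nonneg {d : ℕ} (hd : 2 ≤ d) : 0 ≤ nodeSucc d := by
  have : (2 : ℝ) ≤ d := by exact_mod_cast hd
  have : (0 : ℝ) ≤ 3 * d ^ 2 + 24 * d - 6 := by nlinarith
  unfold nodeSucc node
  positivity

lemma pos_top {d : ℕ} (hd : 16 ≤ d) (hd' : d ≤ 17) :
    ∀ x, 0 ≤ x → x ≤ nodeSucc d → 0 < besselEntire ((d : ℝ) / 2 + 1 + 1) x := by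
  have h5 : ∀ x, 0 ≤ x → x ≤ nodeSucc d → 0 < besselEntire ((d : ℝ) / 2 + 6) x := by
    intro x hx hxd
    refine pos_of_le_sq (by linarith [show (0 : ℝ) ≤ d from d.cast_nonneg]) hx (hxd.trans ?_)
    interval_cases d <;> norm_num [nodeSucc, node]
  have step : ∀ j : ℕ, j ∈ Finset.Icc 2 5 →
      (∀ x, 0 ≤ x → x ≤ nodeSucc d → 0 < besselEntire ((d : ℝ) / 2 + j + 1) x) →
      ∀ x, 0 ≤ x → x ≤ nodeSucc d → 0 < besselEntire ((d : ℝ) / 2 + j) x := by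
    intro j hj h
    rw [Finset.mem_Icc] at hj
    obtain ⟨hj1, hj2⟩ := hj
    have hm : 1 ≤ (d : ℝ) / 2 + j := by
      have : (16 : ℝ) ≤ d := by exact_mod_cast hd
      linarith [show (0 : ℝ) ≤ j from j.cast_nonneg]
    refine pos_of_pos_succ hm h le_rfl (pos_of_horner hm (nodeSucc_nonneg (by omega)) 8 ?_ ?_)
    · interval_cases d <;> interval_cases j <;> norm_num [nodeSucc, node]
    · interval_cases d <;> interval_cases j <;> norm_num [horner, nodeSucc, node]
  have h4 := step 5 (by decide) (by convert h5 using 5; norm_num [add_assoc])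
  have h3 := step 4 (by decide) (by convert h4 using 5; norm_num [add_assoc])
  have h2 := step 3 (by decide) (by convert h3 using 5; norm_num [add_assoc])
  convert step 2 (by decide) (by convert h2 using 5; norm_num [add_assoc]) using 5
  norm_num [add_assoc]

lemma pos_nodeSucc (k : ℕ) : ∀ d : ℕ, 2 ≤ d → d ≤ 17 → 16 ≤ d + 2 * k →
    ∀ x, 0 ≤ x → x ≤ nodeSucc d → 0 < besselEntire ((d : ℝ) / 2 + 1) x := by
  have red : ∀ d : ℕ, 2 ≤ d → d ≤ 17 → ∀ w, nodeSucc d ≤ w →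
      (∀ x, 0 ≤ x → x ≤ w → 0 < besselEntire ((d : ℝ) / 2 + 1 + 1) x) →
      ∀ x, 0 ≤ x → x ≤ nodeSucc d → 0 < besselEntire ((d : ℝ) / 2 + 1) x := by
    intro d hd hd' w hw h
    have hm : 1 ≤ (d : ℝ) / 2 + 1 := by linarith [show (0 : ℝ) ≤ d from d.cast_nonneg]
    refine pos_of_pos_succ hm h hw (pos_of_horner hm (nodeSucc_nonneg hd) 8 ?_
      (horner_nodeSucc_pos hd hd'))
    interval_cases d <;> norm_num [nodeSucc, node]
  induction k with
  | zero => exact fun d hd hd' h => red d hd hd' _ le_rfl (pos_top h hd')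
  | succ k ih =>
    intro d hd hd' h
    by_cases hk : 16 ≤ d
    · exact red d hd hd' _ le_rfl (pos_top hk hd')
    · refine red d hd hd' (nodeSucc (d + 2)) ?_ ?_
      · push Not at hk
        interval_cases d <;> norm_num [nodeSucc, node]
      · convert ih (d + 2) (by omega) (by omega) (by omega) using 5
        push_cast
        ring

lemma hasZeroBound_nat_div_two {d : ℕ} (hd : 2 ≤ d) : HasZeroBound ((d : ℝ) / 2) := by
  have hd2 : (2 : ℝ) ≤ d := by exact_mod_cast hd
  rcases le_or_gt d 17 with hd' | hd'
  · refine hasZeroBound_of_horner (z := node d) (w := nodeSucc d) 6 (by linarith) ?_ ?_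
      (horner_node_nonpos hd hd') ?_ (pos_nodeSucc 7 d hd hd' (by omega))
    · unfold node
      have : (0 : ℝ) ≤ 3 * d ^ 2 + 24 * d - 6 := by nlinarith
      positivity
    · interval_cases d <;> norm_num [node]
    · unfold nodeSucc
      field_simp
      linarith
  · have : (18 : ℝ) ≤ d := by exact_mod_cast hd'
    exact hasZeroBound_of_nine_le (by linarith)

end besselEntire

open besselEntire

lemma besselJ_eq_rpow_mul_besselEntire (ν : ℝ) {x : ℝ} (hx : 0 < x) :
    besselJ ν x = (x / 2) ^ ν * besselEntire (ν + 1) (x ^ 2 / 4) := by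
  have hx2 : 0 < x / 2 := by positivity
  rw [besselJ, besselEntire, ← tsum_mul_left]
  refine tsum_congr fun k => ?_
  have h1 : (x / 2) ^ (2 * (k : ℝ) + ν) = (x / 2) ^ ν * (x ^ 2 / 4) ^ k := by
    rw [Real.rpow_add hx2, mul_comm, show 2 * (k : ℝ) = ((2 * k : ℕ) : ℝ) by push_cast; ring,
      Real.rpow_natCast, pow_mul, div_pow x 2 2]
    norm_num
  rw [h1, show (k : ℝ) + ν + 1 = ν + 1 + k by ring]
  ring

lemma besselJ_eq_zero_iff (ν : ℝ) {x : ℝ} (hx : 0 < x) :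
    besselJ ν x = 0 ↔ besselEntire (ν + 1) (x ^ 2 / 4) = 0 := by
  rw [besselJ_eq_rpow_mul_besselEntire ν hx, mul_eq_zero_iff_left]
  exact (Real.rpow_pos_of_pos (by positivity) ν).ne'

lemma bddBelow_zeros_besselJ (ν : ℝ) : BddBelow {r : ℝ | 0 < r ∧ besselJ ν r = 0} :=
  ⟨0, fun _ hr => hr.1.le⟩

lemma besselJZero1_sq_le {ν z : ℝ} (hz : 0 < z) (h : besselEntire (ν + 1) z = 0) :
    besselJZero1 ν ^ 2 ≤ 4 * z := by
  have hs : 0 < 2 * √z := by positivity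
  have hsq : (2 * √z) ^ 2 = 4 * z := by rw [mul_pow, Real.sq_sqrt hz.le]; norm_num
  have hle : besselJZero1 ν ≤ 2 * √z := by
    refine csInf_le (bddBelow_zeros_besselJ ν) ⟨hs, (besselJ_eq_zero_iff ν hs).2 ?_⟩
    rw [hsq, mul_div_cancel_left₀ _ (by norm_num), h]
  rw [← hsq]
  exact pow_le_pow_left₀ (Real.sInf_nonneg fun _ hr => hr.1.le) hle 2

lemma besselJZero1_spec {ν : ℝ} (hν : 0 ≤ ν) :
    0 < besselJZero1 ν ∧ besselEntire (ν + 1) (besselJZero1 ν ^ 2 / 4) = 0 := by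
  obtain ⟨b, hb, -, hb0, hpos⟩ :=
    exists_first_zero (m := ν + 1) (by linarith) (exists_nonpos (by linarith))
  have hs : 0 < 2 * √b := by positivity
  have hsq : (2 * √b) ^ 2 / 4 = b := by rw [mul_pow, Real.sq_sqrt hb.le]; ring
  have h : IsLeast {r : ℝ | 0 < r ∧ besselJ ν r = 0} (2 * √b) := by
    refine ⟨⟨hs, (besselJ_eq_zero_iff ν hs).2 (by rw [hsq, hb0])⟩, fun r hr => ?_⟩
    by_contra! hlt
    refine (hpos (r ^ 2 / 4) (by positivity) ?_).ne' ((besselJ_eq_zero_iff ν hr.1).1 hr.2)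
    rw [← hsq]
    have := pow_lt_pow_left₀ hlt hr.1.le two_ne_zero
    linarith
  rw [besselJZero1, h.csInf_eq, hsq]
  exact ⟨hs, hb0⟩

theorem besselJZero1_quotient_bound (d : ℕ) (hd : 2 ≤ d) :
    besselJZero1 ((d : ℝ) / 2 - 1) ^ 2 ≤
      (d : ℝ) / ((d : ℝ) + 3) * besselJZero1 ((d : ℝ) / 2) ^ 2 := by
  obtain ⟨a, ha, ha0, hab⟩ := hasZeroBound_nat_div_two hd
  obtain ⟨hb, hb0⟩ := besselJZero1_spec (ν := (d : ℝ) / 2) (by positivity)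
  have h1 := besselJZero1_sq_le (ν := (d : ℝ) / 2 - 1) ha (by rwa [sub_add_cancel])
  have h2 := hab _ (by positivity) hb0
  have h3 : (d : ℝ) / 2 / ((d : ℝ) / 2 + 3 / 2) = d / (d + 3) := by
    field_simp
  rw [h3] at h2
  linarith
end
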